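/- Let t_0 be a fixed real number. There exists a unique probability measure μ = μ(t_0) on [0, ∞) such that for every positive integer k, the averages (1/(p−1)) · Σ'_{χ mod p} |L'(1+it_0, χ)/L(1+it_0, χ)|^{2k} converge, as p → ∞ through prime numbers, to ∫_0^∞ v^k dμ(v); here Σ' denotes summation over all Dirichlet characters χ modulo the prime p, omitting the principal character in the case t_0 = 0. -/

import Mathlib

open Complex MeasureTheory Filter

/-!
Let `M = ∑_{n ≤ p} μ(n) χ(n) n⁻ˢ` with `s = 1 + i t₀`. The identity `L'/L - L' M = L' (1 - L M) / L`
reduces the moments of `L'/L` to those of the Dirichlet polynomial that approximates `L' M`: the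
mean over `χ` of `|1 - L M|²` is `O(p ^ (ε - 1))` by orthogonality, while every other factor is
`O(p ^ ε)`. The only deep input is the lower bound for `|L(s, χ)|`, which comes from the `3-4-1`
inequality unless `t₀ = 0` and `χ` is quadratic, and from Siegel's theorem (by Estermann's method)
in that case. Orthogonality applied to the `k`-th power of the polynomial then gives the limit
`m k = ∑ (Λ^{*k}(n) / n)²`.

As `m k ≤ B 4ᵏ (2k)!`, the Stieltjes moment problem for `m` is determinate: the symmetrised law of
`√v` has exponential moments near `0`. A solution exists by Prokhorov's theorem, as a weak limit
point of the empirical measures of `|L'/L|²`.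
-/

namespace DirichletMoments

open scoped BigOperators Topology

section PartialSums

open Finset

/-- The Dirichlet polynomial `∑ a n / n ^ s` over `1 ≤ n ≤ X`, a partial sum of `LSeries a s`. -/
noncomputable def dirichletPoly (a : ℕ → ℂ) (X : ℕ) (s : ℂ) : ℂ :=
  ∑ n ∈ Ioc 0 X, a n * (n : ℂ) ^ (-s)

/-- All sums of `a` over intervals of positive integers are bounded by `B`: this is the
hypothesis of Dirichlet's convergence test. -/
def BoundedIntervalSums (a : ℕ → ℂ) (B : ℝ) : Prop :=
  ∀ X Y : ℕ, ‖∑ n ∈ Ioc X Y, a n‖ ≤ B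

theorem sum_Ioc_mul_eq_by_parts {R : Type*} [CommRing R] (a f : ℕ → R) {X Y : ℕ} (h : X ≤ Y) :
    ∑ n ∈ Ioc X Y, a n * f n = (∑ n ∈ Ioc X Y, a n) * f (Y + 1) +
      ∑ n ∈ Ioc X Y, (∑ m ∈ Ioc X n, a m) * (f n - f (n + 1)) := by
  induction Y, h using Nat.le_induction with
  | base => simp
  | succ Y h ih =>
    simp only [sum_Ioc_succ_top h] at ih ⊢
    rw [ih]
    ring

theorem natCast_cpow_neg_sub_eq_integral {n : ℕ} (hn : n ≠ 0) {s : ℂ} (hs : s ≠ 0) :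
    (n : ℂ) ^ (-s) - ((n + 1 : ℕ) : ℂ) ^ (-s) =
      s * ∫ x : ℝ in (n : ℝ)..((n + 1 : ℕ) : ℝ), (x : ℂ) ^ (-s - 1) := by
  have h0 : (0 : ℝ) ∉ Set.uIcc (n : ℝ) ((n + 1 : ℕ) : ℝ) := by
    rw [Set.uIcc_of_le (by simp)]
    exact fun h ↦ (h.1.trans_lt' (by positivity)).false
  rw [integral_cpow (Or.inr ⟨fun h ↦ hs (by linear_combination -h), h0⟩)]
  simp only [sub_add_cancel, ofReal_natCast]
  field_simp
  ring

theorem norm_natCast_cpow_neg_sub_le {n : ℕ} (hn : n ≠ 0) {s : ℂ} (hs : 0 < s.re) :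
    ‖(n : ℂ) ^ (-s) - ((n + 1 : ℕ) : ℂ) ^ (-s)‖ ≤
      ‖s‖ / s.re * ((n : ℝ) ^ (-s.re) - ((n + 1 : ℕ) : ℝ) ^ (-s.re)) := by
  have hn' : (0 : ℝ) < n := by positivity
  have hle : (n : ℝ) ≤ (n + 1 : ℕ) := by simp
  have h0 : (0 : ℝ) ∉ Set.uIcc (n : ℝ) ((n + 1 : ℕ) : ℝ) := by
    rw [Set.uIcc_of_le hle]
    exact fun h ↦ (hn'.trans_le h.1).false
  have hreal : (n : ℝ) ^ (-s.re) - ((n + 1 : ℕ) : ℝ) ^ (-s.re) =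
      s.re * ∫ x : ℝ in (n : ℝ)..((n + 1 : ℕ) : ℝ), x ^ (-s.re - 1) := by
    rw [integral_rpow (Or.inr ⟨by linarith, h0⟩)]
    simp only [sub_add_cancel]
    field_simp
    ring
  rw [natCast_cpow_neg_sub_eq_integral hn (by rintro rfl; simp at hs), hreal, norm_mul,
    ← mul_assoc, div_mul_cancel₀ _ hs.ne']
  gcongr
  refine intervalIntegral.norm_integral_le_of_norm_le hle (.of_forall fun x hx ↦ ?_)
    (intervalIntegral.intervalIntegrable_rpow (Or.inr h0))
  rw [Complex.norm_cpow_eq_rpow_re_of_pos (hn'.trans hx.1)]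
  simp

variable {a : ℕ → ℂ} {B : ℝ} {s : ℂ}

theorem BoundedIntervalSums.norm_apply_le (ha : BoundedIntervalSums a B) {n : ℕ} (hn : n ≠ 0) :
    ‖a n‖ ≤ B := by
  obtain ⟨m, rfl⟩ := Nat.exists_eq_succ_of_ne_zero hn
  simpa [sum_Ioc_succ_top] using ha m (m + 1)

theorem dirichletPoly_sub {X Y : ℕ} (h : X ≤ Y) (a : ℕ → ℂ) (s : ℂ) :
    dirichletPoly a Y s - dirichletPoly a X s = ∑ n ∈ Ioc X Y, a n * (n : ℂ) ^ (-s) := by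
  rw [sub_eq_iff_eq_add', dirichletPoly, dirichletPoly, sum_Ioc_consecutive _ X.zero_le h]

theorem BoundedIntervalSums.norm_dirichletPoly_sub_le (ha : BoundedIntervalSums a B) {X Y : ℕ}
    (hXY : X ≤ Y) (hs : 0 < s.re) :
    ‖dirichletPoly a Y s - dirichletPoly a X s‖ ≤
      B * (‖s‖ / s.re) * ((X + 1 : ℕ) : ℝ) ^ (-s.re) := by
  have hB : 0 ≤ B := (norm_nonneg _).trans (ha 0 0)
  have hr : 1 ≤ ‖s‖ / s.re := (one_le_div₀ hs).2 (re_le_norm s)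
  have hend : ‖(∑ n ∈ Ioc X Y, a n) * ((Y + 1 : ℕ) : ℂ) ^ (-s)‖ ≤
      B * (‖s‖ / s.re) * ((Y + 1 : ℕ) : ℝ) ^ (-s.re) := by
    rw [norm_mul, norm_natCast_cpow_of_pos Y.succ_pos, neg_re]
    gcongr
    exact (ha X Y).trans (le_mul_of_one_le_right hB hr)
  have hterm (n : ℕ) (hn : n ∈ Ioc X Y) :
      ‖(∑ m ∈ Ioc X n, a m) * ((n : ℂ) ^ (-s) - ((n + 1 : ℕ) : ℂ) ^ (-s))‖ ≤
        B * (‖s‖ / s.re) * ((n : ℝ) ^ (-s.re) - ((n + 1 : ℕ) : ℝ) ^ (-s.re)) := by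
    rw [norm_mul, mul_assoc B]
    have hn0 : n ≠ 0 := by have := (mem_Ioc.1 hn).1; lia
    exact mul_le_mul (ha X n) (norm_natCast_cpow_neg_sub_le hn0 hs) (norm_nonneg _) hB
  have htele : ∑ n ∈ Ioc X Y, ((n : ℝ) ^ (-s.re) - ((n + 1 : ℕ) : ℝ) ^ (-s.re)) =
      ((X + 1 : ℕ) : ℝ) ^ (-s.re) - ((Y + 1 : ℕ) : ℝ) ^ (-s.re) := by
    rw [← Ico_add_one_add_one_eq_Ioc, ← neg_inj, ← sum_neg_distrib, neg_sub]
    simp only [neg_sub]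
    exact sum_Ico_sub (fun n : ℕ ↦ (n : ℝ) ^ (-s.re)) (Nat.succ_le_succ hXY)
  rw [dirichletPoly_sub hXY, sum_Ioc_mul_eq_by_parts a (fun n ↦ (n : ℂ) ^ (-s)) hXY]
  calc _ ≤ _ := (norm_add_le _ _).trans (add_le_add hend (norm_sum_le_of_le _ hterm))
    _ = _ := by rw [← mul_sum, htele]; ring

theorem differentiable_dirichletPoly (a : ℕ → ℂ) (X : ℕ) : Differentiable ℂ (dirichletPoly a X) :=
  Differentiable.fun_sum fun _ hn _ ↦
    (differentiableAt_id.neg.const_cpow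
      (Or.inl (Nat.cast_ne_zero.2 (mem_Ioc.1 hn).1.ne'))).const_mul _

theorem tendsto_dirichletPoly_LSeries (h : LSeriesSummable a s) :
    Tendsto (fun X ↦ dirichletPoly a X s) atTop (𝓝 (LSeries a s)) := by
  refine (h.hasSum.tendsto_sum_nat.comp (tendsto_add_atTop_nat 1)).congr fun X ↦ ?_
  rw [Function.comp_apply, ← Nat.Ico_zero_eq_range, sum_eq_sum_Ico_succ_bot X.succ_pos,
    LSeries.term_zero, zero_add, dirichletPoly, ← Ico_add_one_add_one_eq_Ioc]
  refine sum_congr rfl fun n hn ↦ ?_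
  rw [LSeries.term_of_ne_zero (Nat.pos_iff_ne_zero.1 (mem_Ico.1 hn).1), cpow_neg, div_eq_mul_inv]

theorem BoundedIntervalSums.uniformCauchySeqOn (ha : BoundedIntervalSums a B) {K : Set ℂ} {δ M : ℝ}
    (hδ : 0 < δ) (hK : ∀ z ∈ K, δ ≤ z.re ∧ ‖z‖ ≤ M) :
    UniformCauchySeqOn (dirichletPoly a) atTop K := by
  have hB : 0 ≤ B := (norm_nonneg _).trans (ha 0 0)
  have hlim : Tendsto (fun X : ℕ ↦ B * (M / δ) * ((X + 1 : ℕ) : ℝ) ^ (-δ)) atTop (𝓝 0) := by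
    simpa using ((tendsto_rpow_neg_atTop hδ).comp
      (tendsto_natCast_atTop_atTop.comp (tendsto_add_atTop_nat 1))).const_mul (B * (M / δ))
  have hbound (X Y : ℕ) (hXY : X ≤ Y) (z : ℂ) (hz : z ∈ K) :
      ‖dirichletPoly a Y z - dirichletPoly a X z‖ ≤ B * (M / δ) * ((X + 1 : ℕ) : ℝ) ^ (-δ) := by
    obtain ⟨hz1, hz2⟩ := hK z hz
    refine (ha.norm_dirichletPoly_sub_le hXY (hδ.trans_le hz1)).trans ?_
    have : 0 ≤ M := (norm_nonneg z).trans hz2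
    gcongr
    simp
  refine Metric.uniformCauchySeqOn_iff.2 fun ε hε ↦ ?_
  obtain ⟨N, hN⟩ := eventually_atTop.1 (hlim.eventually_lt_const hε)
  refine ⟨N, fun m hm n hn z hz ↦ ?_⟩
  rcases le_total m n with hmn | hmn
  · rw [dist_comm, dist_eq_norm]
    exact (hbound m n hmn z hz).trans_lt (hN m hm)
  · rw [dist_eq_norm]
    exact (hbound n m hmn z hz).trans_lt (hN n hn)

-- The partial sums converge locally uniformly, so the identity theorem carries their limit
-- from the half-plane of absolute convergence to the whole right half-plane.
theorem BoundedIntervalSums.tendsto_dirichletPoly (ha : BoundedIntervalSums a B) {F : ℂ → ℂ}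
    (hF : DifferentiableOn ℂ F {z | 0 < z.re}) (hFa : ∀ z : ℂ, 1 < z.re → F z = LSeries a z)
    (hs : 0 < s.re) : Tendsto (fun X ↦ dirichletPoly a X s) atTop (𝓝 (F s)) := by
  set U : Set ℂ := {z | s.re / 2 < z.re} ∩ Metric.ball 0 (‖s‖ + 3)
  have hUo : IsOpen U := (isOpen_lt continuous_const continuous_re).inter Metric.isOpen_ball
  have hUc : Convex ℝ U := (convex_halfSpace_re_gt _).inter (convex_ball _ _)
  have hCauchy : UniformCauchySeqOn (dirichletPoly a) atTop U :=
    ha.uniformCauchySeqOn (half_pos hs) fun z hz ↦ ⟨hz.1.le, (mem_ball_zero_iff.1 hz.2).le⟩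
  have hconv : ∀ z ∈ U, ∃ w, Tendsto (fun X ↦ dirichletPoly a X z) atTop (𝓝 w) :=
    fun z hz ↦ cauchySeq_tendsto_of_complete (hCauchy.cauchySeq hz)
  choose! G hG using hconv
  have hGd : DifferentiableOn ℂ G U :=
    ((hCauchy.tendstoUniformlyOn_of_tendsto hG).tendstoLocallyUniformlyOn).differentiableOn
      (.of_forall fun X ↦ (differentiable_dirichletPoly a X).differentiableOn) hUo
  have hsU : s ∈ U := ⟨half_lt_self hs, by simp⟩
  have hs2U : s + 2 ∈ U := by
    refine ⟨by simp only [Set.mem_ofPred_eq, add_re, re_ofNat]; linarith, ?_⟩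
    rw [mem_ball_zero_iff]
    exact (norm_add_le _ _).trans_lt (by norm_num)
  have hsub : U ⊆ {z | 0 < z.re} := fun z hz ↦ (half_pos hs).trans hz.1
  have heq : G =ᶠ[𝓝 (s + 2)] F := by
    have h1 : {z : ℂ | 1 < z.re} ∈ 𝓝 (s + 2) :=
      (isOpen_lt continuous_const continuous_re).mem_nhds
        (by simp only [Set.mem_ofPred_eq, add_re, re_ofNat]; linarith)
    filter_upwards [h1, hUo.mem_nhds hs2U] with z hz hzU
    rw [hFa z hz]
    exact tendsto_nhds_unique (hG z hzU) (tendsto_dirichletPoly_LSeries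
      (LSeriesSummable_of_bounded_of_one_lt_re (fun n hn ↦ ha.norm_apply_le hn) hz))
  rw [← (hGd.analyticOnNhd hUo).eqOn_of_preconnected_of_eventuallyEq
    ((hF.mono hsub).analyticOnNhd hUo) hUc.isPreconnected hs2U heq hsU]
  exact hG s hsU

theorem BoundedIntervalSums.norm_sub_dirichletPoly_le (ha : BoundedIntervalSums a B) {F : ℂ → ℂ}
    (hF : DifferentiableOn ℂ F {z | 0 < z.re}) (hFa : ∀ z : ℂ, 1 < z.re → F z = LSeries a z)
    (hs : 0 < s.re) (X : ℕ) :
    ‖F s - dirichletPoly a X s‖ ≤ B * (‖s‖ / s.re) * ((X + 1 : ℕ) : ℝ) ^ (-s.re) :=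
  le_of_tendsto ((ha.tendsto_dirichletPoly hF hFa hs).sub_const _).norm <|
    (eventually_ge_atTop X).mono fun _ hY ↦ ha.norm_dirichletPoly_sub_le hY hs

end PartialSums

section PartialSumBounds

open Finset

variable {a : ℕ → ℂ} {s : ℂ}

theorem deriv_dirichletPoly (a : ℕ → ℂ) (X : ℕ) (s : ℂ) :
    deriv (dirichletPoly a X) s = -dirichletPoly (LSeries.logMul a) X s := by
  rw [dirichletPoly, ← sum_neg_distrib]
  refine (HasDerivAt.fun_sum fun n hn ↦ ?_).deriv
  have hn0 : (n : ℂ) ≠ 0 := Nat.cast_ne_zero.2 (mem_Ioc.1 hn).1.ne'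
  convert! ((hasDerivAt_id s).neg.const_cpow (c := (n : ℂ)) (Or.inl hn0)).const_mul (a n) using 1
  simp only [LSeries.logMul, Pi.neg_apply, id]
  ring

theorem norm_natCast_cpow_neg_le_inv {n : ℕ} (hn : n ≠ 0) (hs : 1 ≤ s.re) :
    ‖(n : ℂ) ^ (-s)‖ ≤ (n : ℝ)⁻¹ := by
  rw [norm_natCast_cpow_of_pos (Nat.pos_of_ne_zero hn), ← Real.rpow_neg_one]
  exact Real.rpow_le_rpow_of_exponent_le (mod_cast Nat.one_le_iff_ne_zero.2 hn) (by simpa)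

theorem sum_Ioc_inv_le_one_add_log (X : ℕ) : ∑ n ∈ Ioc 0 X, (n : ℝ)⁻¹ ≤ 1 + Real.log X := by
  have := harmonic_le_one_add_log X
  rw [harmonic_eq_sum_Icc] at this
  push_cast at this
  rwa [← Icc_add_one_left_eq_Ioc, zero_add]

theorem norm_dirichletPoly_le {A : ℝ} {X : ℕ} (hA : 0 ≤ A) (ha : ∀ n ∈ Ioc 0 X, ‖a n‖ ≤ A)
    (hs : 1 ≤ s.re) : ‖dirichletPoly a X s‖ ≤ A * (1 + Real.log X) := by
  refine (norm_sum_le_of_le _ fun n hn ↦ ?_).trans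
    ((mul_sum _ _ _).symm.trans_le
      (mul_le_mul_of_nonneg_left (sum_Ioc_inv_le_one_add_log X) hA))
  rw [norm_mul]
  exact mul_le_mul (ha n hn) (norm_natCast_cpow_neg_le_inv (mem_Ioc.1 hn).1.ne' hs)
    (norm_nonneg _) hA

theorem norm_deriv_dirichletPoly_le {X : ℕ} (ha : ∀ n, ‖a n‖ ≤ 1) (hs : 1 ≤ s.re) :
    ‖deriv (dirichletPoly a X) s‖ ≤ Real.log X * (1 + Real.log X) := by
  rw [deriv_dirichletPoly, norm_neg]
  refine norm_dirichletPoly_le (Real.log_natCast_nonneg X) (fun n hn ↦ ?_) hs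
  obtain ⟨hn0, hnX⟩ := mem_Ioc.1 hn
  rw [LSeries.logMul, norm_mul, ← natCast_log, norm_real,
    Real.norm_of_nonneg (Real.log_natCast_nonneg n)]
  exact (mul_le_of_le_one_right (Real.log_natCast_nonneg n) (ha n)).trans
    (Real.log_le_log (mod_cast hn0) (mod_cast hnX))

end PartialSumBounds

section UpperBounds

open DirichletCharacter

variable {q : ℕ} [NeZero q] {χ : DirichletCharacter ℂ q} {s : ℂ}

theorem sum_range_level_eq_zero (hχ : χ ≠ 1) (m : ℕ) :
    ∑ n ∈ Finset.range q, χ ((m + n : ℕ) : ZMod q) = 0 := by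
  rw [← χ.sum_eq_zero_of_ne_one hχ, ← Equiv.sum_comp (Equiv.addLeft (m : ZMod q)) χ]
  refine Finset.sum_nbij (fun n ↦ (n : ZMod q)) (by simp) (fun a ha b hb hab ↦ ?_)
    (fun x _ ↦ ⟨x.val, by simp [ZMod.val_lt], by simp⟩) (by simp)
  exact ((ZMod.natCast_eq_natCast_iff a b q).1 hab).eq_of_lt_of_lt (by simpa using ha)
    (by simpa using hb)

theorem norm_sum_range_le_level (hχ : χ ≠ 1) (m k : ℕ) :
    ‖∑ n ∈ Finset.range k, χ ((m + n : ℕ) : ZMod q)‖ ≤ q := by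
  induction k using Nat.strong_induction_on with
  | _ k ih =>
    rcases lt_or_ge k q with hk | hk
    · calc _ ≤ ∑ _ ∈ Finset.range k, (1 : ℝ) := norm_sum_le_of_le _ fun _ _ ↦ χ.norm_le_one _
        _ ≤ q := by simpa using hk.le
    · obtain ⟨j, rfl⟩ := Nat.exists_eq_add_of_le' hk
      simp only [Finset.sum_range_add, ← add_assoc, sum_range_level_eq_zero hχ, add_zero]
      exact ih j (by have := NeZero.pos q; lia)

theorem boundedIntervalSums_of_ne_one (hχ : χ ≠ 1) : BoundedIntervalSums (fun n ↦ χ n) q := by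
  intro X Y
  rw [← Finset.Ico_add_one_add_one_eq_Ioc, Finset.sum_Ico_eq_sum_range]
  exact norm_sum_range_le_level hχ _ _

theorem norm_LFunction_sub_dirichletPoly_le (hχ : χ ≠ 1) (hs : 0 < s.re) (X : ℕ) :
    ‖LFunction χ s - dirichletPoly (fun n ↦ χ n) X s‖ ≤
      q * (‖s‖ / s.re) * ((X + 1 : ℕ) : ℝ) ^ (-s.re) :=
  (boundedIntervalSums_of_ne_one hχ).norm_sub_dirichletPoly_le
    (differentiable_LFunction hχ).differentiableOn (fun _ hz ↦ LFunction_eq_LSeries χ hz) hs X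

theorem norm_LFunction_sub_dirichletPoly_pow_four_le (hχ : χ ≠ 1) (hs : 1 / 2 ≤ s.re) :
    ‖LFunction χ s - dirichletPoly (fun n ↦ χ n) (q ^ 4) s‖ ≤ 2 * ‖s‖ / q := by
  have hq : (1 : ℝ) ≤ q := mod_cast NeZero.pos q
  have hratio : ‖s‖ / s.re ≤ 2 * ‖s‖ := by
    rw [div_le_iff₀ (by linarith)]
    nlinarith [norm_nonneg s]
  have hpow : ((q ^ 4 + 1 : ℕ) : ℝ) ^ (-s.re) ≤ ((q : ℝ) ^ 2)⁻¹ :=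
    calc ((q ^ 4 + 1 : ℕ) : ℝ) ^ (-s.re) ≤ ((q : ℝ) ^ 4) ^ (-s.re) :=
          Real.rpow_le_rpow_of_nonpos (by positivity) (by push_cast; linarith) (by linarith)
      _ ≤ ((q : ℝ) ^ 4) ^ (-(1 / 2) : ℝ) :=
          Real.rpow_le_rpow_of_exponent_le (one_le_pow₀ hq) (by linarith)
      _ = ((q : ℝ) ^ 2)⁻¹ := by
          rw [Real.rpow_neg (by positivity), ← Real.sqrt_eq_rpow,
            show (q : ℝ) ^ 4 = (q ^ 2) ^ 2 by ring, Real.sqrt_sq (by positivity)]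
  calc _ ≤ _ := norm_LFunction_sub_dirichletPoly_le hχ (by linarith) _
    _ ≤ q * (2 * ‖s‖) * ((q : ℝ) ^ 2)⁻¹ := by gcongr
    _ = 2 * ‖s‖ / q := by field_simp

theorem norm_deriv_LFunction_sub_le (hχ : χ ≠ 1) (hs : 1 ≤ s.re) :
    ‖deriv (LFunction χ) s - deriv (dirichletPoly (fun n ↦ χ n) (q ^ 4)) s‖ ≤
      4 * (‖s‖ + 1) / q := by
  have hd := (differentiable_LFunction hχ).fun_sub
    (differentiable_dirichletPoly (fun n ↦ χ n) (q ^ 4))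
  rw [← deriv_fun_sub (differentiable_LFunction hχ s) (differentiable_dirichletPoly _ _ s)]
  have hsphere (z : ℂ) (hz : z ∈ Metric.sphere s (1 / 2)) :
      ‖LFunction χ z - dirichletPoly (fun n ↦ χ n) (q ^ 4) z‖ ≤ 2 * (‖s‖ + 1) / q := by
    rw [mem_sphere_iff_norm] at hz
    have hre : 1 / 2 ≤ z.re := by
      have := (abs_le.1 ((abs_re_le_norm (z - s)).trans_eq hz)).1
      rw [sub_re] at this
      linarith
    have hnorm : ‖z‖ ≤ ‖s‖ + 1 := by linarith [norm_sub_norm_le z s]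
    exact (norm_LFunction_sub_dirichletPoly_pow_four_le hχ hre).trans (by gcongr)
  refine (norm_deriv_le_of_forall_mem_sphere_norm_le (by norm_num) hd.diffContOnCl
    hsphere).trans_eq ?_
  ring

theorem norm_LFunction_le (hχ : χ ≠ 1) (hs : 1 ≤ s.re) :
    ‖LFunction χ s‖ ≤ (20 + 4 * ‖s‖) * (1 + Real.log q) ^ 2 := by
  have hq : (1 : ℝ) ≤ q := mod_cast NeZero.pos q
  have happrox := norm_LFunction_sub_dirichletPoly_pow_four_le hχ (s := s) (by linarith)
  have hpoly := norm_dirichletPoly_le (X := q ^ 4) zero_le_one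
    (fun n _ ↦ χ.norm_le_one (n : ZMod q)) hs
  rw [Nat.cast_pow, Real.log_pow] at hpoly
  push_cast at hpoly
  have hdiv : 2 * ‖s‖ / q ≤ 2 * ‖s‖ := div_le_self (by positivity) hq
  have hlog : 0 ≤ Real.log q := Real.log_nonneg hq
  have := norm_le_norm_add_norm_sub' (LFunction χ s) (dirichletPoly (fun n ↦ χ n) (q ^ 4) s)
  nlinarith [norm_nonneg s, mul_nonneg (norm_nonneg s) hlog, sq_nonneg (Real.log q)]

theorem norm_deriv_LFunction_le (hχ : χ ≠ 1) (hs : 1 ≤ s.re) :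
    ‖deriv (LFunction χ) s‖ ≤ (20 + 4 * ‖s‖) * (1 + Real.log q) ^ 2 := by
  have hq : (1 : ℝ) ≤ q := mod_cast NeZero.pos q
  have happrox := norm_deriv_LFunction_sub_le hχ hs
  have hpoly := norm_deriv_dirichletPoly_le (X := q ^ 4)
    (fun n ↦ χ.norm_le_one (n : ZMod q)) hs
  rw [Nat.cast_pow, Real.log_pow] at hpoly
  push_cast at hpoly
  have hdiv : 4 * (‖s‖ + 1) / q ≤ 4 * (‖s‖ + 1) := div_le_self (by positivity) hq
  have hlog : 0 ≤ Real.log q := Real.log_nonneg hq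
  have := norm_le_norm_add_norm_sub' (deriv (LFunction χ) s)
    (deriv (dirichletPoly (fun n ↦ χ n) (q ^ 4)) s)
  nlinarith [norm_nonneg s, mul_nonneg (norm_nonneg s) hlog,
    mul_nonneg (norm_nonneg s) (sq_nonneg (Real.log q))]

end UpperBounds

section NonexceptionalLowerBound

open DirichletCharacter

/-- The entire function `s ↦ (s - 1) ζ(s)`. -/
noncomputable def regularizedZeta : ℂ → ℂ := LFunctionTrivChar₁ 1

theorem differentiable_regularizedZeta : Differentiable ℂ regularizedZeta :=
  differentiable_LFunctionTrivChar₁ 1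

theorem regularizedZeta_one : regularizedZeta 1 = 1 := by
  simp [regularizedZeta, LFunctionTrivChar₁]

theorem riemannZeta_eq_regularizedZeta_div {s : ℂ} (hs : s ≠ 1) :
    riemannZeta s = regularizedZeta s / (s - 1) := by
  rw [regularizedZeta, LFunctionTrivChar₁, Function.update_of_ne hs, LFunctionTrivChar,
    LFunction_modOne_eq, mul_div_cancel_left₀ _ (sub_ne_zero.2 hs)]

theorem exists_norm_riemannZeta_one_add_le :
    ∃ C : ℝ, 0 ≤ C ∧ ∀ x : ℝ, 0 < x → x ≤ 1 → ‖riemannZeta (1 + x)‖ ≤ C / x := by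
  obtain ⟨C, hC⟩ := (isCompact_closedBall (1 : ℂ) 1).exists_bound_of_continuousOn
    differentiable_regularizedZeta.continuous.continuousOn
  refine ⟨C, (norm_nonneg _).trans (hC 1 (by simp)), fun x hx hx1 ↦ ?_⟩
  rw [riemannZeta_eq_regularizedZeta_div (by simpa using hx.ne'), norm_div, add_sub_cancel_left,
    norm_real, Real.norm_of_nonneg hx.le]
  gcongr
  exact hC _ (by simp [abs_of_pos hx, hx1])

theorem exists_norm_riemannZeta_one_add_add_mul_I_le {t : ℝ} (ht : t ≠ 0) :
    ∃ C : ℝ, 0 ≤ C ∧ ∀ x : ℝ, 0 ≤ x → x ≤ 1 → ‖riemannZeta (1 + x + 2 * I * t)‖ ≤ C := by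
  have hcont : ContinuousOn (fun x : ℝ ↦ riemannZeta (1 + x + 2 * I * t)) (Set.Icc 0 1) := by
    intro x _
    have hne : 1 + (x : ℂ) + 2 * I * t ≠ 1 := fun h ↦ ht (by simpa using congrArg im h)
    exact (ContinuousAt.comp (f := fun x : ℝ ↦ 1 + (x : ℂ) + 2 * I * t)
      (differentiableAt_riemannZeta hne).continuousAt (by fun_prop)).continuousWithinAt
  obtain ⟨C, hC⟩ := isCompact_Icc.exists_bound_of_continuousOn hcont
  exact ⟨C, (norm_nonneg _).trans (hC 0 (by simp)), fun x h0 h1 ↦ hC x ⟨h0, h1⟩⟩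

theorem norm_LFunctionTrivChar_le {p : ℕ} [hp : Fact p.Prime] {s : ℂ} (hs : 0 ≤ s.re)
    (hs1 : s ≠ 1) : ‖LFunctionTrivChar p s‖ ≤ 2 * ‖riemannZeta s‖ := by
  rw [LFunctionTrivChar_eq_mul_riemannZeta hs1, norm_mul, hp.out.primeFactors,
    Finset.prod_singleton]
  gcongr
  have hle : ‖(p : ℂ) ^ (-s)‖ ≤ 1 := by
    rw [norm_natCast_cpow_of_pos hp.out.pos]
    exact Real.rpow_le_one_of_one_le_of_nonpos (mod_cast hp.out.one_le) (by simpa using hs)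
  calc _ ≤ ‖(1 : ℂ)‖ + ‖(p : ℂ) ^ (-s)‖ := norm_sub_le _ _
    _ ≤ 2 := by rw [norm_one]; linarith

theorem norm_one_add_add_le {x v : ℂ} (hx : ‖x‖ ≤ 1) : ‖1 + x + v‖ ≤ 2 + ‖v‖ :=
  calc ‖1 + x + v‖ ≤ ‖(1 : ℂ)‖ + ‖x‖ + ‖v‖ := norm_add₃_le
    _ ≤ 2 + ‖v‖ := by rw [norm_one]; linarith

theorem exists_norm_LFunction_sq_le (t : ℝ) :
    ∃ C : ℝ, 0 ≤ C ∧ ∀ (p : ℕ) [Fact p.Prime] (χ : DirichletCharacter ℂ p) (x : ℝ),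
      (t ≠ 0 ∨ χ ^ 2 ≠ 1) → 0 < x → x ≤ 1 →
        ‖LFunction (χ ^ 2) (1 + x + 2 * I * t)‖ ≤ C * (1 + Real.log p) ^ 2 := by
  obtain ⟨C, hC0, hC⟩ : ∃ C : ℝ, 0 ≤ C ∧
      (t ≠ 0 → ∀ x : ℝ, 0 ≤ x → x ≤ 1 → ‖riemannZeta (1 + x + 2 * I * t)‖ ≤ C) := by
    by_cases ht : t = 0
    · exact ⟨0, le_rfl, fun h ↦ (h ht).elim⟩
    · exact (exists_norm_riemannZeta_one_add_add_mul_I_le ht).imp fun C h ↦ ⟨h.1, fun _ ↦ h.2⟩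
  refine ⟨2 * C + (28 + 8 * |t|), by positivity, fun p hp χ x hcase hx hx1 ↦ ?_⟩
  have hlog : 1 ≤ (1 + Real.log p) ^ 2 := one_le_pow₀ (by simp [Real.log_natCast_nonneg])
  have hre : 1 ≤ (1 + (x : ℂ) + 2 * I * t).re := by simpa using hx.le
  by_cases hχ : χ ^ 2 = 1
  · have ht : t ≠ 0 := hcase.resolve_right (not_not.2 hχ)
    have hne : 1 + (x : ℂ) + 2 * I * t ≠ 1 := fun h ↦ ht (by simpa using congrArg im h)
    rw [hχ]
    have hzeta := norm_LFunctionTrivChar_le (p := p) (zero_le_one.trans hre) hne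
    have := hC ht x hx.le hx1
    nlinarith [abs_nonneg t]
  · have hnorm : ‖1 + (x : ℂ) + 2 * I * t‖ ≤ 2 + 2 * |t| := by
      simpa using norm_one_add_add_le (x := x) (v := 2 * I * t) (by simpa [abs_of_pos hx])
    exact (norm_LFunction_le hχ hre).trans
      (mul_le_mul_of_nonneg_right (by linarith) (by positivity))

theorem norm_LFunction_one_add_add_sub_le {q : ℕ} [NeZero q] {χ : DirichletCharacter ℂ q}
    (hχ : χ ≠ 1) (t : ℝ) {x : ℝ} (hx : 0 ≤ x) (hx1 : x ≤ 1) :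
    ‖LFunction χ (1 + x + I * t) - LFunction χ (1 + t * I)‖ ≤
      (28 + 4 * |t|) * (1 + Real.log q) ^ 2 * x := by
  have hderiv (z : ℂ) (hz : z ∈ segment ℝ (1 + t * I) (1 + x + I * t)) :
      ‖deriv (LFunction χ) z‖ ≤ (28 + 4 * |t|) * (1 + Real.log q) ^ 2 := by
    rw [segment_eq_image'] at hz
    obtain ⟨θ, hθ, rfl⟩ := hz
    have heq : 1 + t * I + θ • (1 + (x : ℂ) + I * t - (1 + t * I)) =
        1 + ((θ * x : ℝ) : ℂ) + I * t := by
      rw [real_smul]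
      push_cast
      ring
    have hθx : 0 ≤ θ * x := mul_nonneg hθ.1 hx
    have hnorm : ‖1 + ((θ * x : ℝ) : ℂ) + I * t‖ ≤ 2 + |t| := by
      simpa using norm_one_add_add_le (x := (θ * x : ℝ)) (v := I * t)
        (by rw [norm_real, Real.norm_of_nonneg hθx]; exact mul_le_one₀ hθ.2 hx hx1)
    beta_reduce
    rw [heq]
    exact (norm_deriv_LFunction_le hχ (by simpa using hθx)).trans
      (mul_le_mul_of_nonneg_right (by linarith) (by positivity))
  refine ((convex_segment _ _).norm_image_sub_le_of_norm_deriv_le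
    (fun z _ ↦ differentiable_LFunction hχ z) hderiv (left_mem_segment ℝ _ _)
    (right_mem_segment ℝ _ _)).trans_eq ?_
  rw [show 1 + (x : ℂ) + I * t - (1 + t * I) = x by ring, norm_real, Real.norm_of_nonneg hx]

-- Optimal choice `x = y ^ 4` with `y = 1 / (2 B ^ 2)` in `A x ≥ x ^ (3 / 4) / B`.
theorem inv_le_of_forall_one_le_mul_pow {A : ℝ → ℝ} {B : ℝ} (hB : 1 ≤ B)
    (hA : ∀ x, 0 < x → x ≤ 1 → 0 ≤ A x ∧ 1 ≤ (B / x) ^ 3 * A x ^ 4 * B)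
    (hlip : ∀ x, 0 < x → x ≤ 1 → A x ≤ A 0 + B * x) : 1 / (16 * B ^ 7) ≤ A 0 := by
  set y := 1 / (2 * B ^ 2) with hy
  have hy0 : 0 < y := by positivity
  have hy1 : y ≤ 1 := by
    rw [hy, div_le_one (by positivity)]
    nlinarith
  have hx0 : 0 < y ^ 4 := by positivity
  have hx1 : y ^ 4 ≤ 1 := pow_le_one₀ hy0.le hy1
  obtain ⟨hAnonneg, hprod⟩ := hA _ hx0 hx1
  have hlower : y ^ 3 / B ≤ A (y ^ 4) := by
    refine (pow_le_pow_iff_left₀ (by positivity) hAnonneg four_ne_zero).1 ?_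
    rw [show (B / y ^ 4) ^ 3 * A (y ^ 4) ^ 4 * B = A (y ^ 4) ^ 4 / (y ^ 3 / B) ^ 4 by field_simp,
      one_le_div₀ (by positivity)] at hprod
    exact hprod
  have hdiff : y ^ 3 / B - B * y ^ 4 = 1 / (16 * B ^ 7) := by
    rw [hy]
    field_simp
    ring
  linarith [hlip _ hx0 hx1]

-- The `3-4-1` inequality together with a Lipschitz bound for `L` near the line `re s = 1`.
theorem exists_le_norm_LFunction_of_nonexceptional (t : ℝ) :
    ∃ c : ℝ, 0 < c ∧ ∀ (p : ℕ) [Fact p.Prime] (χ : DirichletCharacter ℂ p),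
      χ ≠ 1 → (t ≠ 0 ∨ χ ^ 2 ≠ 1) →
        c / (1 + Real.log p) ^ 14 ≤ ‖LFunction χ (1 + t * I)‖ := by
  obtain ⟨C₁, hC₁0, hC₁⟩ := exists_norm_riemannZeta_one_add_le
  obtain ⟨C₂, hC₂0, hC₂⟩ := exists_norm_LFunction_sq_le t
  set C := 28 + 4 * |t| + 2 * C₁ + C₂ with hC
  have hC28 : 28 ≤ C := by rw [hC]; linarith [abs_nonneg t]
  refine ⟨1 / (16 * C ^ 7), by positivity, fun p hp χ hχ hcase ↦ ?_⟩
  have hlog : 1 ≤ (1 + Real.log p) ^ 2 := one_le_pow₀ (by simp [Real.log_natCast_nonneg])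
  set B := C * (1 + Real.log p) ^ 2 with hB
  have hCB : C ≤ B := le_mul_of_one_le_right (by linarith) hlog
  have hmono {K : ℝ} (hK : K ≤ C) : K * (1 + Real.log p) ^ 2 ≤ B :=
    mul_le_mul_of_nonneg_right hK (by positivity)
  have h0 : 1 + ((0 : ℝ) : ℂ) + I * t = 1 + t * I := by rw [ofReal_zero, add_zero, mul_comm]
  have hmain : 1 / (16 * B ^ 7) ≤ ‖LFunction χ (1 + (0 : ℝ) + I * t)‖ := by
    refine inv_le_of_forall_one_le_mul_pow (A := fun x ↦ ‖LFunction χ (1 + x + I * t)‖)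
      (by linarith) (fun x hx hx1 ↦ ⟨norm_nonneg _, ?_⟩) (fun x hx hx1 ↦ ?_)
    · have hprod := norm_LFunction_product_ge_one χ hx t
      rw [norm_mul, norm_mul, norm_pow, norm_pow] at hprod
      refine hprod.trans ?_
      gcongr
      · have hre : 0 ≤ (1 + (x : ℂ)).re := by simpa using (add_pos one_pos hx).le
        refine (norm_LFunctionTrivChar_le hre (by simpa using hx.ne')).trans ?_
        calc 2 * ‖riemannZeta (1 + x)‖ ≤ 2 * (C₁ / x) := by gcongr; exact hC₁ x hx hx1
          _ = 2 * C₁ / x := by ring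
          _ ≤ B / x := by gcongr; linarith [abs_nonneg t]
      · exact (hC₂ p χ x hcase hx hx1).trans (hmono (by linarith [abs_nonneg t]))
    · have hB : (28 + 4 * |t|) * (1 + Real.log p) ^ 2 * x ≤ B * x := by
        gcongr
        exact hmono (by linarith)
      rw [h0]
      linarith [norm_sub_norm_le (LFunction χ (1 + x + I * t)) (LFunction χ (1 + t * I)),
        norm_LFunction_one_add_add_sub_le hχ t hx.le hx1]
  calc _ = 1 / (16 * B ^ 7) := by rw [hB]; field_simp
    _ ≤ _ := hmain
    _ = _ := by rw [h0]

end NonexceptionalLowerBound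

section Estermann

open scoped ComplexOrder

theorem one_sub_mul_geom_sum_le {g : ℕ → ℝ} {l y : ℝ} (hy : 0 ≤ y) (hg : ∀ n, -l ≤ g n)
    (hg0 : 1 - l ≤ g 0) {M : ℕ} (hM : 0 < M) :
    1 - l * ∑ n ∈ Finset.range M, y ^ n ≤ ∑ n ∈ Finset.range M, g n * y ^ n := by
  have h0 : (g 0 + l) * y ^ 0 ≤ ∑ n ∈ Finset.range M, (g n + l) * y ^ n :=
    Finset.single_le_sum (f := fun n ↦ (g n + l) * y ^ n)
      (fun n _ ↦ mul_nonneg (by linarith [hg n]) (pow_nonneg hy n)) (Finset.mem_range.2 hM)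
  simp only [add_mul, Finset.sum_add_distrib, ← Finset.mul_sum, pow_zero, mul_one] at h0
  linarith

theorem pow_ceil_log_le {Q : ℝ} (hQ : 1 ≤ Q) :
    (33 / 40 : ℝ) ^ ⌈6 * Real.log (12 * Q)⌉₊ ≤ 1 / (12 * Q) := by
  set M := ⌈6 * Real.log (12 * Q)⌉₊
  have hM : 6 * Real.log (12 * Q) ≤ M := Nat.le_ceil _
  calc (33 / 40 : ℝ) ^ M ≤ Real.exp (-(1 / 6)) ^ M := by
        gcongr
        linarith [Real.add_one_le_exp (-(1 / 6) : ℝ)]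
    _ = Real.exp (M * -(1 / 6)) := (Real.exp_nat_mul _ _).symm
    _ ≤ Real.exp (-Real.log (12 * Q)) := Real.exp_le_exp.2 (by linarith)
    _ = 1 / (12 * Q) := by rw [Real.exp_neg, Real.exp_log (by linarith), one_div]

theorem pow_ceil_log_le_mul_rpow {Q y : ℝ} (hQ : 1 ≤ Q) (hy : 1 ≤ y) (hy2 : y ≤ 2) :
    y ^ ⌈6 * Real.log (12 * Q)⌉₊ ≤ Real.exp 1 * (12 * Q) ^ (6 * (y - 1)) := by
  set M := ⌈6 * Real.log (12 * Q)⌉₊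
  have hlog : 0 ≤ Real.log (12 * Q) := Real.log_nonneg (by linarith)
  have hM : (M : ℝ) < 6 * Real.log (12 * Q) + 1 := Nat.ceil_lt_add_one (by positivity)
  calc y ^ M ≤ Real.exp (y - 1) ^ M := by
        gcongr
        linarith [Real.add_one_le_exp (y - 1)]
    _ = Real.exp (M * (y - 1)) := (Real.exp_nat_mul _ _).symm
    _ ≤ Real.exp (1 + Real.log (12 * Q) * (6 * (y - 1))) := Real.exp_le_exp.2 (by nlinarith)
    _ = _ := by rw [Real.exp_add, Real.rpow_def_of_pos (by linarith)]

/-- The lower bound of Estermann's lemma for the residue `K 1` of a Dirichlet series `K s / (s - 1)`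
such that `K` is at most `Q` on the disc of centre `2` and radius `4 / 3` and nonnegative at `β`. -/
noncomputable def estermannBound (β Q : ℝ) : ℝ :=
  (1 - β) / (2 * Real.exp 1) * (72 * Q) ^ (-(6 * (1 - β)))

theorem estermannBound_pos {β Q : ℝ} (hβ : β < 1) (hQ : 0 < Q) : 0 < estermannBound β Q := by
  have : 0 < 1 - β := sub_pos.2 hβ
  rw [estermannBound]
  positivity

theorem estermannBound_mul {β Q R : ℝ} (hQ : 0 ≤ Q) (hR : 0 ≤ R) :
    estermannBound β (Q * R) = estermannBound β Q * R ^ (-(6 * (1 - β))) := by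
  rw [estermannBound, estermannBound, ← mul_assoc 72, Real.mul_rpow (by positivity) hR, mul_assoc]

theorem neg_half_le_sub_sum_of_hasSum {g : ℕ → ℝ} {y Q S : ℝ} (hQ : 1 ≤ Q) (hy : 0 ≤ y)
    (hy1 : y ≤ 11 / 10) (hsum : HasSum (fun n ↦ g n * y ^ n) S)
    (hg : ∀ n, |g n| ≤ Q * (3 / 4) ^ n) :
    -(1 / 2) ≤ S - ∑ n ∈ Finset.range ⌈6 * Real.log (12 * Q)⌉₊, g n * y ^ n := by
  set M := ⌈6 * Real.log (12 * Q)⌉₊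
  have hterm (n : ℕ) : ‖g n * y ^ n‖ ≤ Q * (33 / 40) ^ n := by
    rw [norm_mul, Real.norm_eq_abs, norm_pow, Real.norm_of_nonneg hy,
      show (33 / 40 : ℝ) = 3 / 4 * (11 / 10) by norm_num, mul_pow, ← mul_assoc]
    gcongr
    exact hg n
  have hgeom := norm_sub_le_of_geometric_bound_of_hasSum (by norm_num) hterm hsum M
  have hpow : Q * (33 / 40) ^ M ≤ 1 / 12 :=
    (mul_le_mul_of_nonneg_left (pow_ceil_log_le hQ) (by positivity)).trans_eq (by field_simp)
  rw [Real.norm_eq_abs, le_div_iff₀ (by norm_num)] at hgeom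
  linarith [le_abs_self (∑ n ∈ Finset.range M, g n * y ^ n - S)]

-- The series is cut at `M = ⌈6 log (72 Q)⌉`, past which it contributes at least `-1 / 2`.
theorem estermannBound_le_of_hasSum {g : ℕ → ℝ} {β l Q S : ℝ} (hQ : 1 ≤ Q) (hβ : 9 / 10 ≤ β)
    (hβ1 : β < 1) (hsum : HasSum (fun n ↦ g n * (2 - β) ^ n) S)
    (hgQ : ∀ n, |g n| ≤ 6 * Q * (3 / 4) ^ n) (hgl : ∀ n, -l ≤ g n) (hg0 : 1 - l ≤ g 0)
    (hS : S ≤ l / (1 - β)) : estermannBound β Q ≤ l := by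
  set M := ⌈6 * Real.log (12 * (6 * Q))⌉₊
  set y := 2 - β with hy
  have hb : 0 < 1 - β := sub_pos.2 hβ1
  have hy0 : 0 ≤ y := by linarith
  have hM : 0 < M := Nat.ceil_pos.2 (mul_pos (by norm_num) (Real.log_pos (by linarith)))
  have hhead := one_sub_mul_geom_sum_le hy0 hgl hg0 hM
  have htail : -(1 / 2) ≤ S - ∑ n ∈ Finset.range M, g n * y ^ n :=
    neg_half_le_sub_sum_of_hasSum (by linarith) hy0 (by linarith) hsum hgQ
  have hmain : 1 / 2 * (1 - β) ≤ l * y ^ M := by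
    rw [geom_sum_eq (by linarith), show y - 1 = 1 - β by rw [hy]; ring] at hhead
    have : 1 / 2 ≤ l * ((y ^ M - 1) / (1 - β)) + l / (1 - β) := by linarith
    rw [← mul_div_assoc, ← add_div, le_div_iff₀ hb] at this
    linarith
  have hl : 0 < l :=
    pos_of_mul_pos_left (hmain.trans_lt' (mul_pos one_half_pos hb)) (pow_nonneg hy0 M)
  have hyM : y ^ M ≤ Real.exp 1 * (72 * Q) ^ (6 * (1 - β)) := by
    convert pow_ceil_log_le_mul_rpow (Q := 6 * Q) (y := y) (by linarith) (by linarith)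
      (by linarith) using 3 <;> ring
  rw [estermannBound, Real.rpow_neg (by positivity), ← div_eq_mul_inv, div_div,
    div_le_iff₀ (by positivity)]
  linarith [mul_le_mul_of_nonneg_left hyM hl.le]

/-- The `n`-th Taylor coefficient at `0` of `w ↦ re (G (2 - w))`, for `G` holomorphic at `2`. -/
noncomputable def reflectedTaylorCoeff (G : ℂ → ℂ) (n : ℕ) : ℝ :=
  ((n.factorial : ℂ)⁻¹ * ((-1) ^ n * iteratedDeriv n G 2)).re

theorem hasSum_reflectedTaylorCoeff {G : ℂ → ℂ} (hG : Differentiable ℂ G) (β : ℝ) :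
    HasSum (fun n ↦ reflectedTaylorCoeff G n * (2 - β) ^ n) (G β).re := by
  convert hasSum_re (hasSum_taylorSeries_of_entire hG 2 β) using 2 with n
  have hpow : ((β : ℂ) - 2) ^ n = (-1) ^ n * (((2 - β) ^ n : ℝ) : ℂ) := by
    push_cast
    rw [← mul_pow]
    congr 1
    ring
  rw [reflectedTaylorCoeff, ← re_mul_ofReal, hpow, smul_eq_mul, smul_eq_mul]
  congr 1
  ring

theorem abs_reflectedTaylorCoeff_le {G : ℂ → ℂ} {Q : ℝ} (hG : Differentiable ℂ G)
    (hGQ : ∀ z ∈ Metric.sphere (2 : ℂ) (4 / 3), ‖G z‖ ≤ Q) (n : ℕ) :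
    |reflectedTaylorCoeff G n| ≤ Q * (3 / 4) ^ n := by
  have hderiv := norm_iteratedDeriv_le_of_forall_mem_sphere_norm_le n
    (by norm_num : (0 : ℝ) < 4 / 3) hG.diffContOnCl hGQ
  refine (abs_re_le_norm _).trans ?_
  rw [norm_mul, norm_mul, norm_pow, norm_neg, norm_one, one_pow, one_mul, norm_inv, norm_natCast,
    inv_mul_le_iff₀ (mod_cast n.factorial_pos)]
  refine hderiv.trans_eq ?_
  rw [mul_div_assoc, div_eq_mul_inv Q, ← inv_pow, inv_div]

variable {a : ℕ → ℂ}

theorem reflectedTaylorCoeff_LSeries_nonneg (ha : 0 ≤ a)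
    (hab : LSeries.abscissaOfAbsConv a ≤ 1) (n : ℕ) : 0 ≤ reflectedTaylorCoeff (LSeries a) n := by
  have h := LSeries.iteratedDeriv_alternating ha (x := 2)
    (hab.trans_lt (mod_cast (by norm_num : (1 : ℝ) < 2))) n
  rw [ofReal_ofNat] at h
  exact (le_def.1 (mul_nonneg (inv_nonneg.2 (mod_cast n.factorial.zero_le)) h)).1

theorem one_le_LSeries_two_re (ha : 0 ≤ a) (ha1 : a 1 = 1)
    (hab : LSeries.abscissaOfAbsConv a ≤ 1) : 1 ≤ (LSeries a 2).re := by
  have hs : LSeriesSummable a 2 := LSeriesSummable_of_abscissaOfAbsConv_lt_re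
    (hab.trans_lt (by rw [re_ofNat]; exact mod_cast (by norm_num : (1 : ℝ) < 2)))
  have h := hs.le_tsum 1 fun n _ ↦ by simpa using LSeries.term_nonneg (ha n) 2
  rw [LSeries.term_of_ne_zero one_ne_zero, ha1] at h
  simpa [LSeries] using (le_def.1 h).1

theorem iteratedDeriv_inv_sub_one_two (n : ℕ) :
    iteratedDeriv n (fun s : ℂ ↦ (s - 1)⁻¹) 2 = (-1) ^ n * n.factorial := by
  have h := iter_deriv_inv_linear_sub (𝕜 := ℂ) n 1 1
  simp only [one_mul] at h
  rw [iteratedDeriv_eq_iterate, h]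
  norm_num

theorem reflectedTaylorCoeff_add_div {F G : ℂ → ℂ} {l : ℂ} (hG : Differentiable ℂ G)
    (hF : ∀ s : ℂ, 1 < s.re → F s = G s + l / (s - 1)) (n : ℕ) :
    reflectedTaylorCoeff F n = reflectedTaylorCoeff G n + l.re := by
  have hEqOn : Set.EqOn F (G + fun s ↦ l * (s - 1)⁻¹) {s : ℂ | 1 < s.re} := hF
  have hinv : ContDiffAt ℂ n (fun s : ℂ ↦ (s - 1)⁻¹) 2 :=
    (contDiffAt_id.sub contDiffAt_const).inv (by norm_num)
  rw [reflectedTaylorCoeff, reflectedTaylorCoeff, hEqOn.iteratedDeriv_of_isOpen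
    (isOpen_lt continuous_const continuous_re) n (by simp), iteratedDeriv_add
    hG.contDiff.contDiffAt (contDiffAt_const.mul hinv), iteratedDeriv_const_mul_field,
    iteratedDeriv_inv_sub_one_two, ← add_re]
  have hsign : ((-1 : ℂ)) ^ n * (-1) ^ n = 1 := by rw [← mul_pow]; simp
  have hfac : (n.factorial : ℂ) ≠ 0 := mod_cast n.factorial_ne_zero
  congr 1
  field_simp
  linear_combination (l * n.factorial) * hsign

theorem norm_dslope_one_le {K : ℂ → ℂ} {Q : ℝ}
    (hKQ : ∀ z ∈ Metric.closedBall (2 : ℂ) (4 / 3), ‖K z‖ ≤ Q) {z : ℂ}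
    (hz : z ∈ Metric.sphere (2 : ℂ) (4 / 3)) : ‖dslope K 1 z‖ ≤ 6 * Q := by
  have hQ : ‖K z - K 1‖ ≤ 2 * Q := by
    have h1 := hKQ 1 (by rw [mem_closedBall_iff_norm]; norm_num)
    linarith [norm_sub_le (K z) (K 1), hKQ z (Metric.sphere_subset_closedBall hz)]
  have hz1 : 1 / 3 ≤ ‖z - 1‖ := by
    have h := norm_sub_norm_le (z - 2) (-1)
    rw [mem_sphere_iff_norm.1 hz, norm_neg, norm_one, show z - 2 - -1 = z - 1 by ring] at h
    linarith
  have hne : z ≠ 1 := by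
    rintro rfl
    norm_num at hz1
  rw [dslope_of_ne _ hne, slope_def_field, norm_div, div_le_iff₀ (by linarith)]
  nlinarith [norm_nonneg (K z - K 1)]

theorem estermannBound_le_norm {K : ℂ → ℂ} {β Q : ℝ} (ha : 0 ≤ a) (ha1 : a 1 = 1)
    (hab : LSeries.abscissaOfAbsConv a ≤ 1) (hK : Differentiable ℂ K)
    (haK : ∀ s : ℂ, 1 < s.re → LSeries a s = K s / (s - 1)) (hQ : 1 ≤ Q)
    (hKQ : ∀ z ∈ Metric.closedBall (2 : ℂ) (4 / 3), ‖K z‖ ≤ Q) (hβ : 9 / 10 ≤ β) (hβ1 : β < 1)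
    (hKβ : 0 ≤ (K β).re) : estermannBound β Q ≤ ‖K 1‖ := by
  have hG : Differentiable ℂ (dslope K 1) := by
    rw [← differentiableOn_univ, differentiableOn_dslope univ_mem]
    exact hK.differentiableOn
  have hsplit (s : ℂ) (hs : 1 < s.re) : LSeries a s = dslope K 1 s + K 1 / (s - 1) := by
    have hs1 : s ≠ 1 := by rintro rfl; simp at hs
    rw [haK s hs, dslope_of_ne _ hs1, slope_def_field, ← add_div, sub_add_cancel]
  refine estermannBound_le_of_hasSum hQ hβ hβ1 (hasSum_reflectedTaylorCoeff hG β)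
    (abs_reflectedTaylorCoeff_le hG fun z ↦ norm_dslope_one_le hKQ) (fun n ↦ ?_) ?_ ?_
  · have hcoeff := reflectedTaylorCoeff_LSeries_nonneg ha hab n
    rw [reflectedTaylorCoeff_add_div hG hsplit] at hcoeff
    linarith [re_le_norm (K 1)]
  · have htwo := one_le_LSeries_two_re ha ha1 hab
    rw [hsplit 2 (by simp), show (2 : ℂ) - 1 = 1 by norm_num, div_one, add_re] at htwo
    simp only [reflectedTaylorCoeff, Nat.factorial_zero, Nat.cast_one, inv_one, pow_zero, one_mul,
      iteratedDeriv_zero]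
    linarith [re_le_norm (K 1)]
  · have hβne : (β : ℂ) ≠ 1 := mod_cast hβ1.ne
    have hcast : (β : ℂ) - 1 = (((β - 1 : ℝ)) : ℂ) := by push_cast; rfl
    rw [dslope_of_ne _ hβne, slope_def_field, hcast, div_ofReal_re, sub_re,
      show β - 1 = -(1 - β) by ring, div_neg, ← neg_div]
    gcongr
    linarith [re_le_norm (K 1)]

end Estermann

section LogDerivative

open scoped ComplexOrder

/-- In the ring of Dirichlet series, `-w` is the logarithmic derivative of `a`. -/
def HasLogDeriv (a w : ArithmeticFunction ℂ) : Prop :=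
  ∀ n : ℕ, (Real.log n : ℂ) * a n = (a * w) n

variable {a b v w : ArithmeticFunction ℂ}

theorem HasLogDeriv.mul (ha : HasLogDeriv a v) (hb : HasLogDeriv b w) :
    HasLogDeriv (a * b) (v + w) := by
  intro n
  have hleibniz : (Real.log n : ℂ) * (a * b) n =
      ∑ x ∈ n.divisorsAntidiagonal, ((a * v) x.1 * b x.2 + a x.1 * (b * w) x.2) := by
    rw [ArithmeticFunction.mul_apply, Finset.mul_sum]
    refine Finset.sum_congr rfl fun x hx ↦ ?_
    obtain ⟨rfl, hn⟩ := Nat.mem_divisorsAntidiagonal.1 hx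
    obtain ⟨h1, h2⟩ := mul_ne_zero_iff.1 hn
    rw [← ha, ← hb, Nat.cast_mul, Real.log_mul (mod_cast h1) (mod_cast h2), ofReal_add]
    ring
  rw [hleibniz, Finset.sum_add_distrib, ← ArithmeticFunction.mul_apply,
    ← ArithmeticFunction.mul_apply, ← ArithmeticFunction.add_apply]
  congr 1
  ring

theorem HasLogDeriv.nonneg (h : HasLogDeriv a w) (ha1 : a 1 = 1) (hw : ∀ n, 0 ≤ w n)
    (hw1 : w 1 = 0) (n : ℕ) : 0 ≤ a n := by
  induction n using Nat.strong_induction_on with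
  | _ n ih =>
    rcases n with _ | _ | n
    · simp
    · simp [ha1]
    · set m := n + 1 + 1
      have hlog : 0 < Real.log m := Real.log_pos (mod_cast (by lia : 1 < n + 1 + 1))
      have hsolve : a m = ((Real.log m)⁻¹ : ℝ) * (a * w) m := by
        rw [← h m, ← mul_assoc, ← ofReal_mul, inv_mul_cancel₀ hlog.ne', ofReal_one, one_mul]
      rw [hsolve, ArithmeticFunction.mul_apply]
      refine mul_nonneg (mod_cast (inv_pos.2 hlog).le) ?_
      refine Finset.sum_nonneg fun x hx ↦ ?_
      rcases eq_or_ne x.2 1 with hx2 | hx2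
      · rw [hx2, hw1, mul_zero]
      · obtain ⟨hxm, hm⟩ := Nat.mem_divisorsAntidiagonal.1 hx
        obtain ⟨h1, h2⟩ := mul_ne_zero_iff.1 (hxm.trans_ne hm)
        exact mul_nonneg (ih _ (hxm ▸ lt_mul_of_one_lt_right (by lia) (by lia))) (hw _)

end LogDerivative

section CharacterSeries

open DirichletCharacter
open scoped ComplexOrder ArithmeticFunction.vonMangoldt

variable {q : ℕ} (χ : DirichletCharacter ℂ q)

/-- A Dirichlet character as an arithmetic function, with value `0` at `0`. -/
noncomputable def charArith : ArithmeticFunction ℂ := toArithmeticFunction (χ ·)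

/-- The von Mangoldt function twisted by a Dirichlet character. -/
noncomputable def twistedVonMangoldt : ArithmeticFunction ℂ :=
  toArithmeticFunction (fun n ↦ χ n * Λ n)

theorem twistedVonMangoldt_apply (n : ℕ) : twistedVonMangoldt χ n = χ n * Λ n := by
  rcases eq_or_ne n 0 with rfl | hn <;> simp [twistedVonMangoldt, toArithmeticFunction, *]

theorem charArith_apply {n : ℕ} (hn : n ≠ 0) : charArith χ n = χ n :=
  (apply_eq_toArithmeticFunction_apply χ hn).symm

theorem charArith_apply_one : charArith χ 1 = 1 := by simp [charArith_apply χ one_ne_zero]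

theorem hasLogDeriv_charArith : HasLogDeriv (charArith χ) (twistedVonMangoldt χ) := by
  intro n
  rcases eq_or_ne n 0 with rfl | hn
  · simp
  have h := congrFun (convolution_twist_vonMangoldt χ) n
  rw [mul_comm (charArith χ), charArith_apply χ hn, natCast_log, mul_comm]
  exact h.symm

theorem LSeriesSummable_charArith {s : ℂ} (hs : 1 < s.re) : LSeriesSummable (charArith χ) s :=
  (LSeriesSummable_congr s fun h ↦ charArith_apply χ h).2 (LSeriesSummable_of_one_lt_re χ hs)

theorem LSeries_charArith [NeZero q] {s : ℂ} (hs : 1 < s.re) :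
    LSeries (charArith χ) s = LFunction χ s := by
  rw [LFunction_eq_LSeries χ hs]
  exact LSeries_congr (fun h ↦ charArith_apply χ h) s

theorem zetaMul_eq : χ.zetaMul = charArith (1 : DirichletCharacter ℂ 1) * charArith χ := by
  have hzeta : (ArithmeticFunction.zeta : ArithmeticFunction ℂ) =
      charArith (1 : DirichletCharacter ℂ 1) := by
    ext n
    rcases eq_or_ne n 0 with rfl | hn
    · simp
    · rw [charArith_apply _ hn, MulChar.one_apply (isUnit_of_subsingleton _)]
      simp [hn]
  rw [zetaMul, hzeta]
  rfl

theorem abscissaOfAbsConv_le_one {a : ℕ → ℂ} (h : ∀ s : ℂ, 1 < s.re → LSeriesSummable a s) :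
    LSeries.abscissaOfAbsConv a ≤ 1 :=
  LSeries.abscissaOfAbsConv_le_of_forall_lt_LSeriesSummable (x := 1)
    fun y hy ↦ h _ (by simpa using hy)

end CharacterSeries

section QuadraticCharacters

open DirichletCharacter
open scoped ComplexOrder

variable {q : ℕ} {χ : DirichletCharacter ℂ q}

theorem dirichletPoly_im_eq_zero (hχ : χ ^ 2 = 1) (X : ℕ) (x : ℝ) :
    (dirichletPoly (fun n ↦ χ n) X x).im = 0 := by
  rw [dirichletPoly, im_sum]
  refine Finset.sum_eq_zero fun n _ ↦ ?_
  have hreal : (n : ℂ) ^ (-(x : ℂ)) = (((n : ℝ) ^ (-x) : ℝ) : ℂ) := by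
    rw [ofReal_cpow n.cast_nonneg]
    simp
  rw [hreal, im_mul_ofReal]
  rcases MulChar.isQuadratic_iff_sq_eq_one.2 hχ n with h | h | h <;> simp [h]

variable [NeZero q]

theorem LFunction_im_eq_zero (h1 : χ ≠ 1) (hχ : χ ^ 2 = 1) {x : ℝ} (hx : 0 < x) :
    (LFunction χ x).im = 0 := by
  have hlim := (boundedIntervalSums_of_ne_one h1).tendsto_dirichletPoly
    (differentiable_LFunction h1).differentiableOn (fun _ hz ↦ LFunction_eq_LSeries χ hz)
    (s := x) (by simpa using hx)
  refine tendsto_nhds_unique ((continuous_im.tendsto _).comp hlim) ?_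
  simp only [Function.comp_def, dirichletPoly_im_eq_zero hχ, tendsto_const_nhds]

theorem norm_LFunction_le_of_mem_closedBall (h1 : χ ≠ 1) {z : ℂ}
    (hz : z ∈ Metric.closedBall (2 : ℂ) (4 / 3)) : ‖LFunction χ z‖ ≤ 15 * q := by
  rw [mem_closedBall_iff_norm] at hz
  have hre : 2 / 3 ≤ z.re := by
    have := (abs_le.1 ((abs_re_le_norm (z - 2)).trans hz)).1
    rw [sub_re, re_ofNat] at this
    linarith
  have hnorm : ‖z‖ ≤ 10 / 3 := by
    have := norm_sub_norm_le z 2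
    rw [RCLike.norm_ofNat] at this
    linarith
  have hratio : ‖z‖ / z.re ≤ 15 := by
    rw [div_le_iff₀ (by linarith)]
    linarith
  have h := norm_LFunction_sub_dirichletPoly_le h1 (s := z) (by linarith) 0
  simp only [dirichletPoly, Finset.Ioc_self, Finset.sum_empty, sub_zero, zero_add, Nat.cast_one,
    Real.one_rpow, mul_one] at h
  exact h.trans ((mul_le_mul_of_nonneg_left hratio q.cast_nonneg).trans_eq (mul_comm _ _))

theorem LSeries_zetaMul {s : ℂ} (hs : 1 < s.re) :
    LSeries χ.zetaMul s = riemannZeta s * LFunction χ s := by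
  rw [zetaMul_eq, ArithmeticFunction.LSeries_mul' (LSeriesSummable_charArith _ hs)
    (LSeriesSummable_charArith χ hs), LSeries_charArith _ hs, LSeries_charArith χ hs,
    LFunction_modOne_eq]

theorem LFunction_two_re_pos (h1 : χ ≠ 1) (hχ : χ ^ 2 = 1) : 0 < (LFunction χ (2 : ℝ)).re := by
  have h := one_le_LSeries_two_re (zetaMul_nonneg hχ) (isMultiplicative_zetaMul χ).map_one
    (abscissaOfAbsConv_le_one fun s hs ↦ LSeriesSummable_zetaMul χ hs)
  have heq : LSeries χ.zetaMul 2 = riemannZeta (2 : ℝ) * LFunction χ (2 : ℝ) := by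
    rw [LSeries_zetaMul (by simp), ofReal_ofNat]
  rw [heq, mul_re, LFunction_im_eq_zero h1 hχ two_pos, mul_zero, sub_zero] at h
  exact pos_of_mul_pos_right (one_pos.trans_le h)
    (riemannZeta_re_pos_of_one_lt one_lt_two).le

theorem exists_LFunction_eq_zero (h1 : χ ≠ 1) (hχ : χ ^ 2 = 1) {β : ℝ} (hβ : 0 < β)
    (hβ1 : β < 1) (hL : (LFunction χ β).re < 0) : ∃ β₁, β < β₁ ∧ β₁ < 1 ∧ LFunction χ β₁ = 0 := by
  have hcont : Continuous fun x : ℝ ↦ (LFunction χ x).re := continuous_re.comp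
    ((differentiable_LFunction h1).continuous.comp continuous_ofReal)
  obtain ⟨x, hx, hx0⟩ := intermediate_value_Icc (hβ1.le.trans one_le_two) hcont.continuousOn
    (show (0 : ℝ) ∈ Set.Icc _ _ from ⟨hL.le, (LFunction_two_re_pos h1 hχ).le⟩)
  have hzero : LFunction χ x = 0 :=
    Complex.ext hx0 (LFunction_im_eq_zero h1 hχ (hβ.trans_le hx.1))
  refine ⟨x, lt_of_le_of_ne hx.1 ?_, ?_, hzero⟩
  · rintro rfl
    exact hL.ne hx0
  · by_contra! hx1
    exact LFunction_ne_zero_of_one_le_re χ (Or.inl h1) (by simpa using hx1) hzero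

end QuadraticCharacters

section Siegel

open DirichletCharacter
open scoped ComplexOrder

theorem exists_norm_regularizedZeta_le :
    ∃ C : ℝ, 1 ≤ C ∧ ∀ z ∈ Metric.closedBall (2 : ℂ) (4 / 3), ‖regularizedZeta z‖ ≤ C := by
  obtain ⟨C, hC⟩ := (isCompact_closedBall (2 : ℂ) (4 / 3)).exists_bound_of_continuousOn
    differentiable_regularizedZeta.continuous.continuousOn
  exact ⟨max 1 C, le_max_left _ _, fun z hz ↦ (hC z hz).trans (le_max_right _ _)⟩

theorem one_le_fifteen_mul_natCast (q : ℕ) [NeZero q] : 1 ≤ 15 * (q : ℝ) := by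
  have : (1 : ℝ) ≤ q := mod_cast NeZero.one_le
  linarith

variable {q : ℕ} [NeZero q] {χ : DirichletCharacter ℂ q} {C β : ℝ}

theorem estermannBound_le_norm_LFunction_one (h1 : χ ≠ 1) (hχ : χ ^ 2 = 1) (hC1 : 1 ≤ C)
    (hC : ∀ z ∈ Metric.closedBall (2 : ℂ) (4 / 3), ‖regularizedZeta z‖ ≤ C) (hβ : 9 / 10 ≤ β)
    (hβ1 : β < 1) (hZ : 0 ≤ (regularizedZeta β).re) (hL : 0 ≤ (LFunction χ β).re) :
    estermannBound β (C * (15 * q)) ≤ ‖LFunction χ 1‖ := by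
  have h := estermannBound_le_norm (a := χ.zetaMul) (K := fun s ↦ regularizedZeta s * LFunction χ s)
    (zetaMul_nonneg hχ) (isMultiplicative_zetaMul χ).map_one
    (abscissaOfAbsConv_le_one fun s hs ↦ LSeriesSummable_zetaMul χ hs)
    (differentiable_regularizedZeta.mul (differentiable_LFunction h1)) (fun s hs ↦ ?_)
    (one_le_mul_of_one_le_of_one_le hC1 (one_le_fifteen_mul_natCast q)) (fun z hz ↦ ?_) hβ hβ1 ?_
  · simpa only [regularizedZeta_one, one_mul] using h
  · rw [LSeries_zetaMul hs, riemannZeta_eq_regularizedZeta_div (by rintro rfl; simp at hs)]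
    ring
  · rw [norm_mul]
    exact mul_le_mul (hC z hz) (norm_LFunction_le_of_mem_closedBall h1 hz) (norm_nonneg _)
      (zero_le_one.trans hC1)
  · rw [mul_re, LFunction_im_eq_zero h1 hχ (by linarith), mul_zero, sub_zero]
    exact mul_nonneg hZ hL

variable {q₁ q₂ q₃ : ℕ} {χ₁ : DirichletCharacter ℂ q₁} {χ₂ : DirichletCharacter ℂ q₂}
  {χ₃ : DirichletCharacter ℂ q₃}

/-- The Dirichlet coefficients of `ζ(s) L(s, χ₁) L(s, χ₂) L(s, χ₃)`, the auxiliary product in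
Estermann's proof of Siegel's theorem, where `χ₃ = χ₁ χ₂`. -/
noncomputable def estermannCoeff (χ₁ : DirichletCharacter ℂ q₁) (χ₂ : DirichletCharacter ℂ q₂)
    (χ₃ : DirichletCharacter ℂ q₃) : ArithmeticFunction ℂ :=
  χ₁.zetaMul * charArith χ₂ * charArith χ₃

theorem estermannCoeff_apply_one : estermannCoeff χ₁ χ₂ χ₃ 1 = 1 := by
  simp [estermannCoeff, ArithmeticFunction.mul_apply, charArith_apply_one,
    (isMultiplicative_zetaMul χ₁).map_one]

theorem estermannCoeff_nonneg (h₁ : χ₁ ^ 2 = 1) (h₂ : χ₂ ^ 2 = 1)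
    (h : ∀ n : ℕ, χ₃ n = χ₁ n * χ₂ n) : 0 ≤ ⇑(estermannCoeff χ₁ χ₂ χ₃) := by
  have hlog := (((hasLogDeriv_charArith (1 : DirichletCharacter ℂ 1)).mul
    (hasLogDeriv_charArith χ₁)).mul (hasLogDeriv_charArith χ₂)).mul (hasLogDeriv_charArith χ₃)
  rw [← zetaMul_eq] at hlog
  refine hlog.nonneg estermannCoeff_apply_one (fun n ↦ ?_) ?_
  · have hfactor (x : ℂ) (hx : x = 0 ∨ x = 1 ∨ x = -1) : 0 ≤ 1 + x := by
      rcases hx with rfl | rfl | rfl <;> norm_num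
    have hΛ : (0 : ℂ) ≤ ArithmeticFunction.vonMangoldt n :=
      mod_cast ArithmeticFunction.vonMangoldt_nonneg
    calc (0 : ℂ) ≤ (1 + χ₁ n) * (1 + χ₂ n) * ArithmeticFunction.vonMangoldt n :=
          mul_nonneg (mul_nonneg (hfactor _ (MulChar.isQuadratic_iff_sq_eq_one.2 h₁ n))
            (hfactor _ (MulChar.isQuadratic_iff_sq_eq_one.2 h₂ n))) hΛ
      _ = _ := by
        simp only [ArithmeticFunction.add_apply, twistedVonMangoldt_apply, h,
          MulChar.one_apply (isUnit_of_subsingleton _)]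
        ring
  · simp [ArithmeticFunction.add_apply, twistedVonMangoldt_apply]

theorem LSeriesSummable_estermannCoeff {s : ℂ} (hs : 1 < s.re) :
    LSeriesSummable (estermannCoeff χ₁ χ₂ χ₃) s :=
  ArithmeticFunction.LSeriesSummable_mul (ArithmeticFunction.LSeriesSummable_mul
    (LSeriesSummable_zetaMul χ₁ hs) (LSeriesSummable_charArith χ₂ hs))
    (LSeriesSummable_charArith χ₃ hs)

theorem changeLevel_mul_changeLevel_natCast (χ₁ : DirichletCharacter ℂ q₁)
    (χ₂ : DirichletCharacter ℂ q₂) (n : ℕ) :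
    (changeLevel (q₁.dvd_mul_right q₂) χ₁ * changeLevel (q₂.dvd_mul_left q₁) χ₂) n =
      χ₁ n * χ₂ n := by
  by_cases hn : n.Coprime (q₁ * q₂)
  · obtain ⟨u, hu⟩ := (ZMod.isUnit_iff_coprime n (q₁ * q₂)).2 hn
    rw [MulChar.mul_apply, ← hu, changeLevel_eq_cast_of_dvd, changeLevel_eq_cast_of_dvd, hu,
      ZMod.cast_natCast (q₁.dvd_mul_right q₂), ZMod.cast_natCast (q₂.dvd_mul_left q₁)]
  · rw [MulChar.map_nonunit _ (by rwa [ZMod.isUnit_iff_coprime])]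
    rcases not_and_or.1 (mt Nat.coprime_mul_iff_right.2 hn) with h | h
    · rw [MulChar.map_nonunit χ₁ (by rwa [ZMod.isUnit_iff_coprime]), zero_mul]
    · rw [MulChar.map_nonunit χ₂ (by rwa [ZMod.isUnit_iff_coprime]), mul_zero]

theorem changeLevel_mul_changeLevel_ne_one [NeZero q₁] (h : q₁.Coprime q₂) (h1 : χ₁ ≠ 1)
    (χ₂ : DirichletCharacter ℂ q₂) :
    changeLevel (q₁.dvd_mul_right q₂) χ₁ * changeLevel (q₂.dvd_mul_left q₁) χ₂ ≠ 1 := by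
  intro hmul
  have hfactors := factorsThrough_gcd χ₁ χ₂⁻¹
    ((mul_eq_one_iff_eq_inv.1 hmul).trans (map_inv _ _).symm)
  rw [h.gcd_eq_one] at hfactors
  exact h1 ((factorsThrough_one_iff χ₁).1 hfactors)

variable [NeZero q₁] [NeZero q₂] [NeZero q₃]

theorem LSeries_estermannCoeff {s : ℂ} (hs : 1 < s.re) : LSeries (estermannCoeff χ₁ χ₂ χ₃) s =
    riemannZeta s * LFunction χ₁ s * LFunction χ₂ s * LFunction χ₃ s := by
  rw [estermannCoeff, ArithmeticFunction.LSeries_mul' (ArithmeticFunction.LSeriesSummable_mul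
    (LSeriesSummable_zetaMul χ₁ hs) (LSeriesSummable_charArith χ₂ hs))
    (LSeriesSummable_charArith χ₃ hs), ArithmeticFunction.LSeries_mul'
    (LSeriesSummable_zetaMul χ₁ hs) (LSeriesSummable_charArith χ₂ hs), LSeries_zetaMul hs,
    LSeries_charArith χ₂ hs, LSeries_charArith χ₃ hs]

theorem estermannBound_le_norm_LFunction_one_mul (h1 : χ₁ ≠ 1) (h2 : χ₂ ≠ 1) (h3 : χ₃ ≠ 1)
    (hχ₁ : χ₁ ^ 2 = 1) (hχ₂ : χ₂ ^ 2 = 1) (hχ₃ : ∀ n : ℕ, χ₃ n = χ₁ n * χ₂ n) (hC1 : 1 ≤ C)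
    (hC : ∀ z ∈ Metric.closedBall (2 : ℂ) (4 / 3), ‖regularizedZeta z‖ ≤ C) (hβ : 9 / 10 ≤ β)
    (hβ1 : β < 1) (hL : LFunction χ₁ β = 0) :
    estermannBound β (C * (15 * q₁) * (15 * q₂) * (15 * q₃)) ≤
      ‖LFunction χ₁ 1‖ * ‖LFunction χ₂ 1‖ * ‖LFunction χ₃ 1‖ := by
  have hq₁ := one_le_fifteen_mul_natCast q₁
  have hq₂ := one_le_fifteen_mul_natCast q₂
  have hq₃ := one_le_fifteen_mul_natCast q₃
  have h := estermannBound_le_norm (a := estermannCoeff χ₁ χ₂ χ₃)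
    (K := fun s ↦ regularizedZeta s * LFunction χ₁ s * LFunction χ₂ s * LFunction χ₃ s)
    (estermannCoeff_nonneg hχ₁ hχ₂ hχ₃) estermannCoeff_apply_one
    (abscissaOfAbsConv_le_one fun s hs ↦ LSeriesSummable_estermannCoeff hs)
    (((differentiable_regularizedZeta.mul (differentiable_LFunction h1)).mul
      (differentiable_LFunction h2)).mul (differentiable_LFunction h3)) (fun s hs ↦ ?_)
    (one_le_mul_of_one_le_of_one_le (one_le_mul_of_one_le_of_one_le
      (one_le_mul_of_one_le_of_one_le hC1 hq₁) hq₂) hq₃) (fun z hz ↦ ?_) hβ hβ1 (by simp [hL])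
  · simpa only [regularizedZeta_one, one_mul, norm_mul] using h
  · rw [LSeries_estermannCoeff hs, riemannZeta_eq_regularizedZeta_div (by rintro rfl; simp at hs)]
    ring
  · have hz₀ := hC z hz
    have hz₁ := norm_LFunction_le_of_mem_closedBall h1 hz
    have hz₂ := norm_LFunction_le_of_mem_closedBall h2 hz
    have hz₃ := norm_LFunction_le_of_mem_closedBall h3 hz
    simp only [norm_mul]
    gcongr

theorem exists_forall_le_norm_LFunction_one (q : ℕ) [NeZero q] :
    ∃ c : ℝ, 0 < c ∧ ∀ χ : DirichletCharacter ℂ q, χ ≠ 1 → c ≤ ‖LFunction χ 1‖ := by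
  rcases Set.eq_empty_or_nonempty {χ : DirichletCharacter ℂ q | χ ≠ 1} with hempty | hne
  · exact ⟨1, one_pos, fun χ hχ ↦ absurd (hempty ▸ hχ : χ ∈ (∅ : Set _)) (Set.notMem_empty χ)⟩
  · obtain ⟨χ, hχ, hmin⟩ := Set.exists_min_image _ (fun χ ↦ ‖LFunction χ 1‖) (Set.toFinite _) hne
    exact ⟨_, norm_pos_iff.2 (LFunction_apply_one_ne_zero hχ), hmin⟩

theorem exists_one_add_log_pow_le (k : ℕ) {ε : ℝ} (hε : 0 < ε) :
    ∃ C : ℝ, 0 < C ∧ ∀ x : ℝ, 1 ≤ x → (1 + Real.log x) ^ k ≤ C * x ^ ε := by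
  set δ := ε / (k + 1)
  have hδ : 0 < δ := by positivity
  have hkδ : δ * k ≤ ε := by
    rw [div_mul_eq_mul_div, div_le_iff₀ (by positivity)]
    linarith
  refine ⟨(1 + 1 / δ) ^ k, by positivity, fun x hx ↦ ?_⟩
  have hlog : 1 + Real.log x ≤ (1 + 1 / δ) * x ^ δ := by
    have h1 := Real.log_le_rpow_div (zero_le_one.trans hx) hδ
    have h2 := Real.one_le_rpow hx hδ.le
    calc 1 + Real.log x ≤ x ^ δ + x ^ δ / δ := add_le_add h2 h1
      _ = _ := by ring
  calc (1 + Real.log x) ^ k ≤ ((1 + 1 / δ) * x ^ δ) ^ k :=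
        pow_le_pow_left₀ (by linarith [Real.log_nonneg hx]) hlog k
    _ = (1 + 1 / δ) ^ k * x ^ (δ * k) := by
      rw [mul_pow, ← Real.rpow_natCast (x ^ δ), ← Real.rpow_mul (zero_le_one.trans hx)]
    _ ≤ _ := by gcongr

theorem exists_regularizedZeta_re_nonneg {η : ℝ} (hη : 0 < η) :
    ∃ δ : ℝ, 0 < δ ∧ δ ≤ η ∧ 0 ≤ (regularizedZeta (1 - δ : ℝ)).re := by
  have hcont : Continuous fun x : ℝ ↦ (regularizedZeta (1 - x : ℝ)).re := by
    have := differentiable_regularizedZeta.continuous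
    fun_prop
  have hpos : ∀ᶠ x : ℝ in 𝓝 0, 0 < (regularizedZeta (1 - x : ℝ)).re :=
    hcont.continuousAt.eventually (lt_mem_nhds (by simp [regularizedZeta_one]))
  obtain ⟨δ, hδ, hδ0⟩ := ((hpos.filter_mono nhdsWithin_le_nhds).and
    (Ioc_mem_nhdsGT hη)).exists
  exact ⟨δ, hδ0.1, hδ0.2, hδ.le⟩

/-- Siegel's theorem when a quadratic character has a real zero close to `1`. -/
theorem exists_le_norm_LFunction_one_of_zero {ε : ℝ} (h1 : χ₁ ≠ 1) (hχ₁ : χ₁ ^ 2 = 1)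
    (hβ : 9 / 10 ≤ β) (hβ1 : β < 1) (hε : 24 * (1 - β) ≤ ε) (hL : LFunction χ₁ β = 0) :
    ∃ c : ℝ, 0 < c ∧ ∀ (q : ℕ) [NeZero q] (χ : DirichletCharacter ℂ q), q₁.Coprime q → χ ≠ 1 →
      χ ^ 2 = 1 → c * (q : ℝ) ^ (-ε) ≤ ‖LFunction χ 1‖ := by
  obtain ⟨C, hC1, hC⟩ := exists_norm_regularizedZeta_le
  have hε0 : 0 < ε / 2 := by linarith
  obtain ⟨D, hD, hlog⟩ := exists_one_add_log_pow_le 2 hε0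
  have hq₁ : (0 : ℝ) < q₁ := mod_cast NeZero.pos q₁
  set E := estermannBound β (C * (15 * q₁) * 15 * (15 * q₁))
  have hE : 0 < E := estermannBound_pos hβ1 (by positivity)
  set A := ‖LFunction χ₁ 1‖ * (24 * D * (q₁ : ℝ) ^ (ε / 2))
  have hA : 0 < A := by
    have := norm_pos_iff.2 (LFunction_apply_one_ne_zero h1)
    positivity
  refine ⟨E / A, div_pos hE hA, fun q _ χ hcop h2 hχ ↦ ?_⟩
  have hq : (1 : ℝ) ≤ q := mod_cast NeZero.one_le
  have hq0 : (0 : ℝ) < q := one_pos.trans_le hq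
  have h3 := changeLevel_mul_changeLevel_ne_one hcop h1 χ
  have hlower : E * (q : ℝ) ^ (-(ε / 2)) ≤ ‖LFunction χ₁ 1‖ * ‖LFunction χ 1‖ *
      ‖LFunction (changeLevel (q₁.dvd_mul_right q) χ₁ * changeLevel (q.dvd_mul_left q₁) χ) 1‖ := by
    refine le_trans ?_ (estermannBound_le_norm_LFunction_one_mul h1 h2 h3 hχ₁ hχ
      (changeLevel_mul_changeLevel_natCast χ₁ χ) hC1 hC hβ hβ1 hL)
    have hsplit : C * (15 * q₁) * (15 * q) * (15 * ((q₁ * q : ℕ) : ℝ)) =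
        C * (15 * q₁) * 15 * (15 * q₁) * (q : ℝ) ^ (2 : ℝ) := by
      rw [Real.rpow_two]
      push_cast
      ring
    rw [hsplit, estermannBound_mul (by positivity) (by positivity), ← Real.rpow_mul hq0.le]
    exact mul_le_mul_of_nonneg_left
      (Real.rpow_le_rpow_of_exponent_le hq (by linarith)) hE.le
  have hupper := norm_LFunction_le h3 (s := 1) (by simp)
  have hlog := hlog ((q₁ * q : ℕ) : ℝ) (mod_cast NeZero.one_le)
  rw [Nat.cast_mul, Real.mul_rpow hq₁.le hq0.le] at hlog
  have hprod : E * (q : ℝ) ^ (-(ε / 2)) ≤ A * ‖LFunction χ 1‖ * (q : ℝ) ^ (ε / 2) := by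
    refine hlower.trans ((mul_le_mul_of_nonneg_left (hupper.trans ?_) (by positivity)).trans_eq
      (?_ : _ * (24 * (D * ((q₁ : ℝ) ^ (ε / 2) * (q : ℝ) ^ (ε / 2)))) = _))
    · rw [norm_one, Nat.cast_mul]
      linarith
    · ring
  have hpow : (q : ℝ) ^ (-ε) * (q : ℝ) ^ (ε / 2) = (q : ℝ) ^ (-(ε / 2)) := by
    rw [← Real.rpow_add hq0]
    ring_nf
  rw [div_mul_eq_mul_div, div_le_iff₀ hA, mul_comm _ A]
  refine le_of_mul_le_mul_right ?_ (Real.rpow_pos_of_pos hq0 (ε / 2))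
  rwa [mul_assoc, hpow]

theorem exists_le_norm_LFunction_one_of_sq_eq_one {ε : ℝ} (hε : 0 < ε) :
    ∃ c : ℝ, 0 < c ∧ ∀ (p : ℕ) [Fact p.Prime] (χ : DirichletCharacter ℂ p), χ ≠ 1 → χ ^ 2 = 1 →
      c * (p : ℝ) ^ (-ε) ≤ ‖LFunction χ 1‖ := by
  obtain ⟨C, hC1, hC⟩ := exists_norm_regularizedZeta_le
  obtain ⟨δ, hδ0, hδ, hζ⟩ := exists_regularizedZeta_re_nonneg (η := min (1 / 10) (ε / 24))
    (by positivity)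
  obtain ⟨hδ1, hδε⟩ := le_min_iff.1 hδ
  by_cases hzero : ∃ (q₁ : ℕ) (_ : Fact q₁.Prime) (χ₁ : DirichletCharacter ℂ q₁) (β : ℝ),
    χ₁ ≠ 1 ∧ χ₁ ^ 2 = 1 ∧ 1 - δ < β ∧ β < 1 ∧ LFunction χ₁ β = 0
  · obtain ⟨q₁, hq₁, χ₁, β, h1, hχ₁, hβ, hβ1, hL⟩ := hzero
    obtain ⟨c₁, hc₁, hmin⟩ := exists_forall_le_norm_LFunction_one q₁
    obtain ⟨c₂, hc₂, hcop⟩ := exists_le_norm_LFunction_one_of_zero (ε := ε) h1 hχ₁ (by linarith)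
      hβ1 (by linarith) hL
    refine ⟨min c₁ c₂, lt_min hc₁ hc₂, fun p hp χ h2 hχ ↦ ?_⟩
    have hpow : (p : ℝ) ^ (-ε) ≤ 1 :=
      Real.rpow_le_one_of_one_le_of_nonpos (mod_cast hp.out.one_le) (by linarith)
    rcases eq_or_ne q₁ p with rfl | hne
    · refine le_trans ?_ (hmin χ h2)
      exact (mul_le_of_le_one_right (lt_min hc₁ hc₂).le hpow).trans (min_le_left _ _)
    · refine le_trans ?_ (hcop p χ ((Nat.coprime_primes hq₁.out hp.out).2 hne) h2 hχ)
      gcongr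
      exact min_le_right _ _
  · have hpos : 0 < estermannBound (1 - δ) (C * 15) :=
      estermannBound_pos (by linarith) (by positivity)
    refine ⟨_, hpos, fun p hp χ h1 hχ ↦ ?_⟩
    have hp1 : (1 : ℝ) ≤ p := mod_cast hp.out.one_le
    have hre : 0 ≤ (LFunction χ (1 - δ : ℝ)).re := by
      by_contra! hneg
      obtain ⟨β, hβ, hβ1, hL⟩ :=
        exists_LFunction_eq_zero h1 hχ (by linarith) (by linarith) hneg
      exact hzero ⟨p, hp, χ, β, h1, hχ, hβ, hβ1, hL⟩
    refine le_trans ?_ (estermannBound_le_norm_LFunction_one h1 hχ hC1 hC (β := 1 - δ)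
      (by linarith) (by linarith) hζ hre)
    rw [← mul_assoc,
      estermannBound_mul (Q := C * 15) (R := p) (by positivity) (by positivity)]
    have hpow : (p : ℝ) ^ (-ε) ≤ (p : ℝ) ^ (-(6 * (1 - (1 - δ)))) :=
      Real.rpow_le_rpow_of_exponent_le hp1 (by linarith)
    exact mul_le_mul_of_nonneg_left hpow hpos.le

theorem exists_le_norm_LFunction_one_add_mul_I (t : ℝ) {ε : ℝ} (hε : 0 < ε) :
    ∃ c : ℝ, 0 < c ∧ ∀ (p : ℕ) [Fact p.Prime] (χ : DirichletCharacter ℂ p), χ ≠ 1 →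
      c * (p : ℝ) ^ (-ε) ≤ ‖LFunction χ (1 + t * I)‖ := by
  obtain ⟨c₁, hc₁, hquad⟩ := exists_le_norm_LFunction_one_of_sq_eq_one hε
  obtain ⟨c₂, hc₂, hnonexc⟩ := exists_le_norm_LFunction_of_nonexceptional t
  obtain ⟨C, hC, hlog⟩ := exists_one_add_log_pow_le 14 hε
  refine ⟨min c₁ (c₂ / C), by positivity, fun p hp χ h1 ↦ ?_⟩
  have hp1 : (1 : ℝ) ≤ p := mod_cast hp.out.one_le
  have hp0 : (0 : ℝ) < p := one_pos.trans_le hp1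
  by_cases h : t ≠ 0 ∨ χ ^ 2 ≠ 1
  · refine le_trans ?_ (hnonexc p χ h1 h)
    have := Real.log_nonneg hp1
    calc min c₁ (c₂ / C) * (p : ℝ) ^ (-ε) ≤ c₂ / C * (p : ℝ) ^ (-ε) := by
          gcongr
          exact min_le_right _ _
      _ = c₂ / (C * (p : ℝ) ^ ε) := by rw [Real.rpow_neg hp0.le, ← div_eq_mul_inv, div_div]
      _ ≤ _ := by
        gcongr
        exact hlog p hp1
  · push Not at h
    rw [h.1, ofReal_zero, zero_mul, add_zero]
    refine le_trans ?_ (hquad p χ h1 h.2)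
    gcongr
    exact min_le_left _ _

end Siegel

section Subpoly

/-- The estimate `f i ≪_ε (N i) ^ ε` for every `ε > 0`, uniformly in the index `i`. -/
def IsSubpoly {ι : Type*} (N : ι → ℕ) (f : ι → ℝ) : Prop :=
  ∀ ε : ℝ, 0 < ε → f =O[⊤] fun i ↦ (N i : ℝ) ^ ε

namespace IsSubpoly

variable {ι : Type*} {N M : ι → ℕ} {f g : ι → ℝ}

theorem exists_le (hf : IsSubpoly N f) {ε : ℝ} (hε : 0 < ε) :
    ∃ C, 0 < C ∧ ∀ i, |f i| ≤ C * (N i : ℝ) ^ ε := by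
  obtain ⟨C, hC, h⟩ := (hf ε hε).exists_pos
  refine ⟨C, hC, fun i ↦ ?_⟩
  simpa [Real.abs_rpow_of_nonneg] using (Asymptotics.isBigOWith_top.1 h) i

theorem of_exists_le (h : ∀ ε : ℝ, 0 < ε → ∃ C, ∀ i, |f i| ≤ C * (N i : ℝ) ^ ε) :
    IsSubpoly N f := fun ε hε ↦ by
  obtain ⟨C, hC⟩ := h ε hε
  refine Asymptotics.isBigO_top.2 ⟨C, fun i ↦ ?_⟩
  simpa [Real.abs_rpow_of_nonneg] using hC i

theorem mono (hg : IsSubpoly N g) (h : ∀ i, |f i| ≤ g i) : IsSubpoly N f := fun ε hε ↦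
  (Asymptotics.isBigO_of_le _ fun i ↦ (h i).trans (le_abs_self _)).trans (hg ε hε)

theorem comp {κ : Type*} (hf : IsSubpoly N f) (φ : κ → ι) : IsSubpoly (N ∘ φ) (f ∘ φ) :=
  fun ε hε ↦ (hf ε hε).comp_tendsto tendsto_top

theorem add (hf : IsSubpoly N f) (hg : IsSubpoly N g) : IsSubpoly N fun i ↦ f i + g i :=
  fun ε hε ↦ (hf ε hε).add (hg ε hε)

theorem mul (hf : IsSubpoly N f) (hg : IsSubpoly N g) : IsSubpoly N fun i ↦ f i * g i := by
  intro ε hε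
  have hsplit (i : ι) : (N i : ℝ) ^ ε = (N i : ℝ) ^ (ε / 2) * (N i : ℝ) ^ (ε / 2) := by
    rw [← Real.rpow_add_of_nonneg (Nat.cast_nonneg _) (by positivity) (by positivity),
      add_halves]
  simp_rw [hsplit]
  exact (hf _ (half_pos hε)).mul (hg _ (half_pos hε))

theorem const (hN : ∀ i, N i ≠ 0) (c : ℝ) : IsSubpoly N fun _ : ι ↦ c :=
  of_exists_le fun _ hε ↦ ⟨|c|, fun i ↦ le_mul_of_one_le_right (abs_nonneg c)
    (Real.one_le_rpow (mod_cast Nat.one_le_iff_ne_zero.2 (hN i)) hε.le)⟩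

theorem pow (hN : ∀ i, N i ≠ 0) (hf : IsSubpoly N f) (k : ℕ) : IsSubpoly N fun i ↦ f i ^ k := by
  induction k with
  | zero => simpa only [pow_zero] using const hN 1
  | succ k ih => simpa only [pow_succ] using ih.mul hf

theorem log (N : ι → ℕ) : IsSubpoly N fun i ↦ Real.log (N i) :=
  of_exists_le fun ε hε ↦ ⟨ε⁻¹, fun i ↦ by
    rw [abs_of_nonneg (Real.log_natCast_nonneg _), ← div_eq_inv_mul]
    exact Real.log_natCast_le_rpow_div _ hε⟩

theorem of_le_pow (hf : IsSubpoly M f) {j : ℕ} (hj : j ≠ 0) (hM : ∀ i, M i ≤ N i ^ j) :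
    IsSubpoly N f := by
  have hj' : (0 : ℝ) < j := by positivity
  refine of_exists_le fun ε hε ↦ ?_
  obtain ⟨C, hC, h⟩ := hf.exists_le (div_pos hε hj')
  refine ⟨C, fun i ↦ (h i).trans ?_⟩
  calc C * (M i : ℝ) ^ (ε / j) ≤ C * ((N i : ℝ) ^ j) ^ (ε / j) := by
        gcongr
        exact_mod_cast hM i
    _ = C * (N i : ℝ) ^ ε := by
        rw [← Real.rpow_natCast, ← Real.rpow_mul (Nat.cast_nonneg _), mul_div_cancel₀ _ hj'.ne']

theorem sup' {F : ℕ → ℝ} (hF : IsSubpoly id F) :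
    IsSubpoly id fun X ↦ (Finset.range (X + 1)).sup' (by simp) fun n ↦ |F n| := by
  refine of_exists_le fun ε hε ↦ ?_
  obtain ⟨C, hC, h⟩ := hF.exists_le hε
  refine ⟨C, fun X ↦ ?_⟩
  rw [abs_of_nonneg ((abs_nonneg (F 0)).trans
    (Finset.le_sup' (fun n ↦ |F n|) (Finset.mem_range.2 X.succ_pos)))]
  refine Finset.sup'_le _ _ fun n hn ↦ (h n).trans ?_
  have hnX : n ≤ X := Nat.lt_succ_iff.1 (Finset.mem_range.1 hn)
  gcongr
  exact hnX

end IsSubpoly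

end Subpoly

section Divisors

theorem add_one_le_pow_rpow {ε x : ℝ} (hε : 0 < ε) (hx : 2 ≤ x) (a : ℕ) :
    (a : ℝ) + 1 ≤ max 1 (1 / (ε * Real.log 2)) * (x ^ a) ^ ε := by
  have hlog : 0 < ε * Real.log 2 := mul_pos hε (Real.log_pos one_lt_two)
  set M := max 1 (1 / (ε * Real.log 2))
  have hM : 1 ≤ M * (ε * Real.log 2) := (div_le_iff₀ hlog).1 (le_max_right _ _)
  have hexp : a * (ε * Real.log 2) + 1 ≤ (x ^ a) ^ ε :=
    calc a * (ε * Real.log 2) + 1 ≤ Real.exp (a * (ε * Real.log 2)) := Real.add_one_le_exp _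
      _ = ((2 : ℝ) ^ a) ^ ε := by
        rw [Real.rpow_def_of_pos (by positivity), Real.log_pow]
        ring_nf
      _ ≤ (x ^ a) ^ ε := by gcongr
  calc (a : ℝ) + 1 ≤ a * (M * (ε * Real.log 2)) + M :=
        add_le_add (le_mul_of_one_le_right (by positivity) hM) (le_max_left _ _)
    _ = M * (a * (ε * Real.log 2) + 1) := by ring
    _ ≤ M * (x ^ a) ^ ε := by gcongr

theorem add_one_le_pow_rpow_of_two_le_rpow {ε x : ℝ} (hx0 : 0 ≤ x) (hx : 2 ≤ x ^ ε) (a : ℕ) :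
    (a : ℝ) + 1 ≤ (x ^ a) ^ ε := by
  rw [← Real.rpow_natCast, ← Real.rpow_mul hx0, mul_comm, Real.rpow_mul hx0, Real.rpow_natCast]
  calc (a : ℝ) + 1 ≤ 2 ^ a := mod_cast Nat.lt_two_pow_self
    _ ≤ (x ^ ε) ^ a := by gcongr

theorem natCast_rpow_eq_prod_primeFactors {n : ℕ} (hn : n ≠ 0) (ε : ℝ) :
    (n : ℝ) ^ ε = ∏ p ∈ n.primeFactors, ((p : ℝ) ^ n.factorization p) ^ ε := by
  rw [Real.finsetProd_rpow _ _ fun p _ ↦ by positivity]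
  congr 1
  exact_mod_cast (Nat.prod_factorization_pow_eq_self hn).symm

theorem isSubpoly_card_divisors : IsSubpoly id fun n ↦ (n.divisors.card : ℝ) := by
  refine IsSubpoly.of_exists_le fun ε hε ↦ ?_
  set M := max 1 (1 / (ε * Real.log 2))
  have hM : 1 ≤ M := le_max_left _ _
  obtain ⟨B, hB⟩ := exists_nat_ge ((2 : ℝ) ^ (1 / ε))
  refine ⟨M ^ B, fun n ↦ ?_⟩
  rcases eq_or_ne n 0 with rfl | hn
  · simp [Real.zero_rpow hε.ne']
  have hfactor : ∀ p ∈ n.primeFactors, ((n.factorization p : ℝ) + 1) ≤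
      (if p < B then M else 1) * ((p : ℝ) ^ n.factorization p) ^ ε := by
    intro p hp
    split_ifs with h
    · exact add_one_le_pow_rpow hε (mod_cast (Nat.prime_of_mem_primeFactors hp).two_le) _
    · rw [one_mul]
      refine add_one_le_pow_rpow_of_two_le_rpow p.cast_nonneg ?_ _
      calc (2 : ℝ) = ((2 : ℝ) ^ (1 / ε)) ^ ε := by
            rw [← Real.rpow_mul zero_le_two, one_div_mul_cancel hε.ne', Real.rpow_one]
        _ ≤ (p : ℝ) ^ ε := by
            gcongr
            exact hB.trans (mod_cast not_lt.1 h)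
  have hsmall : ∏ p ∈ n.primeFactors, (if p < B then M else 1) ≤ M ^ B := by
    rw [← Finset.prod_filter, Finset.prod_const]
    refine pow_le_pow_right₀ hM ((Finset.card_le_card fun p hp ↦ ?_).trans
      (Finset.card_range B).le)
    exact Finset.mem_range.2 (Finset.mem_filter.1 hp).2
  rw [Nat.abs_cast, Nat.card_divisors hn, id, natCast_rpow_eq_prod_primeFactors hn]
  push_cast
  calc ∏ p ∈ n.primeFactors, ((n.factorization p : ℝ) + 1)
      ≤ ∏ p ∈ n.primeFactors, (if p < B then M else 1) * ((p : ℝ) ^ n.factorization p) ^ ε :=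
        Finset.prod_le_prod (fun p _ ↦ by positivity) hfactor
    _ = (∏ p ∈ n.primeFactors, if p < B then M else 1) * _ := Finset.prod_mul_distrib
    _ ≤ M ^ B * _ := by gcongr

end Divisors

section ArithmeticFunction

open ArithmeticFunction

variable {f f' g g' F G : ArithmeticFunction ℝ} {X Y : ℕ}

theorem le_of_mem_divisorsAntidiagonal {n : ℕ} {x : ℕ × ℕ} (hx : x ∈ n.divisorsAntidiagonal) :
    x.1 ≤ n ∧ x.2 ≤ n :=
  ⟨Nat.divisor_le (Nat.fst_mem_divisors_of_mem_antidiagonal hx),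
    Nat.divisor_le (Nat.snd_mem_divisors_of_mem_antidiagonal hx)⟩

theorem mul_apply_congr (hf : ∀ n ≤ X, f n = f' n) (hg : ∀ n ≤ X, g n = g' n) :
    ∀ n ≤ X, (f * g) n = (f' * g') n := by
  intro n hn
  rw [mul_apply, mul_apply]
  refine Finset.sum_congr rfl fun x hx ↦ ?_
  obtain ⟨h₁, h₂⟩ := le_of_mem_divisorsAntidiagonal hx
  rw [hf _ (h₁.trans hn), hg _ (h₂.trans hn)]

theorem pow_apply_congr (hf : ∀ n ≤ X, f n = f' n) (k : ℕ) :
    ∀ n ≤ X, (f ^ k) n = (f' ^ k) n := by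
  induction k with
  | zero => simp
  | succ k ih => simpa only [pow_succ] using mul_apply_congr ih hf

theorem mul_apply_eq_zero_of_lt (hf : ∀ n, X < n → f n = 0) (hg : ∀ n, Y < n → g n = 0) :
    ∀ n, X * Y < n → (f * g) n = 0 := by
  intro n hn
  rw [mul_apply]
  refine Finset.sum_eq_zero fun x hx ↦ ?_
  have hprod := (Nat.mem_divisorsAntidiagonal.1 hx).1
  rcases le_or_gt x.1 X with h₁ | h₁
  · have h₂ : Y < x.2 := by
      by_contra! h₂
      exact absurd (Nat.mul_le_mul h₁ h₂) (by omega)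
    rw [hg _ h₂, mul_zero]
  · rw [hf _ h₁, zero_mul]

theorem pow_apply_eq_zero_of_lt (hf : ∀ n, X < n → f n = 0) (k : ℕ) :
    ∀ n, X ^ k < n → (f ^ k) n = 0 := by
  induction k with
  | zero => exact fun n hn ↦ one_apply_ne (by simpa using hn.ne')
  | succ k ih => simpa only [pow_succ] using mul_apply_eq_zero_of_lt ih hf

theorem abs_mul_apply_le (hf : ∀ n, |f n| ≤ F n) (hg : ∀ n, |g n| ≤ G n) (n : ℕ) :
    |(f * g) n| ≤ (F * G) n := by
  rw [mul_apply, mul_apply]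
  refine (Finset.abs_sum_le_sum_abs _ _).trans (Finset.sum_le_sum fun x _ ↦ ?_)
  rw [abs_mul]
  exact mul_le_mul (hf _) (hg _) (abs_nonneg _) ((abs_nonneg _).trans (hf _))

theorem abs_pow_apply_le (hf : ∀ n, |f n| ≤ F n) (k : ℕ) (n : ℕ) : |(f ^ k) n| ≤ (F ^ k) n := by
  induction k generalizing n with
  | zero => simp only [pow_zero, one_apply]; split_ifs <;> simp
  | succ k ih => simpa only [pow_succ] using abs_mul_apply_le ih hf n

theorem isSubpoly_mul (hf : IsSubpoly id f) (hg : IsSubpoly id g) : IsSubpoly id ⇑(f * g) := by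
  refine ((isSubpoly_card_divisors.mul hf.sup').mul hg.sup').mono fun n ↦ ?_
  have hcard : n.divisors.card = n.divisorsAntidiagonal.card := by
    rw [← Nat.map_div_right_divisors, Finset.card_map]
  rw [mul_apply, hcard, mul_assoc, ← nsmul_eq_mul]
  refine (Finset.abs_sum_le_sum_abs _ _).trans (Finset.sum_le_card_nsmul _ _ _ fun x hx ↦ ?_)
  obtain ⟨h₁, h₂⟩ := le_of_mem_divisorsAntidiagonal hx
  rw [abs_mul]
  have hf₁ := Finset.le_sup' (fun m ↦ |f m|) (Finset.mem_range.2 (Nat.lt_succ_of_le h₁))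
  have hg₂ := Finset.le_sup' (fun m ↦ |g m|) (Finset.mem_range.2 (Nat.lt_succ_of_le h₂))
  exact mul_le_mul hf₁ hg₂ (abs_nonneg _) ((abs_nonneg _).trans hf₁)

theorem isSubpoly_one : IsSubpoly id ⇑(1 : ArithmeticFunction ℝ) :=
  IsSubpoly.of_exists_le fun ε _ ↦ ⟨1, fun n ↦ by
    rcases eq_or_ne n 1 with rfl | hn
    · simp
    · simp only [one_apply_ne hn, abs_zero, one_mul]
      positivity⟩

theorem isSubpoly_pow (hf : IsSubpoly id f) (k : ℕ) : IsSubpoly id ⇑(f ^ k) := by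
  induction k with
  | zero => simpa only [pow_zero] using isSubpoly_one
  | succ k ih => simpa only [pow_succ] using isSubpoly_mul ih hf

theorem isSubpoly_zeta : IsSubpoly id ⇑(zeta : ArithmeticFunction ℝ) :=
  IsSubpoly.of_exists_le fun ε hε ↦ ⟨1, fun n ↦ by
    rcases eq_or_ne n 0 with rfl | hn
    · simp [Real.zero_rpow hε.ne']
    · rw [natCoe_apply, zeta_apply_ne hn, one_mul, Nat.cast_one, abs_one]
      exact Real.one_le_rpow (mod_cast Nat.one_le_iff_ne_zero.2 hn) hε.le⟩

theorem isSubpoly_log : IsSubpoly id ⇑ArithmeticFunction.log := IsSubpoly.log id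

/-- The restriction of an arithmetic function to the integers `n ≤ X`. -/
def truncate (X : ℕ) (f : ArithmeticFunction ℝ) : ArithmeticFunction ℝ :=
  ⟨fun n ↦ if n ≤ X then f n else 0, by simp⟩

theorem truncate_apply_of_le {n : ℕ} (h : n ≤ X) : truncate X f n = f n := if_pos h

theorem truncate_apply_of_lt (n : ℕ) (h : X < n) : truncate X f n = 0 := if_neg h.not_ge

theorem abs_truncate_le (hf : ∀ n, |f n| ≤ F n) (n : ℕ) : |truncate X f n| ≤ F n := by
  rcases le_or_gt n X with h | h
  · rw [truncate_apply_of_le h]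
    exact hf n
  · rw [truncate_apply_of_lt n h, abs_zero]
    exact (abs_nonneg _).trans (hf n)

end ArithmeticFunction

section Twist

variable {q : ℕ} {χ : DirichletCharacter ℂ q} {f g : ArithmeticFunction ℝ} {X Y : ℕ}

/-- The twist `n ↦ χ n * f n` of a real arithmetic function by a Dirichlet character. -/
noncomputable def twist (χ : DirichletCharacter ℂ q) (f : ArithmeticFunction ℝ) (n : ℕ) : ℂ :=
  χ n * (f n : ℝ)

theorem norm_twist_le (χ : DirichletCharacter ℂ q) (f : ArithmeticFunction ℝ) (n : ℕ) :
    ‖twist χ f n‖ ≤ |f n| := by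
  rw [twist, norm_mul, norm_real]
  exact mul_le_of_le_one_left (norm_nonneg _) (χ.norm_le_one _)

theorem twist_eq_zero (hf : ∀ n, X < n → f n = 0) (n : ℕ) (hn : X < n) : twist χ f n = 0 := by
  rw [twist, hf n hn, ofReal_zero, mul_zero]

theorem twist_convolution_twist :
    LSeries.convolution (twist χ f) (twist χ g) = twist χ (f * g) := by
  ext n
  simp only [LSeries.convolution_def, twist, ArithmeticFunction.mul_apply, ofReal_sum, ofReal_mul,
    Finset.mul_sum]
  refine Finset.sum_congr rfl fun x hx ↦ ?_
  rw [← (Nat.mem_divisorsAntidiagonal.1 hx).1, Nat.cast_mul, map_mul]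
  ring

theorem lseriesHasSum_of_eq_zero {a : ℕ → ℂ} (ha : ∀ n, X < n → a n = 0) (s : ℂ) :
    LSeriesHasSum a s (dirichletPoly a X s) := by
  have hterm (n : ℕ) (hn : n ∈ Finset.Ioc 0 X) : a n * (n : ℂ) ^ (-s) = LSeries.term a s n := by
    rw [LSeries.term_of_ne_zero (Finset.mem_Ioc.1 hn).1.ne', cpow_neg, div_eq_mul_inv]
  rw [dirichletPoly, Finset.sum_congr rfl hterm]
  refine hasSum_sum_of_ne_finset_zero fun n hn ↦ ?_
  rcases n.eq_zero_or_pos with rfl | hn0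
  · exact LSeries.term_zero ..
  · have hXn : X < n := by simpa [hn0] using hn
    rw [LSeries.term_of_ne_zero hn0.ne', ha n hXn, zero_div]

theorem dirichletPoly_twist_mul (hf : ∀ n, X < n → f n = 0) (hg : ∀ n, Y < n → g n = 0) (s : ℂ) :
    dirichletPoly (twist χ f) X s * dirichletPoly (twist χ g) Y s =
      dirichletPoly (twist χ (f * g)) (X * Y) s := by
  have hprod := (lseriesHasSum_of_eq_zero (twist_eq_zero (χ := χ) hf) s).convolution
    (lseriesHasSum_of_eq_zero (twist_eq_zero (χ := χ) hg) s)
  rw [twist_convolution_twist] at hprod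
  exact hprod.unique
    (lseriesHasSum_of_eq_zero (twist_eq_zero (mul_apply_eq_zero_of_lt hf hg)) s)

theorem dirichletPoly_twist_one (hX : X ≠ 0) (s : ℂ) :
    dirichletPoly (twist χ (1 : ArithmeticFunction ℝ)) X s = 1 := by
  rw [dirichletPoly, Finset.sum_eq_single_of_mem 1
    (Finset.mem_Ioc.2 ⟨one_pos, Nat.one_le_iff_ne_zero.2 hX⟩)]
  · simp [twist]
  · intro n _ hn
    simp [twist, ArithmeticFunction.one_apply_ne hn]

theorem dirichletPoly_twist_pow (hf : ∀ n, X < n → f n = 0) (s : ℂ) (k : ℕ) :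
    dirichletPoly (twist χ f) X s ^ k = dirichletPoly (twist χ (f ^ k)) (X ^ k) s := by
  induction k with
  | zero => simp only [pow_zero, dirichletPoly_twist_one one_ne_zero]
  | succ k ih =>
    rw [pow_succ, ih, dirichletPoly_twist_mul (pow_apply_eq_zero_of_lt hf k) hf, pow_succ, pow_succ]

end Twist

section Orthogonality

variable {q : ℕ} [NeZero q]

theorem sum_norm_sq_sum_char_mul (F : ZMod q → ℂ) :
    ∑ χ : DirichletCharacter ℂ q, ‖∑ a, χ a * F a‖ ^ 2 =
      q.totient * ∑ a with IsUnit a, ‖F a‖ ^ 2 := by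
  have hexpand (χ : DirichletCharacter ℂ q) : ((‖∑ a, χ a * F a‖ ^ 2 : ℝ) : ℂ) =
      ∑ a with IsUnit a, ∑ b, χ a⁻¹ * χ b * (starRingEnd ℂ (F a) * F b) := by
    rw [ofReal_pow, ← conj_mul', map_sum, Finset.sum_mul_sum, Finset.sum_filter]
    refine Finset.sum_congr rfl fun a _ ↦ ?_
    split_ifs with ha
    · refine Finset.sum_congr rfl fun b _ ↦ ?_
      have hinv : starRingEnd ℂ (χ a) = χ a⁻¹ := by
        obtain ⟨u, rfl⟩ := ha
        rw [← star_def, MulChar.star_apply', MulChar.inv_apply, Ring.inverse_unit,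
          ← ZMod.inv_coe_unit]
      rw [map_mul, hinv]
      ring
    · simp [χ.map_nonunit ha]
  apply ofReal_injective
  rw [ofReal_sum, ofReal_mul, ofReal_sum, Finset.mul_sum]
  simp_rw [hexpand]
  rw [Finset.sum_comm]
  refine Finset.sum_congr rfl fun a ha ↦ ?_
  rw [Finset.sum_comm]
  simp_rw [← Finset.sum_mul,
    DirichletCharacter.sum_char_inv_mul_char_eq ℂ (Finset.mem_filter.1 ha).2]
  simp [conj_mul']

theorem expect_norm_sq_sum_char_mul (F : ZMod q → ℂ) :
    𝔼 χ : DirichletCharacter ℂ q, ‖∑ a, χ a * F a‖ ^ 2 = ∑ a with IsUnit a, ‖F a‖ ^ 2 := by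
  have hq : (q.totient : ℝ) ≠ 0 := mod_cast (Nat.totient_pos.2 (NeZero.pos q)).ne'
  rw [Fintype.expect_eq_sum_div_card, sum_norm_sq_sum_char_mul, ← Nat.card_eq_fintype_card,
    DirichletCharacter.card_eq_totient_of_hasEnoughRootsOfUnity ℂ q, mul_div_cancel_left₀ _ hq]

theorem sum_isUnit_eq_sum_coprime {M : Type*} [AddCommMonoid M] (G : ZMod q → M) :
    ∑ a with IsUnit a, G a = ∑ m ∈ Finset.range q with m.Coprime q, G m := by
  refine Finset.sum_nbij' ZMod.val (fun m ↦ (m : ZMod q)) (fun a ha ↦ ?_) (fun m hm ↦ ?_)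
    (fun a _ ↦ by simp) (fun m hm ↦ ?_) (fun a _ ↦ by simp)
  · simpa [ZMod.val_lt, ← ZMod.isUnit_iff_coprime] using ha
  · simpa [ZMod.isUnit_iff_coprime] using (Finset.mem_filter.1 hm).2
  · exact ZMod.val_cast_of_lt (by simpa using (Finset.mem_filter.1 hm).1)

theorem sum_inv_modEq_le {m : ℕ} (hm : m < q) (Y : ℕ) :
    ∑ n ∈ Finset.Ioc 0 Y with n ≡ m [MOD q] ∧ n ≠ m, (n : ℝ)⁻¹ ≤ (1 + Real.log Y) / q := by
  set S := {n ∈ Finset.Ioc 0 Y | n ≡ m [MOD q] ∧ n ≠ m}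
  have hS {n : ℕ} (hn : n ∈ S) : n % q = m ∧ n / q ∈ Finset.Ioc 0 Y := by
    obtain ⟨hnY, hmod, hne⟩ := by simpa only [S, Finset.mem_filter] using hn
    rw [Nat.ModEq, Nat.mod_eq_of_lt hm] at hmod
    refine ⟨hmod, Finset.mem_Ioc.2 ⟨Nat.pos_of_ne_zero fun h ↦ hne ?_,
      (Nat.div_le_self n q).trans (Finset.mem_Ioc.1 hnY).2⟩⟩
    rw [← hmod, ← Nat.mod_eq_of_lt (Nat.lt_of_div_eq_zero (NeZero.pos q) h)]
    simp
  have hinj : Set.InjOn (· / q) (S : Set ℕ) := fun a ha b hb hab ↦ by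
    rw [← Nat.div_add_mod a q, ← Nat.div_add_mod b q, (hS ha).1, (hS hb).1,
      show a / q = b / q from hab]
  calc ∑ n ∈ S, (n : ℝ)⁻¹ ≤ ∑ n ∈ S, (q : ℝ)⁻¹ * ((n / q : ℕ) : ℝ)⁻¹ := by
        refine Finset.sum_le_sum fun n hn ↦ ?_
        have hpos : 0 < n / q := (Finset.mem_Ioc.1 (hS hn).2).1
        rw [← mul_inv]
        exact inv_anti₀ (mul_pos (mod_cast NeZero.pos q) (mod_cast hpos))
          (mod_cast Nat.mul_div_le n q)
    _ = (q : ℝ)⁻¹ * ∑ j ∈ S.image (· / q), (j : ℝ)⁻¹ := by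
        rw [← Finset.mul_sum, Finset.sum_image hinj]
    _ ≤ (q : ℝ)⁻¹ * ∑ j ∈ Finset.Ioc 0 Y, (j : ℝ)⁻¹ := by
        gcongr
        exact Finset.image_subset_iff.2 fun n hn ↦ (hS hn).2
    _ ≤ (q : ℝ)⁻¹ * (1 + Real.log Y) := by
        gcongr
        exact sum_Ioc_inv_le_one_add_log Y
    _ = (1 + Real.log Y) / q := by ring

theorem norm_sum_modEq_sub_le {c : ℕ → ℂ} {K : ℝ} {m Y : ℕ} (hm0 : 0 < m) (hm : m < q)
    (hY : q ≤ Y) (hc : ∀ n ∈ Finset.Ioc 0 Y, ‖c n‖ ≤ K * (n : ℝ)⁻¹) :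
    ‖∑ n ∈ Finset.Ioc 0 Y with n ≡ m [MOD q], c n - c m‖ ≤ K * (1 + Real.log Y) / q := by
  have hmem : m ∈ {n ∈ Finset.Ioc 0 Y | n ≡ m [MOD q]} :=
    Finset.mem_filter.2 ⟨Finset.mem_Ioc.2 ⟨hm0, hm.le.trans hY⟩, rfl⟩
  have hK : 0 ≤ K := by
    simpa using (norm_nonneg _).trans (hc 1 (Finset.mem_Ioc.2 ⟨one_pos, by lia⟩))
  rw [← Finset.sum_erase_add _ _ hmem, add_sub_cancel_right, ← Finset.filter_ne',
    Finset.filter_filter]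
  calc ‖∑ n ∈ Finset.Ioc 0 Y with n ≡ m [MOD q] ∧ n ≠ m, c n‖
      ≤ ∑ n ∈ Finset.Ioc 0 Y with n ≡ m [MOD q] ∧ n ≠ m, K * (n : ℝ)⁻¹ :=
        norm_sum_le_of_le _ fun n hn ↦ hc n (Finset.mem_filter.1 hn).1
    _ ≤ K * ((1 + Real.log Y) / q) := by
        rw [← Finset.mul_sum]
        exact mul_le_mul_of_nonneg_left (sum_inv_modEq_le hm Y) hK
    _ = K * (1 + Real.log Y) / q := by ring

theorem abs_norm_sq_sub_norm_sq_le {E : Type*} [SeminormedAddCommGroup E] (x y : E) :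
    |‖x‖ ^ 2 - ‖y‖ ^ 2| ≤ ‖x - y‖ * (2 * ‖y‖ + ‖x - y‖) := by
  rw [sq_sub_sq, abs_mul, mul_comm, abs_of_nonneg (add_nonneg (norm_nonneg x) (norm_nonneg y))]
  have := norm_le_norm_add_norm_sub' x y
  exact mul_le_mul (abs_norm_sub_norm_le x y) (by linarith) (by positivity) (by positivity)

theorem expect_norm_sq_sum_natCast_mul (c : ℕ → ℂ) (Y : ℕ) :
    𝔼 χ : DirichletCharacter ℂ q, ‖∑ n ∈ Finset.Ioc 0 Y, χ n * c n‖ ^ 2 =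
      ∑ m ∈ Finset.range q with m.Coprime q,
        ‖∑ n ∈ Finset.Ioc 0 Y with n ≡ m [MOD q], c n‖ ^ 2 := by
  have hfiber (χ : DirichletCharacter ℂ q) : ∑ n ∈ Finset.Ioc 0 Y, χ n * c n =
      ∑ a, χ a * ∑ n ∈ Finset.Ioc 0 Y with ((n : ℕ) : ZMod q) = a, c n := by
    rw [← Finset.sum_fiberwise (g := fun n : ℕ ↦ (n : ZMod q))]
    refine Finset.sum_congr rfl fun a _ ↦ ?_
    rw [Finset.mul_sum]
    exact Finset.sum_congr rfl fun n hn ↦ by rw [(Finset.mem_filter.1 hn).2]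
  simp_rw [hfiber, expect_norm_sq_sum_char_mul, sum_isUnit_eq_sum_coprime,
    ZMod.natCast_eq_natCast_iff]

theorem abs_expect_norm_sq_sub_le {c : ℕ → ℂ} {K : ℝ} {Y : ℕ} (hq : 1 < q) (hY : q ≤ Y)
    (hc : ∀ n ∈ Finset.Ioc 0 Y, ‖c n‖ ≤ K * (n : ℝ)⁻¹) :
    |𝔼 χ : DirichletCharacter ℂ q, ‖∑ n ∈ Finset.Ioc 0 Y, χ n * c n‖ ^ 2 -
        ∑ m ∈ Finset.range q with m.Coprime q, ‖c m‖ ^ 2| ≤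
      3 * (K * (1 + Real.log Y)) ^ 2 / q := by
  set R := K * (1 + Real.log Y)
  have hK : 0 ≤ K := by
    simpa using (norm_nonneg _).trans (hc 1 (Finset.mem_Ioc.2 ⟨one_pos, by lia⟩))
  have : 0 ≤ R := mul_nonneg hK (by linarith [Real.log_natCast_nonneg Y])
  have hq0 : (0 : ℝ) < q := mod_cast NeZero.pos q
  have hterm (m : ℕ) (hm : m ∈ {m ∈ Finset.range q | m.Coprime q}) :
      m ∈ Finset.Ioc 0 Y ∧ |‖∑ n ∈ Finset.Ioc 0 Y with n ≡ m [MOD q], c n‖ ^ 2 - ‖c m‖ ^ 2| ≤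
        R / q * (2 * (K * (m : ℝ)⁻¹) + R / q) := by
    obtain ⟨hmq, hcop⟩ := Finset.mem_filter.1 hm
    have hmq := Finset.mem_range.1 hmq
    have hm0 : 0 < m := Nat.pos_of_ne_zero fun h ↦ by
      rw [h, Nat.coprime_zero_left] at hcop
      exact hq.ne' hcop
    have hmY : m ∈ Finset.Ioc 0 Y := Finset.mem_Ioc.2 ⟨hm0, by lia⟩
    have hdiff := norm_sum_modEq_sub_le hm0 hmq hY hc
    refine ⟨hmY, (abs_norm_sq_sub_norm_sq_le _ _).trans ?_⟩
    gcongr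
    exact hc m hmY
  have hharm : ∑ m ∈ Finset.range q with m.Coprime q, (m : ℝ)⁻¹ ≤ 1 + Real.log Y :=
    (Finset.sum_le_sum_of_subset_of_nonneg (fun m hm ↦ (hterm m hm).1)
      fun _ _ _ ↦ by positivity).trans (sum_Ioc_inv_le_one_add_log Y)
  have hcard : ((Finset.range q).filter (·.Coprime q)).card ≤ (q : ℝ) :=
    mod_cast (Finset.card_filter_le _ _).trans_eq (Finset.card_range q)
  rw [expect_norm_sq_sum_natCast_mul, ← Finset.sum_sub_distrib]
  calc _ ≤ ∑ m ∈ Finset.range q with m.Coprime q, R / q * (2 * (K * (m : ℝ)⁻¹) + R / q) :=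
        (Finset.abs_sum_le_sum_abs _ _).trans (Finset.sum_le_sum fun m hm ↦ (hterm m hm).2)
    _ = R / q * (2 * (K * ∑ m ∈ Finset.range q with m.Coprime q, (m : ℝ)⁻¹) +
          ((Finset.range q).filter (·.Coprime q)).card * (R / q)) := by
        rw [← Finset.mul_sum, Finset.sum_add_distrib, Finset.sum_const, nsmul_eq_mul,
          ← Finset.mul_sum, ← Finset.mul_sum]
    _ ≤ R / q * (2 * (K * (1 + Real.log Y)) + q * (R / q)) := by gcongr
    _ = 3 * R ^ 2 / q := by
        rw [mul_div_cancel₀ _ hq0.ne']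
        ring

end Orthogonality

section MeanSquare

instance instFactPrime (p : Nat.Primes) : Fact (p : ℕ).Prime := ⟨p.2⟩

variable {s : ℂ}

theorem norm_natCast_cpow_neg_eq_inv {n : ℕ} (hn : n ≠ 0) (hs : s.re = 1) :
    ‖(n : ℂ) ^ (-s)‖ = (n : ℝ)⁻¹ := by
  rw [norm_natCast_cpow_of_pos (Nat.pos_of_ne_zero hn), neg_re, hs, Real.rpow_neg_one]

theorem abs_expect_norm_sq_twist_sub_le {p : ℕ} [Fact p.Prime] {f : ArithmeticFunction ℝ} {K : ℝ}
    {Y : ℕ} (hY : p ≤ Y) (hf : ∀ n ∈ Finset.Ioc 0 Y, |f n| ≤ K) (hs : s.re = 1) :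
    |𝔼 χ : DirichletCharacter ℂ p, ‖dirichletPoly (twist χ f) Y s‖ ^ 2 -
        ∑ m ∈ Finset.range p, (f m / m) ^ 2| ≤ 3 * (K * (1 + Real.log Y)) ^ 2 / p := by
  have hp : p.Prime := Fact.out
  have hnorm {n : ℕ} (hn : n ≠ 0) : ‖(f n : ℂ) * (n : ℂ) ^ (-s)‖ = |f n| * (n : ℝ)⁻¹ := by
    rw [norm_mul, norm_real, Real.norm_eq_abs, norm_natCast_cpow_neg_eq_inv hn hs]
  have hmain : ∑ m ∈ Finset.range p with m.Coprime p, ‖(f m : ℂ) * (m : ℂ) ^ (-s)‖ ^ 2 =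
      ∑ m ∈ Finset.range p, (f m / m) ^ 2 := by
    rw [Finset.sum_filter]
    refine Finset.sum_congr rfl fun m hm ↦ ?_
    rcases Nat.eq_zero_or_pos m with rfl | hm0
    · simp
    · rw [if_pos (Nat.coprime_of_lt_prime hm0.ne' (Finset.mem_range.1 hm) hp).symm,
        hnorm hm0.ne', mul_pow, sq_abs, div_eq_mul_inv, mul_pow]
  rw [← hmain]
  simp only [dirichletPoly, twist, mul_assoc]
  refine abs_expect_norm_sq_sub_le hp.one_lt hY fun n hn ↦ ?_
  rw [hnorm (Finset.mem_Ioc.1 hn).1.ne']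
  exact mul_le_mul_of_nonneg_right (hf n hn) (by positivity)

theorem isSubpoly_expect_norm_sq_twist_sub {F : ℕ → ℝ} (hF : IsSubpoly id F) {j : ℕ} (hj : j ≠ 0)
    {f : Nat.Primes → ArithmeticFunction ℝ} (hf : ∀ p n, |f p n| ≤ F n) (hs : s.re = 1) :
    IsSubpoly (fun p : Nat.Primes ↦ (p : ℕ)) fun p ↦ p *
      (𝔼 χ : DirichletCharacter ℂ p, ‖dirichletPoly (twist χ (f p)) (p ^ j) s‖ ^ 2 -
        ∑ m ∈ Finset.range p, (f p m / m) ^ 2) := by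
  have hN (p : Nat.Primes) : (p : ℕ) ≠ 0 := p.2.ne_zero
  have hmax : IsSubpoly (fun p : Nat.Primes ↦ (p : ℕ)) fun p ↦
      (Finset.range ((p : ℕ) ^ j + 1)).sup' (by simp) fun n ↦ |F n| :=
    (hF.sup'.comp fun p : Nat.Primes ↦ (p : ℕ) ^ j).of_le_pow hj fun _ ↦ le_rfl
  have hlog : IsSubpoly (fun p : Nat.Primes ↦ (p : ℕ)) fun p ↦ 1 + Real.log ((p ^ j : ℕ) : ℝ) :=
    (IsSubpoly.const hN 1).add ((IsSubpoly.log _).of_le_pow hj fun _ ↦ le_rfl)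
  refine ((IsSubpoly.const hN 3).mul ((hmax.mul hlog).pow hN 2)).mono fun p ↦ ?_
  have hp0 : (0 : ℝ) < p := mod_cast p.2.pos
  rw [abs_mul, abs_of_pos hp0, mul_comm, ← le_div_iff₀ hp0]
  refine abs_expect_norm_sq_twist_sub_le (Nat.le_self_pow hj _) (fun n hn ↦ ?_) hs
  exact ((hf p n).trans (le_abs_self _)).trans (Finset.le_sup' (fun n ↦ |F n|)
    (Finset.mem_range.2 (Nat.lt_succ_of_le (Finset.mem_Ioc.1 hn).2)))

end MeanSquare

section Mollifier

open ArithmeticFunction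

variable {q : ℕ} (χ : DirichletCharacter ℂ q) (s : ℂ)

/-- The mollifier `∑ n ≤ q, μ(n) χ(n) n⁻ˢ`, an approximation of `1 / L(s, χ)`. -/
noncomputable def mollifier : ℂ :=
  dirichletPoly (twist χ (truncate q (moebius : ArithmeticFunction ℤ))) q s

/-- The defect `l(s) M(s) - 1`, where `M` is the mollifier and `l` is the partial sum of length
`q ^ 4` of `L(s, χ)`. -/
noncomputable def mollifierDefect : ℂ :=
  dirichletPoly (fun n ↦ χ n) (q ^ 4) s * mollifier χ s - 1

/-- The approximation `l'(s) M(s)` of the logarithmic derivative of `L(s, χ)`, where `M` is the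
mollifier and `l` is the partial sum of length `q ^ 4` of `L(s, χ)`. -/
noncomputable def mollifiedLogDeriv : ℂ :=
  deriv (dirichletPoly (fun n ↦ χ n) (q ^ 4)) s * mollifier χ s

/-- The convolution of the truncations of `log` and `μ`: its twists are the coefficients of
`-mollifiedLogDeriv`. -/
noncomputable def mollifiedLog (q : ℕ) : ArithmeticFunction ℝ :=
  truncate (q ^ 4) ArithmeticFunction.log * truncate q (moebius : ArithmeticFunction ℤ)

/-- The convolution of the truncations of `ζ` and `μ`: its twists are the coefficients of
`mollifierDefect + 1`. -/
noncomputable def mollifiedZeta (q : ℕ) : ArithmeticFunction ℝ :=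
  truncate (q ^ 4) zeta * truncate q (moebius : ArithmeticFunction ℤ)

variable {χ s}

theorem dirichletPoly_eq_twist_truncate_zeta (X : ℕ) :
    dirichletPoly (fun n ↦ χ n) X s = dirichletPoly (twist χ (truncate X zeta)) X s := by
  refine Finset.sum_congr rfl fun n hn ↦ ?_
  obtain ⟨hn0, hnX⟩ := Finset.mem_Ioc.1 hn
  simp [twist, truncate_apply_of_le hnX, zeta_apply_ne hn0.ne']

theorem deriv_dirichletPoly_eq_twist_truncate_log (X : ℕ) :
    deriv (dirichletPoly (fun n ↦ χ n) X) s =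
      -dirichletPoly (twist χ (truncate X ArithmeticFunction.log)) X s := by
  rw [deriv_dirichletPoly]
  congr 1
  refine Finset.sum_congr rfl fun n hn ↦ ?_
  rw [twist, truncate_apply_of_le (Finset.mem_Ioc.1 hn).2, LSeries.logMul, log_apply, natCast_log,
    mul_comm (χ n)]

theorem mollifiedLogDeriv_eq :
    mollifiedLogDeriv χ s = -dirichletPoly (twist χ (mollifiedLog q)) (q ^ 5) s := by
  rw [mollifiedLogDeriv, mollifier, deriv_dirichletPoly_eq_twist_truncate_log, neg_mul,
    dirichletPoly_twist_mul truncate_apply_of_lt truncate_apply_of_lt, ← pow_succ, mollifiedLog]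

theorem norm_mollifiedLogDeriv_pow (k : ℕ) :
    ‖mollifiedLogDeriv χ s‖ ^ (2 * k) =
      ‖dirichletPoly (twist χ (mollifiedLog q ^ k)) (q ^ (5 * k)) s‖ ^ 2 := by
  have hsupp (n : ℕ) (hn : q ^ 5 < n) : mollifiedLog q n = 0 :=
    mul_apply_eq_zero_of_lt truncate_apply_of_lt truncate_apply_of_lt n (by rwa [← pow_succ])
  rw [mollifiedLogDeriv_eq, norm_neg, pow_mul q, ← dirichletPoly_twist_pow hsupp, norm_pow,
    ← pow_mul, mul_comm k]

theorem mollifierDefect_eq [NeZero q] :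
    mollifierDefect χ s = dirichletPoly (twist χ (mollifiedZeta q - 1)) (q ^ 5) s := by
  have hsub : dirichletPoly (twist χ (mollifiedZeta q - 1)) (q ^ 5) s =
      dirichletPoly (twist χ (mollifiedZeta q)) (q ^ 5) s -
        dirichletPoly (twist χ (1 : ArithmeticFunction ℝ)) (q ^ 5) s := by
    simp only [dirichletPoly, twist, sub_eq_add_neg, ArithmeticFunction.add_apply,
      ArithmeticFunction.neg_apply, ← Finset.sum_neg_distrib, ← Finset.sum_add_distrib]
    push_cast
    exact Finset.sum_congr rfl fun _ _ ↦ by ring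
  rw [hsub, mollifiedZeta, dirichletPoly_twist_one (pow_ne_zero _ (NeZero.ne q)),
    mollifierDefect, mollifier, dirichletPoly_eq_twist_truncate_zeta,
    dirichletPoly_twist_mul truncate_apply_of_lt truncate_apply_of_lt, ← pow_succ]

theorem abs_moebius_le_zeta (n : ℕ) :
    |((moebius : ArithmeticFunction ℤ) : ArithmeticFunction ℝ) n| ≤
      (zeta : ArithmeticFunction ℝ) n := by
  rcases eq_or_ne n 0 with rfl | hn
  · simp
  · rw [intCoe_apply, natCoe_apply, zeta_apply_ne hn, Nat.cast_one]
    exact_mod_cast abs_moebius_le_one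

theorem abs_mollifiedLog_le (q n : ℕ) :
    |mollifiedLog q n| ≤ (ArithmeticFunction.log * (zeta : ArithmeticFunction ℝ)) n :=
  abs_mul_apply_le (abs_truncate_le fun m ↦ (abs_of_nonneg (Real.log_natCast_nonneg m)).le)
    (abs_truncate_le abs_moebius_le_zeta) n

theorem abs_mollifiedZeta_le (q n : ℕ) :
    |mollifiedZeta q n| ≤ ((zeta : ArithmeticFunction ℝ) * (zeta : ArithmeticFunction ℝ)) n :=
  abs_mul_apply_le (abs_truncate_le fun _ ↦ (abs_of_nonneg (Nat.cast_nonneg _)).le)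
    (abs_truncate_le abs_moebius_le_zeta) n

theorem mollifiedLog_apply {n : ℕ} (hn : n ≤ q) : mollifiedLog q n = vonMangoldt n := by
  rw [← log_mul_moebius_eq_vonMangoldt]
  have hq : q ≤ q ^ 4 := Nat.le_self_pow (by norm_num) q
  exact mul_apply_congr (fun m hm ↦ truncate_apply_of_le (hm.trans hq))
    (fun m hm ↦ truncate_apply_of_le hm) n hn

theorem mollifiedZeta_apply {n : ℕ} (hn : n ≤ q) :
    mollifiedZeta q n = (1 : ArithmeticFunction ℝ) n := by
  rw [← coe_zeta_mul_coe_moebius]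
  have hq : q ≤ q ^ 4 := Nat.le_self_pow (by norm_num) q
  exact mul_apply_congr (fun m hm ↦ truncate_apply_of_le (hm.trans hq))
    (fun m hm ↦ truncate_apply_of_le hm) n hn

theorem isSubpoly_expect_mollifiedLogDeriv_sub (hs : s.re = 1) {k : ℕ} (hk : k ≠ 0) :
    IsSubpoly (fun p : Nat.Primes ↦ (p : ℕ)) fun p ↦ p *
      (𝔼 χ : DirichletCharacter ℂ p, ‖mollifiedLogDeriv χ s‖ ^ (2 * k) -
        ∑ m ∈ Finset.range p, ((vonMangoldt ^ k) m / m) ^ 2) := by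
  have hcoeff (p : ℕ) : ∑ m ∈ Finset.range p, ((vonMangoldt ^ k) m / m) ^ 2 =
      ∑ m ∈ Finset.range p, ((mollifiedLog p ^ k) m / m) ^ 2 :=
    Finset.sum_congr rfl fun m hm ↦ by
      rw [pow_apply_congr (fun n ↦ mollifiedLog_apply) k m (Finset.mem_range.1 hm).le]
  simpa only [norm_mollifiedLogDeriv_pow, hcoeff] using isSubpoly_expect_norm_sq_twist_sub
    (isSubpoly_pow (isSubpoly_mul isSubpoly_log isSubpoly_zeta) k)
    (mul_ne_zero (by norm_num : 5 ≠ 0) hk)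
    (fun p ↦ abs_pow_apply_le (abs_mollifiedLog_le p) k) hs

theorem isSubpoly_expect_mollifierDefect (hs : s.re = 1) :
    IsSubpoly (fun p : Nat.Primes ↦ (p : ℕ)) fun p ↦ p *
      𝔼 χ : DirichletCharacter ℂ p, ‖mollifierDefect χ s‖ ^ 2 := by
  have happly (p n : ℕ) : (mollifiedZeta p - 1) n =
      mollifiedZeta p n - (1 : ArithmeticFunction ℝ) n := rfl
  have hcoeff (p : ℕ) : ∑ m ∈ Finset.range p, ((mollifiedZeta p - 1) m / m) ^ 2 = 0 :=
    Finset.sum_eq_zero fun m hm ↦ by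
      rw [happly, mollifiedZeta_apply (Finset.mem_range.1 hm).le, sub_self]
      simp
  have hbound (p n : ℕ) : |(mollifiedZeta p - 1) n| ≤
      ((zeta : ArithmeticFunction ℝ) * (zeta : ArithmeticFunction ℝ)) n +
        |(1 : ArithmeticFunction ℝ) n| := by
    rw [happly]
    exact (abs_sub _ _).trans (add_le_add_left (abs_mollifiedZeta_le p n) _)
  have habs : IsSubpoly id fun n ↦ |(1 : ArithmeticFunction ℝ) n| :=
    isSubpoly_one.mono fun n ↦ by rw [abs_abs, abs_of_nonneg]; rw [one_apply]; positivity
  simpa only [mollifierDefect_eq, hcoeff, sub_zero] using isSubpoly_expect_norm_sq_twist_sub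
    ((isSubpoly_mul isSubpoly_zeta isSubpoly_zeta).add habs)
    (by norm_num : 5 ≠ 0) (fun p ↦ hbound p) hs

end Mollifier

section Moment

open ArithmeticFunction

theorem vonMangoldt_pow_nonneg (k n : ℕ) : 0 ≤ (vonMangoldt ^ k) n := by
  induction k generalizing n with
  | zero => rw [pow_zero, one_apply]; positivity
  | succ k ih =>
    rw [pow_succ, mul_apply]
    exact Finset.sum_nonneg fun x _ ↦ mul_nonneg (ih _) vonMangoldt_nonneg

theorem vonMangoldt_pow_le_log_pow (k n : ℕ) : (vonMangoldt ^ k) n ≤ Real.log n ^ k := by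
  induction k generalizing n with
  | zero => rw [pow_zero, one_apply]; split_ifs <;> simp
  | succ k ih =>
    calc (vonMangoldt ^ (k + 1)) n
        = ∑ x ∈ n.divisorsAntidiagonal, (vonMangoldt ^ k) x.1 * vonMangoldt x.2 := by
          rw [pow_succ, mul_apply]
      _ ≤ ∑ x ∈ n.divisorsAntidiagonal, Real.log n ^ k * vonMangoldt x.2 := by
          refine Finset.sum_le_sum fun x hx ↦ mul_le_mul_of_nonneg_right ?_ vonMangoldt_nonneg
          have hdvd := Nat.fst_mem_divisors_of_mem_antidiagonal hx
          exact (ih _).trans (pow_le_pow_left₀ (Real.log_natCast_nonneg _)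
            (Real.log_le_log (mod_cast Nat.pos_of_mem_divisors hdvd)
              (mod_cast Nat.divisor_le hdvd)) k)
      _ = Real.log n ^ (k + 1) := by
          rw [Nat.sum_divisorsAntidiagonal' (f := fun _ b ↦ Real.log n ^ k * vonMangoldt b),
            ← Finset.mul_sum, vonMangoldt_sum, pow_succ]

theorem vonMangoldt_pow_two_pow_pos (k : ℕ) : 0 < (vonMangoldt ^ k) (2 ^ k) := by
  induction k with
  | zero => simp
  | succ k ih =>
    have hmem : (2 ^ k, 2) ∈ (2 ^ (k + 1)).divisorsAntidiagonal :=
      Nat.mem_divisorsAntidiagonal.2 ⟨(pow_succ 2 k).symm, by positivity⟩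
    rw [pow_succ vonMangoldt, mul_apply]
    refine Finset.sum_pos' (fun x _ ↦ mul_nonneg (vonMangoldt_pow_nonneg k _) vonMangoldt_nonneg)
      ⟨_, hmem, mul_pos ih ?_⟩
    rw [vonMangoldt_apply_prime Nat.prime_two]
    exact Real.log_pos (by norm_num)

/-- The limit `∑ n, (Λ^{*k}(n) / n) ^ 2` of the averages of `|L'/L| ^ (2 * k)` on the line
`re s = 1`, where `Λ^{*k}` is the `k`-fold Dirichlet convolution of the von Mangoldt function. -/
noncomputable def moment (k : ℕ) : ℝ := ∑' n : ℕ, ((vonMangoldt ^ k) n / n) ^ 2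

theorem log_pow_two_mul_le {n : ℕ} (hn : n ≠ 0) (k : ℕ) :
    Real.log n ^ (2 * k) ≤ 4 ^ k * (2 * k).factorial * (n : ℝ) ^ (1 / 2 : ℝ) := by
  have hexp := Real.pow_div_factorial_le_exp (Real.log n / 2)
    (div_nonneg (Real.log_natCast_nonneg n) zero_le_two) (2 * k)
  have hroot : Real.exp (Real.log n / 2) = (n : ℝ) ^ (1 / 2 : ℝ) := by
    rw [Real.rpow_def_of_pos (mod_cast Nat.pos_of_ne_zero hn), mul_one_div]
  rw [hroot, div_le_iff₀ (by positivity), div_pow, pow_mul 2, div_le_iff₀ (by positivity)] at hexp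
  exact hexp.trans_eq (by norm_num; ring)

theorem vonMangoldt_pow_div_sq_le (k n : ℕ) :
    ((vonMangoldt ^ k) n / n) ^ 2 ≤
      4 ^ k * (2 * k).factorial * (1 / (n : ℝ) ^ (3 / 2 : ℝ)) := by
  rcases Nat.eq_zero_or_pos n with rfl | hn
  · simp
  have hn0 : (0 : ℝ) < n := mod_cast hn
  have hpow : (n : ℝ) ^ (1 / 2 : ℝ) / (n : ℝ) ^ 2 = 1 / (n : ℝ) ^ (3 / 2 : ℝ) := by
    rw [← Real.rpow_natCast, ← Real.rpow_sub hn0, one_div (_ ^ _), ← Real.rpow_neg hn0.le]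
    norm_num
  have hlog : (vonMangoldt ^ k) n ^ 2 ≤ Real.log n ^ (2 * k) := by
    rw [mul_comm 2 k, pow_mul]
    exact pow_le_pow_left₀ (vonMangoldt_pow_nonneg k n) (vonMangoldt_pow_le_log_pow k n) 2
  rw [div_pow, ← hpow, ← mul_div_assoc]
  exact div_le_div_of_nonneg_right (hlog.trans (log_pow_two_mul_le hn.ne' k)) (by positivity)

theorem summable_vonMangoldt_pow_div_sq (k : ℕ) :
    Summable fun n : ℕ ↦ ((vonMangoldt ^ k) n / n) ^ 2 :=
  .of_nonneg_of_le (fun _ ↦ sq_nonneg _) (vonMangoldt_pow_div_sq_le k)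
    ((Real.summable_one_div_nat_rpow.2 (by norm_num)).mul_left _)

theorem exists_moment_le : ∃ B : ℝ, 0 < B ∧ ∀ k, moment k ≤ B * (4 ^ k * (2 * k).factorial) := by
  have hsum := Real.summable_one_div_nat_rpow.2 (by norm_num : (1 : ℝ) < 3 / 2)
  refine ⟨∑' n : ℕ, 1 / (n : ℝ) ^ (3 / 2 : ℝ),
    hsum.tsum_pos (fun _ ↦ by positivity) 1 (by norm_num), fun k ↦ ?_⟩
  rw [mul_comm, ← tsum_mul_left]
  exact (summable_vonMangoldt_pow_div_sq k).tsum_le_tsum (vonMangoldt_pow_div_sq_le k)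
    (hsum.mul_left _)

theorem moment_pos (k : ℕ) : 0 < moment k := by
  have := vonMangoldt_pow_two_pow_pos k
  exact (summable_vonMangoldt_pow_div_sq k).tsum_pos (fun _ ↦ sq_nonneg _) (2 ^ k) (by positivity)

end Moment

section SubpolyLimits

variable {ι : Type*} {N : ι → ℕ}

theorem IsSubpoly.expect {α : ι → Type*} [∀ i, Fintype (α i)] [∀ i, Nonempty (α i)]
    {f : (Σ i, α i) → ℝ} (hf : IsSubpoly (fun x ↦ N x.1) f) :
    IsSubpoly N fun i ↦ 𝔼 a, f ⟨i, a⟩ :=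
  .of_exists_le fun _ hε ↦ by
    obtain ⟨C, -, hC⟩ := hf.exists_le hε
    exact ⟨C, fun i ↦ (Finset.abs_expect_le _ _).trans
      (Finset.expect_le Finset.univ_nonempty fun a _ ↦ hC ⟨i, a⟩)⟩

theorem IsSubpoly.tendsto_zero_of_natCast_mul {l : Filter ι} {f : ι → ℝ}
    (hf : IsSubpoly N fun i ↦ N i * f i) (hN : Tendsto N l atTop) : Tendsto f l (𝓝 0) := by
  obtain ⟨C, -, hC⟩ := hf.exists_le (half_pos one_pos)
  have hlim : Tendsto (fun i ↦ C * (N i : ℝ) ^ (-(1 / 2) : ℝ)) l (𝓝 0) := by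
    simpa using ((tendsto_rpow_neg_atTop (half_pos one_pos)).comp
      (tendsto_natCast_atTop_atTop.comp hN)).const_mul C
  refine squeeze_zero_norm' ?_ hlim
  filter_upwards [hN.eventually_gt_atTop 0] with i hi
  have hi0 : (0 : ℝ) < N i := mod_cast hi
  have hpow : (N i : ℝ) ^ (1 / 2 : ℝ) = N i * (N i : ℝ) ^ (-(1 / 2) : ℝ) := by
    rw [← Real.rpow_one_add' hi0.le (by norm_num)]
    norm_num
  have := hC i
  rw [abs_mul, Nat.abs_cast, hpow, mul_left_comm] at this
  exact le_of_mul_le_mul_left this hi0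

end SubpolyLimits

section LogDeriv

open DirichletCharacter

variable {q : ℕ} {s : ℂ}

theorem norm_mollifier_le (χ : DirichletCharacter ℂ q) (hs : 1 ≤ s.re) :
    ‖mollifier χ s‖ ≤ 1 + Real.log q := by
  refine (norm_dirichletPoly_le zero_le_one (fun n hn ↦ (norm_twist_le _ _ _).trans ?_)
    hs).trans_eq (one_mul _)
  refine (abs_truncate_le abs_moebius_le_zeta n).trans ?_
  simp [ArithmeticFunction.zeta_apply_ne (Finset.mem_Ioc.1 hn).1.ne']

theorem hasDerivAt_one_sub_natCast_cpow_neg {n : ℕ} (hn : n ≠ 0) (s : ℂ) :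
    HasDerivAt (fun z : ℂ ↦ 1 - (n : ℂ) ^ (-z)) ((n : ℂ) ^ (-s) * Real.log n) s := by
  simpa using ((hasDerivAt_neg s).const_cpow (Or.inl (Nat.cast_ne_zero.2 hn))).const_sub 1

theorem half_le_norm_one_sub_natCast_cpow_neg {n : ℕ} (hn : 2 ≤ n) (hs : s.re = 1) :
    1 / 2 ≤ ‖1 - (n : ℂ) ^ (-s)‖ := by
  have htri := norm_sub_norm_le (1 : ℂ) ((n : ℂ) ^ (-s))
  rw [norm_one, norm_natCast_cpow_neg_eq_inv (by omega) hs] at htri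
  have hinv : (n : ℝ)⁻¹ ≤ 2⁻¹ := inv_anti₀ two_pos (mod_cast hn)
  linarith

theorem norm_logDeriv_one_sub_natCast_cpow_neg_le {n : ℕ} (hn : 2 ≤ n) (hs : s.re = 1) :
    ‖logDeriv (fun z : ℂ ↦ 1 - (n : ℂ) ^ (-z)) s‖ ≤ 2 := by
  have hn0 : (0 : ℝ) < n := mod_cast (by omega : 0 < n)
  have hlow := half_le_norm_one_sub_natCast_cpow_neg hn hs
  have hlog : (n : ℝ)⁻¹ * Real.log n ≤ 1 := by
    rw [inv_mul_le_iff₀ hn0, mul_one]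
    linarith [Real.log_le_sub_one_of_pos hn0]
  rw [logDeriv_apply, (hasDerivAt_one_sub_natCast_cpow_neg (by omega) s).deriv, norm_div,
    div_le_iff₀ (by linarith), norm_mul, norm_natCast_cpow_neg_eq_inv (by omega) hs, norm_real,
    Real.norm_of_nonneg (Real.log_natCast_nonneg n)]
  linarith

theorem norm_logDeriv_LFunction_one_le (p : ℕ) [Fact p.Prime] (hs : s.re = 1) (hs1 : s ≠ 1) :
    ‖logDeriv (LFunction (1 : DirichletCharacter ℂ p)) s‖ ≤ 2 + ‖logDeriv riemannZeta s‖ := by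
  have hp : p.Prime := Fact.out
  have heuler : LFunction (1 : DirichletCharacter ℂ p) =ᶠ[𝓝 s]
      fun z ↦ (1 - (p : ℂ) ^ (-z)) * riemannZeta z := by
    filter_upwards [isOpen_ne.mem_nhds hs1] with z hz
    have := LFunctionTrivChar_eq_mul_riemannZeta (N := p) hz
    rwa [LFunctionTrivChar, hp.primeFactors, Finset.prod_singleton] at this
  have hfactor : 1 - (p : ℂ) ^ (-s) ≠ 0 :=
    norm_pos_iff.1 (one_half_pos.trans_le (half_le_norm_one_sub_natCast_cpow_neg hp.two_le hs))
  rw [logDeriv_apply, heuler.deriv_eq, heuler.eq_of_nhds, ← logDeriv_apply,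
    logDeriv_mul (g := riemannZeta) s hfactor (riemannZeta_ne_zero_of_one_le_re hs.ge)
      (hasDerivAt_one_sub_natCast_cpow_neg hp.ne_zero s).differentiableAt
      (differentiableAt_riemannZeta hs1)]
  exact (norm_add_le _ _).trans
    (add_le_add_left (norm_logDeriv_one_sub_natCast_cpow_neg_le hp.two_le hs) _)

variable [NeZero q]

/-- The value `|L'/L(1 + it, χ)|` that is averaged in the theorem; it is `0` when `1 + it` is the
pole of `L(s, χ)`. -/
noncomputable def logDerivNorm (t : ℝ) (χ : DirichletCharacter ℂ q) : ℝ :=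
  if t = 0 ∧ χ = 1 then 0 else ‖logDeriv (LFunction χ) (1 + t * I)‖

theorem logDerivNorm_nonneg (t : ℝ) (χ : DirichletCharacter ℂ q) : 0 ≤ logDerivNorm t χ := by
  rw [logDerivNorm]
  split_ifs <;> positivity

theorem logDerivNorm_of_ne_one {χ : DirichletCharacter ℂ q} (hχ : χ ≠ 1) (t : ℝ) :
    logDerivNorm t χ = ‖logDeriv (LFunction χ) (1 + t * I)‖ :=
  if_neg fun h ↦ hχ h.2

theorem exists_logDerivNorm_one_le (t : ℝ) :
    ∃ C, ∀ (p : ℕ) [Fact p.Prime], logDerivNorm t (1 : DirichletCharacter ℂ p) ≤ C := by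
  rcases eq_or_ne t 0 with rfl | ht
  · exact ⟨0, fun p _ ↦ by simp [logDerivNorm]⟩
  · refine ⟨2 + ‖logDeriv riemannZeta (1 + t * I)‖, fun p _ ↦ ?_⟩
    rw [logDerivNorm, if_neg (not_and_of_not_left _ ht)]
    exact norm_logDeriv_LFunction_one_le p (by simp) (by simp [ht])

theorem norm_logDeriv_sub_mollifiedLogDeriv_le {χ : DirichletCharacter ℂ q} (hχ : χ ≠ 1)
    (hs : 1 ≤ s.re) (hL : LFunction χ s ≠ 0) :
    ‖logDeriv (LFunction χ) s - mollifiedLogDeriv χ s‖ ≤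
      (‖logDeriv (LFunction χ) s‖ + 4 * (‖s‖ + 1) * (1 + ‖logDeriv (LFunction χ) s‖) *
        ‖mollifier χ s‖) * (‖mollifierDefect χ s‖ + 1 / q) := by
  set L := LFunction χ s
  set l := dirichletPoly (fun n ↦ χ n) (q ^ 4) s with hl
  set M := mollifier χ s
  set D := logDeriv (LFunction χ) s
  have hdecomp : D - mollifiedLogDeriv χ s = -D * mollifierDefect χ s +
      ((deriv (LFunction χ) s - deriv (dirichletPoly (fun n ↦ χ n) (q ^ 4)) s) * M -
        D * (L - l) * M) := by
    have hDL : D * L = deriv (LFunction χ) s := div_mul_cancel₀ _ hL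
    rw [mollifiedLogDeriv, mollifierDefect, ← hl, ← hDL]
    ring
  have hL' := norm_deriv_LFunction_sub_le hχ hs
  have hL := norm_LFunction_sub_dirichletPoly_pow_four_le hχ (s := s) (by linarith)
  calc ‖D - mollifiedLogDeriv χ s‖
      ≤ ‖D‖ * ‖mollifierDefect χ s‖ + (4 * (‖s‖ + 1) / q * ‖M‖ + ‖D‖ * (2 * ‖s‖ / q) * ‖M‖) := by
        rw [hdecomp]
        refine (norm_add_le _ _).trans (add_le_add (by rw [norm_mul, norm_neg]) ?_)
        refine (norm_sub_le _ _).trans ?_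
        simp only [norm_mul]
        gcongr
    _ ≤ (‖D‖ + 4 * (‖s‖ + 1) * (1 + ‖D‖) * ‖M‖) * (‖mollifierDefect χ s‖ + 1 / q) := by
        have hcross : 0 ≤ ‖D‖ * (1 / q) + 4 * (‖s‖ + 1) * (1 + ‖D‖) * ‖M‖ *
            ‖mollifierDefect χ s‖ + (2 * ‖s‖ + 4) * ‖D‖ * ‖M‖ / q := by positivity
        linear_combination hcross

end LogDeriv

section Average

open DirichletCharacter

/-- The pairs of a prime modulus and a Dirichlet character of that modulus. -/
abbrev PrimeCharacter : Type := Σ p : Nat.Primes, DirichletCharacter ℂ p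

theorem card_dirichletCharacter_prime (p : ℕ) [Fact p.Prime] :
    (Fintype.card (DirichletCharacter ℂ p) : ℝ) = p - 1 := by
  have hp : p.Prime := Fact.out
  rw [← Nat.card_eq_fintype_card, DirichletCharacter.card_eq_totient_of_hasEnoughRootsOfUnity ℂ p,
    Nat.totient_prime hp, Nat.cast_pred hp.pos]

theorem isSubpoly_norm_mollifier {s : ℂ} (hs : 1 ≤ s.re) :
    IsSubpoly (fun x : PrimeCharacter ↦ (x.1 : ℕ)) fun x ↦ ‖mollifier x.2 s‖ :=
  ((IsSubpoly.const (fun x ↦ x.1.2.ne_zero) 1).add (.log _)).mono fun x ↦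
    (abs_norm _).trans_le (norm_mollifier_le x.2 hs)

theorem isSubpoly_norm_mollifiedLogDeriv {s : ℂ} (hs : 1 ≤ s.re) :
    IsSubpoly (fun x : PrimeCharacter ↦ (x.1 : ℕ)) fun x ↦ ‖mollifiedLogDeriv x.2 s‖ := by
  have hlog : IsSubpoly (fun x : PrimeCharacter ↦ (x.1 : ℕ)) fun x ↦
      Real.log ((x.1 ^ 4 : ℕ) : ℝ) := (IsSubpoly.log _).of_le_pow four_ne_zero fun _ ↦ le_rfl
  refine ((hlog.mul ((IsSubpoly.const (fun x ↦ x.1.2.ne_zero) 1).add hlog)).mul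
    (isSubpoly_norm_mollifier hs)).mono fun x ↦ ?_
  rw [abs_norm, mollifiedLogDeriv, norm_mul]
  exact mul_le_mul_of_nonneg_right
    (norm_deriv_dirichletPoly_le (fun n ↦ x.2.norm_le_one (n : ZMod x.1)) hs) (norm_nonneg _)

theorem isSubpoly_inv_norm_LFunction (t : ℝ) :
    IsSubpoly (fun x : PrimeCharacter ↦ (x.1 : ℕ)) fun x ↦
      if x.2 = 1 then 0 else ‖LFunction x.2 (1 + t * I)‖⁻¹ :=
  .of_exists_le fun ε hε ↦ by
    obtain ⟨c, hc, hlow⟩ := exists_le_norm_LFunction_one_add_mul_I t hε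
    refine ⟨c⁻¹, fun ⟨p, χ⟩ ↦ ?_⟩
    have hp0 : (0 : ℝ) < p := mod_cast p.2.pos
    split_ifs with hχ
    · rw [abs_zero]
      positivity
    · rw [abs_inv, abs_norm, ← neg_neg ε, Real.rpow_neg hp0.le, ← mul_inv]
      exact inv_anti₀ (by positivity) (hlow p χ hχ)

theorem isSubpoly_logDerivNorm (t : ℝ) :
    IsSubpoly (fun x : PrimeCharacter ↦ (x.1 : ℕ)) fun x ↦ logDerivNorm t x.2 := by
  obtain ⟨C, hC⟩ := exists_logDerivNorm_one_le t
  have hN (x : PrimeCharacter) : (x.1 : ℕ) ≠ 0 := x.1.2.ne_zero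
  have hderiv : IsSubpoly (fun x : PrimeCharacter ↦ (x.1 : ℕ)) fun x ↦
      (20 + 4 * ‖(1 + t * I : ℂ)‖) * (1 + Real.log x.1) ^ 2 :=
    (IsSubpoly.const hN _).mul (((IsSubpoly.const hN 1).add (.log _)).pow hN 2)
  refine ((IsSubpoly.const hN |C|).add (hderiv.mul (isSubpoly_inv_norm_LFunction t))).mono
    fun ⟨p, χ⟩ ↦ ?_
  rw [abs_of_nonneg (logDerivNorm_nonneg t χ)]
  by_cases hχ : χ = 1
  · subst hχ
    simpa using (hC p).trans (le_abs_self C)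
  · rw [logDerivNorm_of_ne_one hχ, logDeriv_apply, norm_div, div_eq_mul_inv, if_neg hχ]
    exact (mul_le_mul_of_nonneg_right (norm_deriv_LFunction_le hχ (by simp))
      (by positivity)).trans (le_add_of_nonneg_left (abs_nonneg C))

theorem abs_logDerivNorm_pow_sub_le {p : ℕ} [Fact p.Prime] (χ : DirichletCharacter ℂ p)
    {t : ℝ} {s : ℂ} (hs : s = 1 + t * I) (n : ℕ) :
    |logDerivNorm t χ ^ n - ‖mollifiedLogDeriv χ s‖ ^ n| ≤
      ((logDerivNorm t χ + 4 * (‖s‖ + 1) * (1 + logDerivNorm t χ) * ‖mollifier χ s‖) *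
          (n * (logDerivNorm t χ + ‖mollifiedLogDeriv χ s‖) ^ (n - 1)) +
        (logDerivNorm t χ ^ n + ‖mollifiedLogDeriv χ s‖ ^ n)) *
      (‖mollifierDefect χ s‖ + 1 / p + if χ = 1 then 1 else 0) := by
  set v := logDerivNorm t χ with hv
  set w := ‖mollifiedLogDeriv χ s‖
  set A := v + 4 * (‖s‖ + 1) * (1 + v) * ‖mollifier χ s‖
  set e := ‖mollifierDefect χ s‖ + 1 / (p : ℝ)
  have hv0 : 0 ≤ v := logDerivNorm_nonneg t χ
  have hw0 : 0 ≤ w := norm_nonneg _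
  have hA0 : 0 ≤ A := by positivity
  have he0 : 0 ≤ e := by positivity
  by_cases hχ : χ = 1
  · rw [if_pos hχ]
    have hsub : |v ^ n - w ^ n| ≤ v ^ n + w ^ n := by
      simpa [abs_of_nonneg, hv0, hw0] using abs_sub (v ^ n) (w ^ n)
    refine hsub.trans ((le_add_of_nonneg_left (by positivity)).trans
      (le_mul_of_one_le_right (by positivity) (le_add_of_nonneg_left he0)))
  · rw [if_neg hχ, add_zero]
    rw [logDerivNorm_of_ne_one hχ, ← hs] at hv
    have hL : LFunction χ s ≠ 0 :=
      LFunction_ne_zero_of_one_le_re χ (Or.inl hχ) (by simp [hs])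
    have hdiff : |v - w| ≤ A * e := by
      have := (abs_norm_sub_norm_le _ _).trans
        (norm_logDeriv_sub_mollifiedLogDeriv_le hχ (by simp [hs]) hL)
      rwa [← hv] at this
    calc |v ^ n - w ^ n| ≤ |v - w| * n * max |v| |w| ^ (n - 1) := abs_pow_sub_pow_le v w n
      _ ≤ A * e * n * (v + w) ^ (n - 1) := by
        rw [abs_of_nonneg hv0, abs_of_nonneg hw0]
        gcongr
        exact max_le_add_of_nonneg hv0 hw0
      _ ≤ (A * (n * (v + w) ^ (n - 1)) + (v ^ n + w ^ n)) * e := by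
        have : 0 ≤ (v ^ n + w ^ n) * e := by positivity
        linear_combination this

theorem expect_mollifierDefect_add_sq_le (p : ℕ) [Fact p.Prime] (s : ℂ) :
    p * 𝔼 χ : DirichletCharacter ℂ p,
        (‖mollifierDefect χ s‖ + 1 / p + if χ = 1 then 1 else 0) ^ 2 ≤
      3 * (p * 𝔼 χ : DirichletCharacter ℂ p, ‖mollifierDefect χ s‖ ^ 2) + 9 := by
  have hp2 : (2 : ℝ) ≤ p := mod_cast (Fact.out : p.Prime).two_le
  have hsq (χ : DirichletCharacter ℂ p) :
      (‖mollifierDefect χ s‖ + 1 / p + if χ = 1 then 1 else 0) ^ 2 ≤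
        3 * ‖mollifierDefect χ s‖ ^ 2 + 3 * (1 / p) ^ 2 + 3 * if χ = 1 then 1 else 0 := by
    split_ifs <;>
    nlinarith [sq_nonneg (‖mollifierDefect χ s‖ - 1 / p), sq_nonneg (‖mollifierDefect χ s‖ - 1),
      sq_nonneg (1 / (p : ℝ) - 1)]
  have hone : (𝔼 χ : DirichletCharacter ℂ p, if χ = 1 then (1 : ℝ) else 0) = 1 / (p - 1) := by
    rw [Fintype.expect_eq_sum_div_card, card_dirichletCharacter_prime, Finset.sum_ite_eq',
      if_pos (Finset.mem_univ _)]
  have hinv : p * (1 / (p : ℝ)) ^ 2 ≤ 1 := by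
    field_simp
    linarith
  have hpred : p * (1 / ((p : ℝ) - 1)) ≤ 2 := by
    rw [mul_one_div, div_le_iff₀ (by linarith)]
    linarith
  have hmean := Finset.expect_le_expect (s := Finset.univ) fun χ _ ↦ hsq χ
  rw [Finset.expect_add_distrib, Finset.expect_add_distrib, Fintype.expect_const,
    ← Finset.mul_expect, ← Finset.mul_expect, hone] at hmean
  have := mul_le_mul_of_nonneg_left hmean (by positivity : (0 : ℝ) ≤ p)
  linarith

theorem isSubpoly_expect_logDerivNorm_pow_sub_sq (t : ℝ) (n : ℕ) :
    IsSubpoly (fun p : Nat.Primes ↦ (p : ℕ)) fun p ↦ p *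
      (𝔼 χ : DirichletCharacter ℂ p,
        (logDerivNorm t χ ^ n - ‖mollifiedLogDeriv χ (1 + t * I)‖ ^ n)) ^ 2 := by
  set s : ℂ := 1 + t * I with hs
  have hre : s.re = 1 := by simp [hs]
  have hN (x : PrimeCharacter) : (x.1 : ℕ) ≠ 0 := x.1.2.ne_zero
  have hN' (p : Nat.Primes) : (p : ℕ) ≠ 0 := p.2.ne_zero
  have hv := isSubpoly_logDerivNorm t
  have hw := isSubpoly_norm_mollifiedLogDeriv hre.ge
  have hA := ((hv.add (((IsSubpoly.const hN (4 * (‖s‖ + 1))).mul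
    ((IsSubpoly.const hN 1).add hv)).mul (isSubpoly_norm_mollifier hre.ge))).mul
      ((IsSubpoly.const hN n).mul ((hv.add hw).pow hN (n - 1)))).add
        ((hv.pow hN n).add (hw.pow hN n))
  have he := ((IsSubpoly.const hN' 3).mul (isSubpoly_expect_mollifierDefect hre)).add
    (IsSubpoly.const hN' 9)
  refine ((hA.pow hN 2).expect.mul he).mono fun p ↦ ?_
  have hp0 : (0 : ℝ) ≤ p := Nat.cast_nonneg _
  rw [abs_of_nonneg (by positivity)]
  have hmean := (Finset.abs_expect_le _ _).trans (Finset.expect_le_expect (s := Finset.univ)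
    fun (χ : DirichletCharacter ℂ p) _ ↦ abs_logDerivNorm_pow_sub_le χ hs n)
  have hcauchy := (sq_le_sq' (neg_le_of_abs_le hmean) (le_of_abs_le hmean)).trans
    (Finset.expect_mul_sq_le_sq_mul_sq _ _ _)
  refine (mul_le_mul_of_nonneg_left hcauchy hp0).trans ?_
  rw [mul_left_comm]
  exact mul_le_mul_of_nonneg_left (expect_mollifierDefect_add_sq_le p s)
    (Finset.expect_nonneg fun _ _ ↦ sq_nonneg _)

theorem tendsto_expect_logDerivNorm_pow (t : ℝ) {k : ℕ} (hk : k ≠ 0) :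
    Tendsto (fun p : Nat.Primes ↦ 𝔼 χ : DirichletCharacter ℂ p, logDerivNorm t χ ^ (2 * k))
      (comap (↑) (atTop : Filter ℕ)) (𝓝 (moment k)) := by
  have hsq := (isSubpoly_expect_logDerivNorm_pow_sub_sq t (2 * k)).tendsto_zero_of_natCast_mul
    tendsto_comap
  have hdiff : Tendsto (fun p : Nat.Primes ↦ 𝔼 χ : DirichletCharacter ℂ p,
      (logDerivNorm t χ ^ (2 * k) - ‖mollifiedLogDeriv χ (1 + t * I)‖ ^ (2 * k)))
      (comap (↑) (atTop : Filter ℕ)) (𝓝 0) := by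
    rw [tendsto_zero_iff_abs_tendsto_zero]
    simpa [Function.comp_def, Real.sqrt_sq_eq_abs] using hsq.sqrt
  have hmain := (isSubpoly_expect_mollifiedLogDeriv_sub (s := 1 + t * I) (by simp)
    hk).tendsto_zero_of_natCast_mul tendsto_comap
  have hpartial := (summable_vonMangoldt_pow_div_sq k).hasSum.tendsto_sum_nat.comp
    (tendsto_comap : Tendsto ((↑) : Nat.Primes → ℕ) _ atTop)
  simpa [Finset.expect_sub_distrib, Function.comp_def, moment] using
    (hdiff.add hmain).add hpartial

theorem average_eq_expect_logDerivNorm_pow (t : ℝ) {k : ℕ} (hk : k ≠ 0) (p : ℕ) [Fact p.Prime] :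
    (1 / ((p : ℝ) - 1)) * ∑ χ : DirichletCharacter ℂ p, (if t = 0 ∧ χ = 1 then 0 else
      ‖deriv (LFunction χ) (1 + t * I) / LFunction χ (1 + t * I)‖ ^ (2 * k)) =
        𝔼 χ : DirichletCharacter ℂ p, logDerivNorm t χ ^ (2 * k) := by
  simp only [Fintype.expect_eq_sum_div_card, card_dirichletCharacter_prime, div_eq_inv_mul,
    mul_one, logDerivNorm, logDeriv_apply, ite_pow, zero_pow (mul_ne_zero two_ne_zero hk)]

theorem tendsto_average_iff (t : ℝ) {k : ℕ} (hk : k ≠ 0) (x : ℝ) :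
    Tendsto
      (fun p : ℕ =>
        if h : p.Prime then
          letI : NeZero p := ⟨h.pos.ne'⟩
          (1 / ((p : ℝ) - 1)) *
            ∑ χ : DirichletCharacter ℂ p,
              if t = 0 ∧ χ = 1 then 0 else
                ‖deriv (DirichletCharacter.LFunction χ) (1 + t * I) /
                    DirichletCharacter.LFunction χ (1 + t * I)‖ ^ (2 * k)
        else 0)
      (atTop ⊓ Filter.principal {p : ℕ | p.Prime}) (𝓝 x) ↔
    Tendsto (fun p : Nat.Primes ↦ 𝔼 χ : DirichletCharacter ℂ p, logDerivNorm t χ ^ (2 * k))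
      (comap (↑) (atTop : Filter ℕ)) (𝓝 x) := by
  rw [← map_comap_setCoe_val, tendsto_map'_iff]
  exact tendsto_congr fun (p : Nat.Primes) ↦
    (dif_pos p.2).trans (average_eq_expect_logDerivNorm_pow t hk p)

end Average

section Existence

open scoped BoundedContinuousFunction NNReal ENNReal

variable {E : Type*} [MeasurableSpace E]

theorem isTightMeasureSet_of_lintegral_edist_le [PseudoMetricSpace E] [ProperSpace E]
    [OpensMeasurableSpace E] {S : Set (Measure E)} {B : ℝ≥0∞} (hB : B ≠ ∞) (x₀ : E)
    (hS : ∀ μ ∈ S, ∫⁻ x, edist x x₀ ∂μ ≤ B) : IsTightMeasureSet S := by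
  refine isTightMeasureSet_of_tendsto_measure_compl_closedBall (x := x₀) ?_
  have hlim : Tendsto (fun r : ℝ ↦ B / ENNReal.ofReal r) atTop (𝓝 0) := by
    simpa using ENNReal.Tendsto.const_div ENNReal.tendsto_ofReal_atTop (Or.inr hB)
  refine tendsto_of_tendsto_of_tendsto_of_le_of_le' tendsto_const_nhds hlim
    (.of_forall fun _ ↦ zero_le) ?_
  filter_upwards [eventually_gt_atTop 0] with r hr
  refine iSup₂_le fun μ hμ ↦ ?_
  have hsub : (Metric.closedBall x₀ r)ᶜ ⊆ {x | ENNReal.ofReal r ≤ edist x x₀} := fun x hx ↦ by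
    rw [Set.mem_compl_iff, Metric.mem_closedBall, not_le] at hx
    exact (ENNReal.ofReal_le_ofReal hx.le).trans (edist_dist x x₀).ge
  calc μ (Metric.closedBall x₀ r)ᶜ
      ≤ μ {x | ENNReal.ofReal r ≤ edist x x₀} := measure_mono hsub
    _ ≤ (∫⁻ x, edist x x₀ ∂μ) / ENNReal.ofReal r :=
        meas_ge_le_lintegral_div (by fun_prop) (by simpa using hr) ENNReal.ofReal_ne_top
    _ ≤ B / ENNReal.ofReal r := by gcongr; exact hS μ hμ

theorem exists_ultrafilter_tendsto_of_lintegral_edist_le [MetricSpace E] [ProperSpace E]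
    [BorelSpace E] {ι : Type*} {l : Filter ι} [l.NeBot] {ν : ι → ProbabilityMeasure E}
    {B : ℝ≥0∞} (hB : B ≠ ∞) (x₀ : E)
    (hν : ∀ᶠ i in l, ∫⁻ x, edist x x₀ ∂(ν i : Measure E) ≤ B) :
    ∃ (U : Ultrafilter ι) (μ : ProbabilityMeasure E), ↑U ≤ l ∧ Tendsto ν U (𝓝 μ) := by
  let S : Set (ProbabilityMeasure E) := {μ | ∫⁻ x, edist x x₀ ∂(μ : Measure E) ≤ B}
  have hcompact : IsCompact (closure S) := by
    refine isCompact_closure_of_isTightMeasureSet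
      (isTightMeasureSet_of_lintegral_edist_le hB x₀ ?_)
    rintro _ ⟨μ, hμ, rfl⟩
    exact hμ
  obtain ⟨μ, -, hμ⟩ := hcompact.ultrafilter_le_nhds ((Ultrafilter.of l).map ν)
    (le_principal_iff.2 (Ultrafilter.of_le l (hν.mono fun _ hi ↦ subset_closure hi)))
  exact ⟨Ultrafilter.of l, μ, Ultrafilter.of_le l, hμ⟩

section Truncation

variable {X : Type*} [TopologicalSpace X]

/-- The truncation `min f R` of a continuous function `f` with values in `[0, ∞)`. -/
noncomputable def truncation (f : C(X, ℝ≥0)) (R : ℝ≥0) : X →ᵇ ℝ≥0 :=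
  BoundedContinuousFunction.mkOfBound (f ⊓ .const X R) R fun _ _ ↦
    abs_sub_le_of_nonneg_of_le NNReal.zero_le_coe (min_le_right _ _) NNReal.zero_le_coe
      (min_le_right _ _)

theorem truncation_apply (f : C(X, ℝ≥0)) (R : ℝ≥0) (x : X) : truncation f R x = min (f x) R := rfl

theorem le_truncation_add_sq_div (f : C(X, ℝ≥0)) {R : ℝ≥0} (hR : R ≠ 0) (x : X) :
    f x ≤ truncation f R x + f x ^ 2 / R := by
  rw [truncation_apply]
  rcases le_total (f x) R with h | h
  · simp [min_eq_left h]
  · rw [sq, mul_div_assoc]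
    exact le_add_left (le_mul_of_one_le_right' ((one_le_div₀ (pos_of_ne_zero hR)).2 h))

variable [MeasurableSpace X] [OpensMeasurableSpace X]

theorem iSup_lintegral_truncation (f : C(X, ℝ≥0)) (μ : Measure X) :
    ⨆ n : ℕ, ∫⁻ x, truncation f n x ∂μ = ∫⁻ x, f x ∂μ := by
  rw [← lintegral_iSup (fun n ↦ by fun_prop)
    fun n m hnm x ↦ by simp only [truncation_apply]; gcongr]
  refine lintegral_congr fun x ↦ le_antisymm (iSup_le fun n ↦ ?_) ?_
  · exact ENNReal.coe_le_coe.2 (min_le_left _ _)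
  · obtain ⟨n, hn⟩ := exists_nat_ge (f x)
    exact le_iSup_of_le n (by rw [truncation_apply, min_eq_left hn])

theorem lintegral_le_truncation_add_sq_div (f : C(X, ℝ≥0)) {R : ℝ≥0} (hR : R ≠ 0)
    (μ : Measure X) :
    ∫⁻ x, f x ∂μ ≤ ∫⁻ x, truncation f R x ∂μ + (∫⁻ x, (f x : ℝ≥0∞) ^ 2 ∂μ) / R :=
  calc ∫⁻ x, f x ∂μ ≤ ∫⁻ x, (truncation f R x + (f x : ℝ≥0∞) ^ 2 / R) ∂μ :=
        lintegral_mono fun x ↦ by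
          have := ENNReal.coe_le_coe.2 (le_truncation_add_sq_div f hR x)
          rwa [ENNReal.coe_add, ENNReal.coe_div hR, ENNReal.coe_pow] at this
    _ = _ := by
        simp only [div_eq_mul_inv]
        rw [lintegral_add_left (by fun_prop), lintegral_mul_const _ (by fun_prop)]

theorem lintegral_eq_of_tendsto_of_lintegral_sq_le {ι : Type*} {l : Filter ι} [l.NeBot]
    {ν : ι → ProbabilityMeasure X} {μ : ProbabilityMeasure X} (hν : Tendsto ν l (𝓝 μ))
    (f : C(X, ℝ≥0)) {a B : ℝ≥0∞} (hB : B ≠ ∞)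
    (ha : Tendsto (fun i ↦ ∫⁻ x, f x ∂(ν i : Measure X)) l (𝓝 a))
    (hsq : ∀ᶠ i in l, ∫⁻ x, (f x : ℝ≥0∞) ^ 2 ∂(ν i : Measure X) ≤ B) :
    ∫⁻ x, f x ∂(μ : Measure X) = a := by
  have hweak (R : ℝ≥0) : Tendsto (fun i ↦ ∫⁻ x, truncation f R x ∂(ν i : Measure X)) l
      (𝓝 (∫⁻ x, truncation f R x ∂(μ : Measure X))) :=
    ProbabilityMeasure.tendsto_iff_forall_lintegral_tendsto.1 hν _
  rw [← iSup_lintegral_truncation]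
  refine le_antisymm (iSup_le fun n ↦ le_of_tendsto_of_tendsto' (hweak n) ha fun i ↦
    lintegral_mono fun x ↦ ENNReal.coe_le_coe.2 (min_le_left _ _)) ?_
  have hge (R : ℝ≥0) (hR : R ≠ 0) : a ≤ ∫⁻ x, truncation f R x ∂(μ : Measure X) + B / R :=
    le_of_tendsto_of_tendsto ha ((hweak R).add_const _) <| hsq.mono fun i hi ↦
      (lintegral_le_truncation_add_sq_div f hR _).trans
        (add_le_add_right (ENNReal.div_le_div_right hi _) _)
  have hlim : Tendsto (fun n : ℕ ↦ (⨆ n : ℕ, ∫⁻ x, truncation f n x ∂(μ : Measure X)) + B / n)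
      atTop (𝓝 (⨆ n : ℕ, ∫⁻ x, truncation f n x ∂(μ : Measure X))) := by
    simpa using (ENNReal.Tendsto.const_div ENNReal.tendsto_nat_nhds_top (Or.inr hB)).const_add
      (⨆ n : ℕ, ∫⁻ x, truncation f n x ∂(μ : Measure X))
  refine ge_of_tendsto hlim ?_
  filter_upwards [eventually_ne_atTop 0] with n hn
  refine (hge n (mod_cast hn)).trans (add_le_add ?_ (by push_cast; rfl))
  exact le_iSup (fun n : ℕ ↦ ∫⁻ x, truncation f n x ∂(μ : Measure X)) n

end Truncation

theorem exists_probabilityMeasure_of_tendsto_lintegral_pow {ι : Type*} {l : Filter ι} [l.NeBot]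
    {ν : ι → ProbabilityMeasure ℝ≥0} {m : ℕ → ℝ≥0}
    (hm : ∀ k ≠ 0, Tendsto (fun i ↦ ∫⁻ v, (v : ℝ≥0∞) ^ k ∂(ν i : Measure ℝ≥0)) l (𝓝 (m k))) :
    ∃ μ : ProbabilityMeasure ℝ≥0, ∀ k ≠ 0, ∫⁻ v, (v : ℝ≥0∞) ^ k ∂(μ : Measure ℝ≥0) = m k := by
  have hbdd (k : ℕ) (hk : k ≠ 0) :
      ∀ᶠ i in l, ∫⁻ v, (v : ℝ≥0∞) ^ k ∂(ν i : Measure ℝ≥0) ≤ m k + 1 :=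
    ((hm k hk).eventually_lt_const (ENNReal.lt_add_right ENNReal.coe_ne_top one_ne_zero)).mono
      fun _ ↦ le_of_lt
  obtain ⟨U, μ, hU, hμ⟩ := exists_ultrafilter_tendsto_of_lintegral_edist_le (ν := ν) (l := l)
    (B := m 1 + 1) (by finiteness) 0 (by
      simpa [edist_nndist, NNReal.nndist_zero_eq_val'] using hbdd 1 one_ne_zero)
  refine ⟨μ, fun k hk ↦ ?_⟩
  let powMap : C(ℝ≥0, ℝ≥0) := ⟨(· ^ k), by fun_prop⟩
  have hpow (v : ℝ≥0) : (powMap v : ℝ≥0∞) = (v : ℝ≥0∞) ^ k := ENNReal.coe_pow v k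
  simpa only [hpow] using lintegral_eq_of_tendsto_of_lintegral_sq_le hμ powMap
    (B := m (k * 2) + 1) (by finiteness) (by simpa only [hpow] using (hm k hk).mono_left hU)
    (by simpa only [hpow, pow_mul] using (hbdd (k * 2) (by omega)).filter_mono hU)

end Existence

section Determinacy

open ProbabilityTheory
open scoped ENNReal

theorem ext_of_integral_pow_eq {μ μ' : Measure ℝ} [IsFiniteMeasure μ] [IsFiniteMeasure μ']
    (hμ : 0 ∈ interior (integrableExpSet id μ)) (hμ' : 0 ∈ interior (integrableExpSet id μ'))
    (h : ∀ n : ℕ, ∫ x, x ^ n ∂μ = ∫ x, x ^ n ∂μ') : μ = μ' := by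
  let U : Set ℂ := reLm ⁻¹' (interior (integrableExpSet id μ) ∩ interior (integrableExpSet id μ'))
  have hf : AnalyticOnNhd ℂ (complexMGF id μ) U := analyticOnNhd_complexMGF.mono fun _ hz ↦ hz.1
  have hg : AnalyticOnNhd ℂ (complexMGF id μ') U := analyticOnNhd_complexMGF.mono fun _ hz ↦ hz.2
  have hU : IsPreconnected U :=
    ((convex_integrableExpSet.interior.inter convex_integrableExpSet.interior).linear_preimage
      reLm).isPreconnected
  have h0 : (0 : ℂ) ∈ U := ⟨by simpa using hμ, by simpa using hμ'⟩
  have hderiv (n : ℕ) :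
      iteratedDeriv n (complexMGF id μ) 0 = iteratedDeriv n (complexMGF id μ') 0 := by
    rw [iteratedDeriv_complexMGF (by simpa using hμ), iteratedDeriv_complexMGF (by simpa using hμ')]
    have := congrArg ((↑) : ℝ → ℂ) (h n)
    rw [← integral_complex_ofReal, ← integral_complex_ofReal] at this
    simpa using this
  have hlocal : complexMGF id μ =ᶠ[𝓝 0] complexMGF id μ' := by
    have hsub : AnalyticAt ℂ (complexMGF id μ - complexMGF id μ') 0 := (hf 0 h0).sub (hg 0 h0)
    have htop : analyticOrderAt (complexMGF id μ - complexMGF id μ') 0 = ⊤ :=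
      ENat.eq_top_iff_forall_ge.2 fun n ↦
        (natCast_le_analyticOrderAt_iff_iteratedDeriv_eq_zero hsub).2 fun i _ ↦ by
          rw [iteratedDeriv_sub (hf 0 h0).contDiffAt (hg 0 h0).contDiffAt, hderiv, sub_self]
    exact (analyticOrderAt_eq_top.1 htop).mono fun _ ↦ sub_eq_zero.1
  have hEqOn : Set.EqOn (complexMGF id μ) (complexMGF id μ') U :=
    hf.eqOn_of_preconnected_of_eventuallyEq hg hU h0 hlocal
  refine Measure.ext_of_charFun (funext fun t ↦ ?_)
  have ht : t * I ∈ U := by simpa [U] using ⟨hμ, hμ'⟩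
  rw [← complexMGF_id_mul_I, ← complexMGF_id_mul_I, hEqOn ht]

/-- Twice the law of `±√v` where `v` has law `μ` and the sign is an independent fair coin. It turns
a moment problem on `[0, ∞)` into one on `ℝ` whose moments grow more slowly. -/
noncomputable def sqrtSymmetrization (μ : Measure ℝ) : Measure ℝ :=
  μ.map Real.sqrt + μ.map fun v ↦ -√v

instance (μ : Measure ℝ) [IsFiniteMeasure μ] : IsFiniteMeasure (sqrtSymmetrization μ) := by
  unfold sqrtSymmetrization
  infer_instance

variable {μ μ' : Measure ℝ}

theorem integrable_sqrtSymmetrization_iff {f : ℝ → ℝ} (hf : Measurable f) :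
    Integrable f (sqrtSymmetrization μ) ↔
      Integrable (fun v ↦ f √v) μ ∧ Integrable (fun v ↦ f (-√v)) μ := by
  rw [sqrtSymmetrization, integrable_add_measure,
    integrable_map_measure hf.aestronglyMeasurable (by fun_prop),
    integrable_map_measure hf.aestronglyMeasurable (by fun_prop)]
  rfl

theorem integral_sqrtSymmetrization {f : ℝ → ℝ} (hf : Measurable f)
    (hint : Integrable f (sqrtSymmetrization μ)) :
    ∫ x, f x ∂sqrtSymmetrization μ = ∫ v, f √v ∂μ + ∫ v, f (-√v) ∂μ := by
  have hint' := integrable_add_measure.1 hint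
  rw [sqrtSymmetrization, integral_add_measure hint'.1 hint'.2,
    integral_map (by fun_prop) hf.aestronglyMeasurable,
    integral_map (by fun_prop) hf.aestronglyMeasurable]

theorem integral_pow_sqrtSymmetrization (hμ : ∀ᵐ v ∂μ, 0 ≤ v) {n : ℕ}
    (hint : Integrable (fun x : ℝ ↦ x ^ n) (sqrtSymmetrization μ)) :
    ∫ x, x ^ n ∂sqrtSymmetrization μ = if Even n then 2 * ∫ v, v ^ (n / 2) ∂μ else 0 := by
  rw [integral_sqrtSymmetrization (by fun_prop) hint]
  split_ifs with hn
  · have hsqrt : ∫ v, √v ^ n ∂μ = ∫ v, v ^ (n / 2) ∂μ :=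
      integral_congr_ae <| hμ.mono fun v hv ↦ by
        obtain ⟨j, rfl⟩ := hn.two_dvd
        simp only [pow_mul, Real.sq_sqrt hv, Nat.mul_div_cancel_left j two_pos]
    simp only [hn.neg_pow, hsqrt, two_mul]
  · simp only [(Nat.not_even_iff_odd.1 hn).neg_pow, integral_neg, add_neg_cancel]

theorem map_sq_sqrtSymmetrization (hμ : ∀ᵐ v ∂μ, 0 ≤ v) :
    (sqrtSymmetrization μ).map (· ^ 2) = (2 : ℝ≥0∞) • μ := by
  have hsq : (fun v ↦ √v ^ 2) =ᵐ[μ] id := hμ.mono fun _ hv ↦ Real.sq_sqrt hv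
  rw [sqrtSymmetrization, Measure.map_add _ _ (by fun_prop),
    Measure.map_map (by fun_prop) (by fun_prop), Measure.map_map (by fun_prop) (by fun_prop)]
  simp only [Function.comp_def, neg_sq, Measure.map_congr hsq, Measure.map_id, two_smul]

theorem zero_mem_interior_integrableExpSet_sqrtSymmetrization {a : ℝ} (ha : 0 < a)
    (hcosh : Integrable (fun v ↦ Real.cosh (a * √v)) μ) :
    0 ∈ interior (integrableExpSet id (sqrtSymmetrization μ)) := by
  have hexp {s : ℝ} (hs : |s| < a) : Integrable (fun v ↦ Real.exp (s * √v)) μ :=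
    (hcosh.const_mul 2).mono' (by fun_prop) <| ae_of_all _ fun v ↦ by
      have hmono : Real.exp (s * √v) ≤ Real.exp (a * √v) := by
        gcongr
        exact (le_abs_self s).trans hs.le
      rw [Real.norm_of_nonneg (Real.exp_pos _).le, Real.cosh_eq]
      linarith [Real.exp_pos (-(a * √v))]
  refine mem_interior_iff_mem_nhds.2 (mem_of_superset (Metric.ball_mem_nhds 0 ha) fun s hs ↦ ?_)
  rw [mem_ball_zero_iff, Real.norm_eq_abs] at hs
  refine (integrable_sqrtSymmetrization_iff (by fun_prop)).2 ⟨hexp hs, ?_⟩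
  simpa using hexp (s := -s) (by rwa [abs_neg])

theorem ext_of_integral_pow_eq_of_integrable_cosh_sqrt [IsFiniteMeasure μ] [IsFiniteMeasure μ']
    (hμ : ∀ᵐ v ∂μ, 0 ≤ v) (hμ' : ∀ᵐ v ∂μ', 0 ≤ v) {a : ℝ} (ha : 0 < a)
    (hcosh : Integrable (fun v ↦ Real.cosh (a * √v)) μ)
    (hcosh' : Integrable (fun v ↦ Real.cosh (a * √v)) μ')
    (h : ∀ k : ℕ, ∫ v, v ^ k ∂μ = ∫ v, v ^ k ∂μ') : μ = μ' := by
  have h0 := zero_mem_interior_integrableExpSet_sqrtSymmetrization ha hcosh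
  have h0' := zero_mem_interior_integrableExpSet_sqrtSymmetrization ha hcosh'
  have hsymm : sqrtSymmetrization μ = sqrtSymmetrization μ' :=
    ext_of_integral_pow_eq h0 h0' fun n ↦ by
      rw [integral_pow_sqrtSymmetrization hμ (integrable_pow_of_mem_interior_integrableExpSet h0 n),
        integral_pow_sqrtSymmetrization hμ' (integrable_pow_of_mem_interior_integrableExpSet h0' n),
        h]
  have htwo : (2 : ℝ≥0∞) • μ = (2 : ℝ≥0∞) • μ' := by
    rw [← map_sq_sqrtSymmetrization hμ, ← map_sq_sqrtSymmetrization hμ', hsymm]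
  ext s -
  exact (ENNReal.mul_right_inj (by simp) (by simp)).1 (congrArg (· s) htwo)

theorem lintegral_cosh_sqrt (hμ : ∀ᵐ v ∂μ, 0 ≤ v) (a : ℝ) :
    ∫⁻ v, ENNReal.ofReal (Real.cosh (a * √v)) ∂μ =
      ∑' k : ℕ, ∫⁻ v, ENNReal.ofReal ((a ^ 2) ^ k / (2 * k).factorial * v ^ k) ∂μ := by
  rw [← lintegral_tsum fun k ↦ by fun_prop]
  refine lintegral_congr_ae (hμ.mono fun v hv ↦ ?_)
  have hterm (k : ℕ) : (a * √v) ^ (2 * k) / (2 * k).factorial =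
      (a ^ 2) ^ k / (2 * k).factorial * v ^ k := by
    rw [pow_mul, mul_pow, Real.sq_sqrt hv, mul_pow, div_mul_eq_mul_div]
  have hsum := Real.hasSum_cosh (a * √v)
  simp only [hterm] at hsum
  simp only [← hsum.tsum_eq]
  exact ENNReal.ofReal_tsum_of_nonneg (fun k ↦ by positivity) hsum.summable

theorem integrable_cosh_sqrt (hμ : ∀ᵐ v ∂μ, 0 ≤ v) {a B C : ℝ} (hC : 0 ≤ C)
    (haC : a ^ 2 * C < 1) (hint : ∀ k : ℕ, Integrable (fun v : ℝ ↦ v ^ k) μ)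
    (hB : ∀ k : ℕ, ∫ v, v ^ k ∂μ ≤ B * (C ^ k * (2 * k).factorial)) :
    Integrable (fun v ↦ Real.cosh (a * √v)) μ := by
  have hterm (k : ℕ) : ∫⁻ v, ENNReal.ofReal ((a ^ 2) ^ k / (2 * k).factorial * v ^ k) ∂μ ≤
      ENNReal.ofReal (B * (a ^ 2 * C) ^ k) := by
    rw [← ofReal_integral_eq_lintegral_ofReal ((hint k).const_mul _)
      (hμ.mono fun v hv ↦ by positivity), integral_const_mul]
    refine ENNReal.ofReal_le_ofReal ?_
    calc (a ^ 2) ^ k / (2 * k).factorial * ∫ v, v ^ k ∂μ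
        ≤ (a ^ 2) ^ k / (2 * k).factorial * (B * (C ^ k * (2 * k).factorial)) := by
          gcongr; exact hB k
      _ = B * (a ^ 2 * C) ^ k := by rw [mul_pow]; field_simp
  have hB0 : 0 ≤ B := measureReal_nonneg.trans (by simpa using hB 0)
  refine ⟨by fun_prop, ?_⟩
  rw [hasFiniteIntegral_iff_ofReal (ae_of_all _ fun v ↦ (Real.cosh_pos _).le),
    lintegral_cosh_sqrt hμ]
  refine (ENNReal.tsum_le_tsum hterm).trans_lt ?_
  rw [← ENNReal.ofReal_tsum_of_nonneg (fun k ↦ by positivity)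
    ((summable_geometric_of_lt_one (by positivity) haC).mul_left B)]
  exact ENNReal.ofReal_lt_top

end Determinacy

section Stieltjes

open scoped NNReal ENNReal

/-- `μ` solves the Stieltjes moment problem for `m`: it is a probability measure on `[0, ∞)` whose
`k`-th moment is `m k` for every `k ≥ 1`. -/
structure IsStieltjesSolution (m : ℕ → ℝ) (μ : Measure ℝ) : Prop where
  isProbabilityMeasure : IsProbabilityMeasure μ
  measure_Iio : μ (Set.Iio 0) = 0
  setIntegral_pow : ∀ k : ℕ, 0 < k → ∫ v in Set.Ici (0 : ℝ), v ^ k ∂μ = m k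

namespace IsStieltjesSolution

variable {m : ℕ → ℝ} {μ μ' : Measure ℝ}

theorem ae_nonneg (h : IsStieltjesSolution m μ) : ∀ᵐ v ∂μ, 0 ≤ v :=
  (measure_eq_zero_iff_ae_notMem.1 h.measure_Iio).mono fun _ hv ↦ not_lt.1 hv

theorem integral_pow (h : IsStieltjesSolution m μ) {k : ℕ} (hk : k ≠ 0) :
    ∫ v, v ^ k ∂μ = m k := by
  have hmem : ∀ᵐ v ∂μ, v ∈ Set.Ici 0 := h.ae_nonneg
  rw [← h.setIntegral_pow k hk.bot_lt, Measure.restrict_eq_self_of_ae_mem hmem]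

theorem integrable_cosh_sqrt (h : IsStieltjesSolution m μ) (hm : ∀ k ≠ 0, m k ≠ 0) {a B C : ℝ}
    (hC : 0 ≤ C) (haC : a ^ 2 * C < 1) (hB : ∀ k, m k ≤ B * (C ^ k * (2 * k).factorial)) :
    Integrable (fun v ↦ Real.cosh (a * √v)) μ := by
  have := h.isProbabilityMeasure
  refine DirichletMoments.integrable_cosh_sqrt h.ae_nonneg (B := max B 1) hC haC
    (fun k ↦ ?_) fun k ↦ ?_
  · rcases eq_or_ne k 0 with rfl | hk
    · simp
    · exact .of_integral_ne_zero (by rw [h.integral_pow hk]; exact hm k hk)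
  · rcases eq_or_ne k 0 with rfl | hk
    · simp
    · rw [h.integral_pow hk]
      exact (hB k).trans (by gcongr; exact le_max_left B 1)

theorem unique (h : IsStieltjesSolution m μ) (h' : IsStieltjesSolution m μ')
    (hm : ∀ k ≠ 0, m k ≠ 0) {B C : ℝ} (hC : 0 < C)
    (hB : ∀ k, m k ≤ B * (C ^ k * (2 * k).factorial)) : μ = μ' := by
  have := h.isProbabilityMeasure
  have := h'.isProbabilityMeasure
  obtain ⟨a, ha, haC⟩ : ∃ a : ℝ, 0 < a ∧ a ^ 2 * C < 1 := by
    refine ⟨√(1 / (2 * C)), by positivity, ?_⟩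
    rw [Real.sq_sqrt (by positivity)]
    field_simp
    norm_num
  refine ext_of_integral_pow_eq_of_integrable_cosh_sqrt h.ae_nonneg h'.ae_nonneg ha
    (h.integrable_cosh_sqrt hm hC.le haC hB) (h'.integrable_cosh_sqrt hm hC.le haC hB) fun k ↦ ?_
  rcases eq_or_ne k 0 with rfl | hk
  · simp
  · rw [h.integral_pow hk, h'.integral_pow hk]

theorem map_coe {μ : Measure ℝ≥0} [IsProbabilityMeasure μ] {m : ℕ → ℝ≥0}
    (h : ∀ k ≠ 0, ∫⁻ v, (v : ℝ≥0∞) ^ k ∂μ = m k) :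
    IsStieltjesSolution (fun k ↦ m k) (μ.map (↑)) where
  isProbabilityMeasure := Measure.isProbabilityMeasure_map (by fun_prop)
  measure_Iio := by
    rw [Measure.map_apply (by fun_prop) measurableSet_Iio]
    convert! measure_empty (μ := μ)
    ext v
    simp
  setIntegral_pow k hk := by
    rw [setIntegral_map measurableSet_Ici (by fun_prop) (by fun_prop)]
    have huniv : ((↑) : ℝ≥0 → ℝ) ⁻¹' Set.Ici 0 = Set.univ := by ext; simp
    rw [huniv, Measure.restrict_univ,
      integral_eq_lintegral_of_nonneg_ae (ae_of_all _ fun v ↦ by positivity) (by fun_prop)]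
    simp [ENNReal.ofReal_pow, h k hk.ne']

theorem exists_of_tendsto_lintegral_pow {ι : Type*} {l : Filter ι} [l.NeBot]
    {ν : ι → ProbabilityMeasure ℝ≥0} (hm : ∀ k, 0 ≤ m k)
    (hν : ∀ k ≠ 0, Tendsto (fun i ↦ ∫⁻ v, (v : ℝ≥0∞) ^ k ∂(ν i : Measure ℝ≥0)) l
      (𝓝 (ENNReal.ofReal (m k)))) :
    ∃ μ, IsStieltjesSolution m μ := by
  obtain ⟨μ, hμ⟩ := exists_probabilityMeasure_of_tendsto_lintegral_pow hν
  exact ⟨_, by simpa only [Real.coe_toNNReal _ (hm _)] using map_coe hμ⟩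

end IsStieltjesSolution

/-- The law of `f` under the uniform distribution on a finite type. -/
noncomputable def empiricalMeasure {α β : Type*} [Fintype α] [MeasurableSpace β] (f : α → β) :
    Measure β :=
  (Fintype.card α : ℝ≥0∞)⁻¹ • ∑ a, Measure.dirac (f a)

variable {α : Type*} [Fintype α] [Nonempty α]

instance {β : Type*} [MeasurableSpace β] (f : α → β) :
    IsProbabilityMeasure (empiricalMeasure f) where
  measure_univ := by
    simpa [empiricalMeasure, Measure.finsetSum_apply] using
      ENNReal.inv_mul_cancel (by simp) (by simp)

theorem lintegral_pow_empiricalMeasure (f : α → ℝ≥0) (k : ℕ) :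
    ∫⁻ v, (v : ℝ≥0∞) ^ k ∂empiricalMeasure f = ENNReal.ofReal (𝔼 a, (f a : ℝ) ^ k) := by
  rw [Fintype.expect_eq_sum_div_card, ENNReal.ofReal_div_of_pos (by positivity),
    ENNReal.ofReal_sum_of_nonneg fun _ _ ↦ by positivity, div_eq_mul_inv, mul_comm]
  simp [empiricalMeasure, lintegral_finsetSum_measure, ENNReal.ofReal_pow]

instance : (comap ((↑) : Nat.Primes → ℕ) atTop).NeBot :=
  comap_neBot_iff_frequently.2 <|
    (Nat.frequently_atTop_iff_infinite.2 Nat.infinite_setOfPred_prime).mono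
      fun p hp ↦ ⟨⟨p, hp⟩, rfl⟩

theorem exists_isStieltjesSolution_moment (t : ℝ) : ∃ μ, IsStieltjesSolution moment μ := by
  let ν (p : Nat.Primes) : ProbabilityMeasure ℝ≥0 :=
    ⟨empiricalMeasure fun χ : DirichletCharacter ℂ p ↦ ‖logDerivNorm t χ‖₊ ^ 2, inferInstance⟩
  refine IsStieltjesSolution.exists_of_tendsto_lintegral_pow
    (l := comap ((↑) : Nat.Primes → ℕ) atTop) (ν := ν) (fun k ↦ (moment_pos k).le) fun k hk ↦ ?_
  refine (ENNReal.tendsto_ofReal (tendsto_expect_logDerivNorm_pow t hk)).congr fun p ↦ ?_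
  refine Eq.trans ?_ (lintegral_pow_empiricalMeasure _ k).symm
  simp [← pow_mul]

theorem IsStieltjesSolution.unique_of_moment {μ μ' : Measure ℝ} (h : IsStieltjesSolution moment μ)
    (h' : IsStieltjesSolution moment μ') : μ = μ' := by
  obtain ⟨B, -, hB⟩ := exists_moment_le
  exact h.unique h' (fun k _ ↦ (moment_pos k).ne') (C := 4) (by norm_num) hB

end Stieltjes

end DirichletMoments

/-- There is a unique probability measure `μ = μ(t₀)` on `[0,∞)` such that for every positive
integer `k`, the averages `(1/(p−1)) Σ'_{χ mod p} |L'(1+it₀,χ)/L(1+it₀,χ)|^{2k}` converge, as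
`p → ∞` through primes, to `∫_0^∞ v^k dμ(v)`; the sum runs over all Dirichlet characters
`χ` modulo the prime `p`, omitting the principal character when `t₀ = 0`. -/
theorem stmt_2 (t₀ : ℝ) :
    ∃! μ : Measure ℝ,
      IsProbabilityMeasure μ ∧ μ (Set.Iio 0) = 0 ∧
      ∀ k : ℕ, 0 < k →
        Tendsto
          (fun p : ℕ =>
            if h : p.Prime then
              letI : NeZero p := ⟨h.pos.ne'⟩
              (1 / ((p : ℝ) - 1)) *
                ∑ χ : DirichletCharacter ℂ p,
                  if t₀ = 0 ∧ χ = 1 then 0 else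
                    ‖deriv (DirichletCharacter.LFunction χ) (1 + t₀ * I) /
                        DirichletCharacter.LFunction χ (1 + t₀ * I)‖ ^ (2 * k)
            else 0)
          (atTop ⊓ Filter.principal {p : ℕ | p.Prime})
          (nhds (∫ v in Set.Ici (0 : ℝ), v ^ k ∂μ)) := by
  have hlim {k : ℕ} (hk : 0 < k) :=
    DirichletMoments.tendsto_expect_logDerivNorm_pow t₀ hk.ne'
  obtain ⟨μ, hμ⟩ := DirichletMoments.exists_isStieltjesSolution_moment t₀
  refine ⟨μ, ⟨hμ.isProbabilityMeasure, hμ.measure_Iio, fun k hk ↦ ?_⟩, ?_⟩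
  · rw [DirichletMoments.tendsto_average_iff t₀ hk.ne', hμ.setIntegral_pow k hk]
    exact hlim hk
  · rintro μ' ⟨hprob, hIio, hμ'⟩
    refine DirichletMoments.IsStieltjesSolution.unique_of_moment ⟨hprob, hIio, fun k hk ↦ ?_⟩ hμ
    exact tendsto_nhds_unique (l := comap ((↑) : Nat.Primes → ℕ) atTop)
      ((DirichletMoments.tendsto_average_iff t₀ hk.ne' _).1 (hμ' k hk)) (hlim hk)
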